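/- arXiv:1612.00720 — 16 statements merged into one kernel-verified Lean document; each statement's English description precedes it below -/
import Mathlib

section
/- Suppose R ∈ (0,1), δ > 0, and either δ·√(2R/(1−R)) < ε < 1/(1−R) + δ²R/2, or ε < −δ·√(2R/(1−R)). Let q_± = (ε ± √(ε² − 2δ²R/(1−R)))/(δ²R) be the roots of m and p_± = ((δ²/2 − ε) ± √(2δ² + (δ²/2 − ε)²))/(δ²(1−R)) be the roots of ℓ. Then ∫_{q₋}^{q₊} |m(q)|/(q(1−q)·ℓ(q)) dq = −ln(q₊/q₋) − ln((1−q₋)/(1−q₊)) + (R/(1−R))·((p₊ − q₊)(p₊ − q₋)/(p₊(p₊ − 1)(p₊ − p₋)))·ln((p₊ − q₋)/(p₊ − q₊)) − (R/(1−R))·((q₊ − p₋)(q₋ − p₋)/(p₋(1 − p₋)(p₊ − p₋)))·ln((q₊ − p₋)/(q₋ − p₋)). -/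
/-!
On `[q₋, q₊]` the quadratic `m` is nonpositive, so the integrand is the rational function
`-m(q) / (q (1 - q) ℓ(q))`, which is split into partial fractions with poles `0, 1, p₊, p₋`.
Since `m` and `ℓ` agree at `0` and at `1`, the coefficients at these two poles are both `-1`; the
other two come from the factorisations of `m` and `ℓ` and the ratio `-R / (1 - R)` of their leading
coefficients (`partial_fractions`).

None of the poles lies in `[q₋, q₊]`, so the fundamental theorem of calculus applies directly.
Indeed `m 0 = 1` and `m 1 > 0`, which excludes `0` and `1`. For `q` in `(0, 1)` concavity of `ℓ` and
positivity at the end points give `ℓ q > 0`; for `q` outside `[0, 1]` one has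
`ℓ q < m q ≤ 0`. The interval may lie to the left of `0`, inside `(0, 1)`, or to the right of `1`;
as `Real.log x = log |x|` is an antiderivative of `1 / x` off `0`, the same antiderivative serves in
all three cases.
-/

open intervalIntegral

/-- Factorisation of `a q² - b q + 1` when the discriminant is the square of `s`. -/
lemma quadratic_factor {a b s x₁ x₂ : ℝ} (ha : a ≠ 0) (hs : s ^ 2 = b ^ 2 - 4 * a)
    (h₁ : x₁ = (b - s) / (2 * a)) (h₂ : x₂ = (b + s) / (2 * a)) (q : ℝ) :
    1 - b * q + a * q ^ 2 = a * (q - x₁) * (q - x₂) := by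
  subst h₁ h₂
  field_simp
  linear_combination hs

/-- Partial fractions for `r (q - a) (q - b) / (q (1 - q) (q - u) (q - v))`, where
`h0` and `h1` make the coefficients at the poles `0` and `1` equal to `-1`. -/
lemma partial_fractions {r a b u v q : ℝ} (hu0 : u ≠ 0) (hv0 : v ≠ 0) (hu1 : u ≠ 1) (hv1 : v ≠ 1)
    (huv : v - u ≠ 0) (hq0 : q ≠ 0) (hq1 : 1 - q ≠ 0) (hqu : q - u ≠ 0) (hqv : v - q ≠ 0)
    (h0 : r * (a * b) = -(u * v)) (h1 : r * ((1 - a) * (1 - b)) = -((1 - u) * (1 - v))) :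
    r * ((q - a) * (q - b)) / (q * (1 - q) * ((q - u) * (q - v))) =
      -(1 / q) + (-1) / (1 - q)
      - r * ((v - b) * (v - a) / (v * (v - 1) * (v - u))) * ((-1) / (v - q))
      - r * ((b - u) * (a - u) / (u * (1 - u) * (v - u))) * (1 / (q - u)) := by
  have hu1' : 1 - u ≠ 0 := sub_ne_zero.2 hu1.symm
  have hv1' : v - 1 ≠ 0 := sub_ne_zero.2 hv1
  have hv1'' : 1 - v ≠ 0 := sub_ne_zero.2 hv1.symm
  have hqv' : q - v ≠ 0 := by
    intro h; exact hqv (by linarith)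
  have e0 : (-1 : ℝ) = r * (a * b) / (u * v) := by
    rw [h0]; field_simp
  have e1 : (-1 : ℝ) = r * ((1 - a) * (1 - b)) / ((1 - u) * (1 - v)) := by
    rw [h1]; field_simp
  -- Lagrange interpolation at the four poles, before the coefficients at `0`, `1` are evaluated.
  have key : r * ((q - a) * (q - b)) / (q * (1 - q) * ((q - u) * (q - v))) =
      r * (a * b) / (u * v) * (1 / q)
      + r * ((1 - a) * (1 - b)) / ((1 - u) * (1 - v)) * (1 / (1 - q))
      - r * ((v - b) * (v - a) / (v * (v - 1) * (v - u))) * (1 / (q - v))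
      - r * ((b - u) * (a - u) / (u * (1 - u) * (v - u))) * (1 / (q - u)) := by
    rw [show v - 1 = -(1 - v) by ring]
    field_simp
    ring
  have e2 : 1 / (q - v) = (-1) / (v - q) := by
    rw [← neg_sub v q]; field_simp
  rw [key, ← e0, ← e1, e2]
  ring

/-- The critical value Λ̲ = ∫_{q₋}^{q₊} |m(q)|/(q(1−q)ℓ(q)) dq in closed form, where
q₋ < q₊ are the roots of the quadratic m and p₋ < p₊ the roots of the quadratic ℓ. -/
theorem critical_transaction_cost_integral (R ε δ : ℝ)
    (hR0 : 0 < R) (hR1 : R < 1) (hδ : 0 < δ)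
    (hε : (δ * Real.sqrt (2 * R / (1 - R)) < ε ∧ ε < 1 / (1 - R) + δ ^ 2 * R / 2) ∨
          ε < -(δ * Real.sqrt (2 * R / (1 - R))))
    (m ℓ : ℝ → ℝ)
    (hm : ∀ q, m q = 1 - ε * (1 - R) * q + δ ^ 2 / 2 * R * (1 - R) * q ^ 2)
    (hℓ : ∀ q, ℓ q = m q + δ ^ 2 / 2 * (1 - R) * q * (1 - q))
    (qm qp pm pp : ℝ)
    (hqm : qm = (ε - Real.sqrt (ε ^ 2 - 2 * δ ^ 2 * R / (1 - R))) / (δ ^ 2 * R))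
    (hqp : qp = (ε + Real.sqrt (ε ^ 2 - 2 * δ ^ 2 * R / (1 - R))) / (δ ^ 2 * R))
    (hpm : pm = ((δ ^ 2 / 2 - ε) - Real.sqrt (2 * δ ^ 2 + (δ ^ 2 / 2 - ε) ^ 2)) / (δ ^ 2 * (1 - R)))
    (hpp : pp = ((δ ^ 2 / 2 - ε) + Real.sqrt (2 * δ ^ 2 + (δ ^ 2 / 2 - ε) ^ 2)) / (δ ^ 2 * (1 - R))) :
    (∫ q in qm..qp, |m q| / (q * (1 - q) * ℓ q)) =
      -Real.log (qp / qm) - Real.log ((1 - qm) / (1 - qp))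
      + (R / (1 - R)) * ((pp - qp) * (pp - qm) / (pp * (pp - 1) * (pp - pm)))
          * Real.log ((pp - qm) / (pp - qp))
      - (R / (1 - R)) * ((qp - pm) * (qm - pm) / (pm * (1 - pm) * (pp - pm)))
          * Real.log ((qp - pm) / (qm - pm)) := by
  have hS : 0 < 1 - R := by linarith
  have hS0 := hS.ne'
  have hR0' := hR0.ne'
  have hδ0 := hδ.ne'
  have hw : 0 ≤ δ * Real.sqrt (2 * R / (1 - R)) := by positivity
  have hw2 : (δ * Real.sqrt (2 * R / (1 - R))) ^ 2 = 2 * δ ^ 2 * R / (1 - R) := by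
    rw [mul_pow, Real.sq_sqrt (by positivity)]; ring
  have hdisc : 0 ≤ ε ^ 2 - 2 * δ ^ 2 * R / (1 - R) := by
    rw [← hw2]
    rcases hε with ⟨h, -⟩ | h <;> nlinarith
  have hm1 : 0 < m 1 := by
    rw [hm]
    rcases hε with ⟨-, h⟩ | h
    · have h' : ε * (1 - R) < (1 / (1 - R) + δ ^ 2 * R / 2) * (1 - R) := by gcongr
      rw [add_mul, one_div_mul_cancel hS0] at h'
      linarith
    · have h1 : 0 < -ε * (1 - R) := mul_pos (by linarith) hS
      have h2 : 0 < δ ^ 2 / 2 * R * (1 - R) := by positivity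
      linarith
  have hℓ1 : 0 < ℓ 1 := by rw [hℓ]; linarith
  have hm0 : m 0 = 1 := by rw [hm]; ring
  have hℓ0 : ℓ 0 = 1 := by rw [hℓ, hm0]; ring
  set s := Real.sqrt (ε ^ 2 - 2 * δ ^ 2 * R / (1 - R)) with hs
  set t := Real.sqrt (2 * δ ^ 2 + (δ ^ 2 / 2 - ε) ^ 2) with ht
  have hs2 : s ^ 2 = ε ^ 2 - 2 * δ ^ 2 * R / (1 - R) := Real.sq_sqrt hdisc
  have ht2 : t ^ 2 = 2 * δ ^ 2 + (δ ^ 2 / 2 - ε) ^ 2 := Real.sq_sqrt (by positivity)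
  have hs0 : 0 ≤ s := Real.sqrt_nonneg _
  have ht0 : 0 < t := Real.sqrt_pos.2 (by positivity)
  have hmf : ∀ q, m q = δ ^ 2 / 2 * R * (1 - R) * (q - qm) * (q - qp) := by
    intro q
    rw [hm]
    refine quadratic_factor (s := (1 - R) * s) (by positivity) ?_ ?_ ?_ q
    · rw [mul_pow, hs2]; field_simp; ring
    · rw [hqm]; field_simp
    · rw [hqp]; field_simp
  have hℓf : ∀ q, ℓ q = -(δ ^ 2 / 2 * (1 - R) ^ 2) * (q - pm) * (q - pp) := by
    intro q
    -- The leading coefficient is negative, so the two roots swap roles.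
    have h := quadratic_factor (a := -(δ ^ 2 / 2 * (1 - R) ^ 2)) (s := (1 - R) * t)
      (b := -((1 - R) * (δ ^ 2 / 2 - ε))) (x₁ := pp) (x₂ := pm)
      (neg_ne_zero.2 (by positivity)) (by rw [mul_pow, ht2]; ring)
      (by rw [hpp]; field_simp; ring) (by rw [hpm]; field_simp; ring) q
    rw [hℓ, hm]
    linear_combination h
  have hqq : qm ≤ qp := by
    rw [hqm, hqp]; gcongr; linarith
  have hpp_sub : pp - pm ≠ 0 := by
    have : pm < pp := by rw [hpm, hpp]; gcongr; linarith
    exact (sub_pos.2 this).ne'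
  have hℓpm : ℓ pm = 0 := by rw [hℓf]; ring
  have hℓpp : ℓ pp = 0 := by rw [hℓf]; ring
  have hpm0 : pm ≠ 0 := by rintro h; rw [h, hℓ0] at hℓpm; exact one_ne_zero hℓpm
  have hpp0 : pp ≠ 0 := by rintro h; rw [h, hℓ0] at hℓpp; exact one_ne_zero hℓpp
  have hpm1 : pm ≠ 1 := by rintro h; rw [h] at hℓpm; exact hℓ1.ne' hℓpm
  have hpp1 : pp ≠ 1 := by rintro h; rw [h] at hℓpp; exact hℓ1.ne' hℓpp
  have hmneg : ∀ q ∈ Set.Icc qm qp, m q ≤ 0 := by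
    rintro q ⟨h1, h2⟩
    rw [hmf]
    exact mul_nonpos_of_nonneg_of_nonpos
      (mul_nonneg (by positivity) (by linarith)) (by linarith)
  have hne0 : ∀ q ∈ Set.Icc qm qp, q ≠ 0 := by
    rintro q hq rfl
    have := hmneg 0 hq
    linarith
  have hne1 : ∀ q ∈ Set.Icc qm qp, q ≠ 1 := by
    rintro q hq rfl
    have := hmneg 1 hq
    linarith
  have hℓne : ∀ q ∈ Set.Icc qm qp, ℓ q ≠ 0 := by
    intro q hq
    have hmq := hmneg q hq
    have hk : 0 < δ ^ 2 / 2 * (1 - R) := by positivity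
    have hout : q * (1 - q) < 0 → ℓ q ≠ 0 := by
      intro h
      have : δ ^ 2 / 2 * (1 - R) * (q * (1 - q)) < 0 := mul_neg_of_pos_of_neg hk h
      have h' : ℓ q < 0 := by rw [hℓ]; linarith
      exact h'.ne
    rcases lt_or_gt_of_ne (hne0 q hq) with h0 | h0
    · exact hout (mul_neg_of_neg_of_pos h0 (by linarith))
    rcases lt_or_gt_of_ne (hne1 q hq) with h1 | h1
    · -- The chord of `ℓ` over `[0, 1]` plus the concavity excess.
      have hchord : ℓ q = (1 - q) + q * ℓ 1 + δ ^ 2 / 2 * (1 - R) ^ 2 * (q * (1 - q)) := by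
        rw [hℓ, hℓ, hm, hm]; ring
      have hq1 : 0 < 1 - q := by linarith
      rw [hchord]
      positivity
    · exact hout (mul_neg_of_pos_of_neg h0 (by linarith))
  have hnem : ∀ q ∈ Set.Icc qm qp, q - pm ≠ 0 := by
    intro q hq h
    exact hℓne q hq (by rw [hℓf, h]; ring)
  have hnep : ∀ q ∈ Set.Icc qm qp, pp - q ≠ 0 := by
    intro q hq h
    exact hℓne q hq (by rw [hℓf, ← neg_sub pp q, h]; ring)
  have hne1' : ∀ q ∈ Set.Icc qm qp, 1 - q ≠ 0 := fun q hq => sub_ne_zero.2 (hne1 q hq).symm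
  -- Comparing `m` and `ℓ` at `0` and at `1`.
  have hr0 : R / (1 - R) * (qm * qp) = -(pm * pp) := by
    have h : m 0 = ℓ 0 := by rw [hm0, hℓ0]
    rw [hmf, hℓf] at h
    field_simp at h ⊢
    linear_combination h
  have hr1 : R / (1 - R) * ((1 - qm) * (1 - qp)) = -((1 - pm) * (1 - pp)) := by
    have h : m 1 = ℓ 1 := by rw [hℓ]; ring
    rw [hmf, hℓf] at h
    field_simp at h ⊢
    linear_combination h
  set A := R / (1 - R) * ((pp - qp) * (pp - qm) / (pp * (pp - 1) * (pp - pm))) with hA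
  set B := R / (1 - R) * ((qp - pm) * (qm - pm) / (pm * (1 - pm) * (pp - pm))) with hB
  have hderiv : ∀ q ∈ Set.uIcc qm qp,
      HasDerivAt (fun q => -Real.log q + Real.log (1 - q) - A * Real.log (pp - q)
        - B * Real.log (q - pm)) (|m q| / (q * (1 - q) * ℓ q)) q := by
    intro q hq
    rw [Set.uIcc_of_le hqq] at hq
    have d1 := ((hasDerivAt_id q).log (hne0 q hq)).neg
    have d2 := ((hasDerivAt_id q).const_sub 1).log (hne1' q hq)
    have d3 := (((hasDerivAt_id q).const_sub pp).log (hnep q hq)).const_mul A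
    have d4 := (((hasDerivAt_id q).sub_const pm).log (hnem q hq)).const_mul B
    have hpf := partial_fractions hpm0 hpp0 hpm1 hpp1 hpp_sub (hne0 q hq) (hne1' q hq)
      (hnem q hq) (hnep q hq) hr0 hr1
    refine (((d1.add d2).sub d3).sub d4).congr_deriv ?_
    have hint : |m q| / (q * (1 - q) * ℓ q) =
        R / (1 - R) * ((q - qm) * (q - qp)) / (q * (1 - q) * ((q - pm) * (q - pp))) := by
      have h1 := hne0 q hq
      have h2 := hne1' q hq
      have h3 := hnem q hq
      have h4 : q - pp ≠ 0 := fun h => hnep q hq (by linarith)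
      rw [abs_of_nonpos (hmneg q hq), hmf, hℓf]
      field_simp
    rw [hint, hpf]
    rfl
  have hcont : ContinuousOn (fun q => |m q| / (q * (1 - q) * ℓ q)) (Set.uIcc qm qp) := by
    rw [Set.uIcc_of_le hqq]
    have hmc : Continuous m := by rw [funext hmf]; fun_prop
    have hℓc : Continuous ℓ := by rw [funext hℓf]; fun_prop
    refine ContinuousOn.div (by fun_prop) (by fun_prop) fun q hq => ?_
    exact mul_ne_zero (mul_ne_zero (hne0 q hq) (hne1' q hq)) (hℓne q hq)
  have hl : qm ∈ Set.Icc qm qp := Set.left_mem_Icc.2 hqq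
  have hr : qp ∈ Set.Icc qm qp := Set.right_mem_Icc.2 hqq
  rw [intervalIntegral.integral_eq_sub_of_hasDerivAt hderiv hcont.intervalIntegrable,
    Real.log_div (hne0 _ hr) (hne0 _ hl), Real.log_div (hne1' _ hl) (hne1' _ hr),
    Real.log_div (hnep _ hl) (hnep _ hr), Real.log_div (hnem _ hr) (hnem _ hl)]
  ring
end

section
/- Let A > 0, B > 0 and y > 0 be real numbers. If f : [0,y] → ℝ is continuous with f(0) = 0 and f is differentiable on (0,y] with f'(x) = −A·f(x)/x² + B for every x ∈ (0,y], then f(x) = B·∫₀ˣ exp(−A·(1/z − 1/x)) dz for every x ∈ (0,y]. In particular the initial value problem f' = −A f/x² + B, f(0) = 0 has a unique solution on [0,y]. -/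
open intervalIntegral

/-!
The integrating factor of the equation is `exp (-A / x)`: if `f` solves it, then
`x ↦ exp (-A / x) * f x` has derivative `B * exp (-A / x)` for `x > 0`. Since `A > 0`, the factor
lies in `[0, 1]` for `x ≥ 0`, so this product is continuous at `0`, where it vanishes, and
the derivative is integrable on `[0, x]`. The fundamental theorem of calculus then gives
`exp (-A / x) * f x = B * ∫ z in 0..x, exp (-A / z)`, which is the formula after division by
`exp (-A / x)`. Uniqueness follows because every solution is given by the same formula.
-/

lemma exp_neg_div_le_one {A z : ℝ} (hA : 0 < A) (hz : 0 ≤ z) : Real.exp (-A / z) ≤ 1 := by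
  rw [Real.exp_le_one_iff, neg_div, neg_nonpos]
  positivity

lemma intervalIntegrable_exp_neg_div {A x : ℝ} (hA : 0 < A) (hx : 0 ≤ x) :
    IntervalIntegrable (fun z : ℝ => Real.exp (-A / z)) MeasureTheory.volume 0 x := by
  have h1 : IntervalIntegrable (fun _ : ℝ => (1 : ℝ)) MeasureTheory.volume 0 x :=
    intervalIntegrable_const
  refine h1.mono_fun (by fun_prop) ?_
  filter_upwards [MeasureTheory.ae_restrict_mem measurableSet_uIoc] with z hz
  rw [Set.uIoc_of_le hx] at hz
  rw [Real.norm_of_nonneg (Real.exp_pos _).le, norm_one]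
  exact exp_neg_div_le_one hA hz.1.le

/-- The value of the factor at `0` is the junk value `exp 0 = 1`; continuity at `0` only uses
that the factor is bounded and `f 0 = 0`. -/
lemma continuousOn_exp_neg_div_mul {A y : ℝ} (hA : 0 < A) {f : ℝ → ℝ}
    (hcont : ContinuousOn f (Set.Icc 0 y)) (hf0 : f 0 = 0) :
    ContinuousOn (fun z => Real.exp (-A / z) * f z) (Set.Icc 0 y) := by
  intro z hz
  rcases hz.1.eq_or_lt with rfl | hz0
  · have hf : Filter.Tendsto f (nhdsWithin 0 (Set.Icc 0 y)) (nhds 0) := by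
      simpa [ContinuousWithinAt, hf0] using hcont 0 hz
    rw [ContinuousWithinAt, hf0, mul_zero]
    refine squeeze_zero_norm' ?_ (by simpa using hf.norm)
    filter_upwards [self_mem_nhdsWithin] with t ht
    rw [norm_mul, Real.norm_of_nonneg (Real.exp_pos _).le]
    exact mul_le_of_le_one_left (norm_nonneg _) (exp_neg_div_le_one hA ht.1)
  · refine ContinuousWithinAt.mul (ContinuousAt.continuousWithinAt ?_) (hcont z hz)
    exact (continuousAt_const.div continuousAt_id hz0.ne').rexp

lemma solution_eq {A B y : ℝ} (hA : 0 < A) {f : ℝ → ℝ}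
    (hcont : ContinuousOn f (Set.Icc 0 y)) (hf0 : f 0 = 0)
    (hderiv : ∀ x ∈ Set.Ioc 0 y, HasDerivWithinAt f (-A * f x / x ^ 2 + B) (Set.Icc 0 y) x)
    {x : ℝ} (hx : x ∈ Set.Ioc 0 y) :
    f x = B * ∫ z in (0:ℝ)..x, Real.exp (-A * (1 / z - 1 / x)) := by
  have hFTC : ∫ z in (0:ℝ)..x, B * Real.exp (-A / z)
      = Real.exp (-A / x) * f x - Real.exp (-A / 0) * f 0 := by
    refine integral_eq_sub_of_hasDerivAt_of_le (f := fun z => Real.exp (-A / z) * f z) hx.1.le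
      ((continuousOn_exp_neg_div_mul hA hcont hf0).mono (Set.Icc_subset_Icc_right hx.2)) ?_
      ((intervalIntegrable_exp_neg_div hA hx.1.le).const_mul B)
    intro z hz
    have hf : HasDerivAt f (-A * f z / z ^ 2 + B) z :=
      (hderiv z ⟨hz.1, hz.2.le.trans hx.2⟩).hasDerivAt
        (Icc_mem_nhds hz.1 (hz.2.trans_le hx.2))
    have he : HasDerivAt (fun z : ℝ => -A / z) (A / z ^ 2) z := by
      refine ((hasDerivAt_const z (-A)).fun_div (hasDerivAt_id' z) hz.1.ne').congr_deriv ?_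
      ring
    refine (he.exp.fun_mul hf).congr_deriv ?_
    ring
  rw [hf0, mul_zero, sub_zero, integral_const_mul] at hFTC
  have hfactor : ∀ z : ℝ, Real.exp (-A * (1 / z - 1 / x))
      = Real.exp (A / x) * Real.exp (-A / z) := by
    intro z
    rw [← Real.exp_add]
    congr 1
    ring
  simp_rw [hfactor]
  rw [integral_const_mul, mul_left_comm, hFTC, ← mul_assoc, ← Real.exp_add, neg_div,
    add_neg_cancel, Real.exp_zero, one_mul]

/-- The singular initial value problem f' = −A f/x² + B, f(0) = 0 on [0,y] has the
unique solution f(x) = B ∫₀ˣ exp(−A(1/z − 1/x)) dz. -/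
theorem singular_ivp_right_unique (A B y : ℝ) (hA : 0 < A) (hB : 0 < B) (hy : 0 < y)
    (f : ℝ → ℝ) (hcont : ContinuousOn f (Set.Icc 0 y)) (hf0 : f 0 = 0)
    (hderiv : ∀ x ∈ Set.Ioc 0 y, HasDerivWithinAt f (-A * f x / x ^ 2 + B) (Set.Icc 0 y) x) :
    (∀ x ∈ Set.Ioc 0 y, f x = B * ∫ z in (0:ℝ)..x, Real.exp (-A * (1 / z - 1 / x))) ∧
    (∀ g : ℝ → ℝ, ContinuousOn g (Set.Icc 0 y) → g 0 = 0 →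
      (∀ x ∈ Set.Ioc 0 y, HasDerivWithinAt g (-A * g x / x ^ 2 + B) (Set.Icc 0 y) x) →
      Set.EqOn f g (Set.Icc 0 y)) := by
  refine ⟨fun x hx => solution_eq hA hcont hf0 hderiv hx, fun g hg hg0 hgd x hx => ?_⟩
  rcases hx.1.eq_or_lt with rfl | hx0
  · rw [hf0, hg0]
  · rw [solution_eq hA hcont hf0 hderiv ⟨hx0, hx.2⟩, solution_eq hA hg hg0 hgd ⟨hx0, hx.2⟩]
end

section
/- Let A > 0 and B > 0, and for x > 0 set f(x) = B·∫₀ˣ exp(−A·(1/z − 1/x)) dz. Then for every x > 0, (B/A)·x² − (2B/A²)·x³ ≤ f(x) ≤ (B/A)·x². Consequently lim_{x→0⁺} f(x)/x² = B/A. -/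
/-!
Write `E z = exp (-A (1/z - 1/x))` and `I = ∫₀ˣ E`. On `(0, x)` the function `z² E(z) / A` has
derivative `E(z) + (2/A) z E(z)`, and it extends continuously by `0` to `z = 0` because `E` is
bounded on `(0, x]`. Hence `I + (2/A) ∫₀ˣ z E(z) dz = x² / A`. As `0 ≤ z E(z) ≤ x E(z)`, this
gives `I ≤ x² / A`, and then `I ≥ x² / A - (2/A) x I ≥ x² / A - (2/A²) x³`. The limit follows
by squeezing.
-/

open intervalIntegral Filter

/-- The kernel of the integral solution. At `z = 0` its value is `exp (A / x)`, since
`1 / 0 = 0`. -/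
noncomputable def ivpKernel (A x z : ℝ) : ℝ := Real.exp (-A * (1 / z - 1 / x))

lemma ivpKernel_pos (A x z : ℝ) : 0 < ivpKernel A x z := Real.exp_pos _

/-- A crude bound that also holds at the junk value `z = 0`. -/
lemma ivpKernel_le {A x z : ℝ} (hA : 0 < A) (hz : 0 ≤ z) :
    ivpKernel A x z ≤ Real.exp (A * (1 / x)) := by
  unfold ivpKernel
  have : 0 ≤ A * (1 / z) := by positivity
  exact Real.exp_le_exp.2 (by linarith)

lemma measurable_ivpKernel (A x : ℝ) : Measurable (ivpKernel A x) := by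
  unfold ivpKernel
  fun_prop

lemma intervalIntegrable_ivpKernel {A x : ℝ} (hA : 0 < A) (hx : 0 < x) :
    IntervalIntegrable (ivpKernel A x) MeasureTheory.volume 0 x := by
  refine (intervalIntegrable_const (c := Real.exp (A * (1 / x)))).mono_fun'
    (measurable_ivpKernel A x).aestronglyMeasurable ?_
  filter_upwards [MeasureTheory.ae_restrict_mem measurableSet_uIoc] with z hz
  rw [Set.uIoc_of_le hx.le] at hz
  rw [Real.norm_of_nonneg (ivpKernel_pos A x z).le]
  exact ivpKernel_le hA hz.1.le

lemma hasDerivAt_sq_mul_ivpKernel {A x z : ℝ} (hA : 0 < A) (hz : 0 < z) :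
    HasDerivAt (fun z => z ^ 2 * ivpKernel A x z / A)
      (ivpKernel A x z + 2 / A * (z * ivpKernel A x z)) z := by
  have h1 : HasDerivAt (fun z : ℝ => -A * (1 / z - 1 / x)) (-A * (-(z ^ 2)⁻¹)) z := by
    simpa only [one_div] using ((hasDerivAt_inv hz.ne').sub_const (x⁻¹)).const_mul (-A)
  have h2 := ((hasDerivAt_pow 2 z).mul h1.exp).div_const A
  unfold ivpKernel
  refine HasDerivAt.congr_deriv h2 ?_
  field_simp
  push_cast
  ring

lemma continuousOn_sq_mul_ivpKernel {A x : ℝ} (hA : 0 < A) :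
    ContinuousOn (fun z => z ^ 2 * ivpKernel A x z / A) (Set.Icc 0 x) := by
  intro z hz
  rcases hz.1.eq_or_lt with rfl | h
  · have hlim : Tendsto (fun z : ℝ => z ^ 2 * Real.exp (A * (1 / x)) / A)
        (nhdsWithin 0 (Set.Icc 0 x)) (nhds 0) := by
      have : Continuous (fun z : ℝ => z ^ 2 * Real.exp (A * (1 / x)) / A) := by fun_prop
      simpa using (this.tendsto 0).mono_left nhdsWithin_le_nhds
    have : Tendsto (fun z => z ^ 2 * ivpKernel A x z / A)
        (nhdsWithin 0 (Set.Icc 0 x)) (nhds 0) := by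
      refine squeeze_zero' ?_ ?_ hlim
      · filter_upwards with z
        have := (ivpKernel_pos A x z).le
        positivity
      · filter_upwards [self_mem_nhdsWithin] with z hz
        have := ivpKernel_le (x := x) hA hz.1
        gcongr
    simpa [ContinuousWithinAt] using this
  · exact (hasDerivAt_sq_mul_ivpKernel hA h).continuousAt.continuousWithinAt

lemma integral_ivpKernel_bounds {A x : ℝ} (hA : 0 < A) (hx : 0 < x) :
    x ^ 2 / A - 2 / A ^ 2 * x ^ 3 ≤ ∫ z in (0:ℝ)..x, ivpKernel A x z ∧
      ∫ z in (0:ℝ)..x, ivpKernel A x z ≤ x ^ 2 / A := by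
  have hI := intervalIntegrable_ivpKernel hA hx
  have hJ : IntervalIntegrable (fun z => z * ivpKernel A x z) MeasureTheory.volume 0 x :=
    hI.continuousOn_mul continuousOn_id
  have hFTC := integral_eq_sub_of_hasDerivAt_of_le hx.le
    (continuousOn_sq_mul_ivpKernel (x := x) hA)
    (fun z hz => hasDerivAt_sq_mul_ivpKernel hA hz.1) (hI.add (hJ.const_mul (2 / A)))
  rw [integral_add hI (hJ.const_mul _), integral_const_mul] at hFTC
  have hE : ivpKernel A x x = 1 := by simp [ivpKernel]
  simp only [hE, mul_one, ne_eq, OfNat.ofNat_ne_zero, not_false_eq_true, zero_pow, zero_mul,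
    zero_div, sub_zero] at hFTC
  have hJ0 : 0 ≤ ∫ z in (0:ℝ)..x, z * ivpKernel A x z :=
    integral_nonneg hx.le fun z hz => mul_nonneg hz.1 (ivpKernel_pos A x z).le
  have hJ1 : ∫ z in (0:ℝ)..x, z * ivpKernel A x z ≤ x * ∫ z in (0:ℝ)..x, ivpKernel A x z := by
    rw [← integral_const_mul]
    exact integral_mono_on hx.le hJ (hI.const_mul x) fun z hz =>
      mul_le_mul_of_nonneg_right hz.2 (ivpKernel_pos A x z).le
  have hA2 : 0 < 2 / A := by positivity
  have hup : ∫ z in (0:ℝ)..x, ivpKernel A x z ≤ x ^ 2 / A := by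
    have := mul_nonneg hA2.le hJ0
    linarith
  refine ⟨?_, hup⟩
  have h := mul_le_mul_of_nonneg_left
    (hJ1.trans (mul_le_mul_of_nonneg_left hup hx.le)) hA2.le
  have e : 2 / A * (x * (x ^ 2 / A)) = 2 / A ^ 2 * x ^ 3 := by
    field_simp
  linarith

/-- Quadratic asymptotics of the solution f(x) = B ∫₀ˣ exp(−A(1/z − 1/x)) dz of the
singular initial value problem at the singular point: (B/A)x² − (2B/A²)x³ ≤ f(x) ≤ (B/A)x²
and f(x)/x² → B/A as x ↓ 0. -/
theorem singular_ivp_quadratic_asymptotics (A B : ℝ) (hA : 0 < A) (hB : 0 < B)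
    (f : ℝ → ℝ)
    (hf : ∀ x, 0 < x → f x = B * ∫ z in (0:ℝ)..x, Real.exp (-A * (1 / z - 1 / x))) :
    (∀ x, 0 < x → (B / A) * x ^ 2 - (2 * B / A ^ 2) * x ^ 3 ≤ f x ∧ f x ≤ (B / A) * x ^ 2) ∧
    Tendsto (fun x => f x / x ^ 2) (nhdsWithin 0 (Set.Ioi 0)) (nhds (B / A)) := by
  have key : ∀ x, 0 < x →
      (B / A) * x ^ 2 - (2 * B / A ^ 2) * x ^ 3 ≤ f x ∧ f x ≤ (B / A) * x ^ 2 := by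
    intro x hx
    obtain ⟨h1, h2⟩ := integral_ivpKernel_bounds hA hx
    have hfx : f x = B * ∫ z in (0:ℝ)..x, ivpKernel A x z := hf x hx
    rw [hfx]
    constructor
    · calc (B / A) * x ^ 2 - (2 * B / A ^ 2) * x ^ 3
          = B * (x ^ 2 / A - 2 / A ^ 2 * x ^ 3) := by ring
        _ ≤ _ := mul_le_mul_of_nonneg_left h1 hB.le
    · calc _ ≤ B * (x ^ 2 / A) := mul_le_mul_of_nonneg_left h2 hB.le
        _ = _ := by ring
  refine ⟨key, ?_⟩
  have hlow : Tendsto (fun x : ℝ => B / A - 2 * B / A ^ 2 * x)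
      (nhdsWithin 0 (Set.Ioi 0)) (nhds (B / A)) := by
    have : Continuous (fun x : ℝ => B / A - 2 * B / A ^ 2 * x) := by fun_prop
    simpa using (this.tendsto 0).mono_left nhdsWithin_le_nhds
  refine tendsto_of_tendsto_of_tendsto_of_le_of_le' hlow tendsto_const_nhds ?_ ?_
  · filter_upwards [self_mem_nhdsWithin] with x hx
    have hx : 0 < x := hx
    rw [le_div_iff₀ (by positivity)]
    linarith [(key x hx).1]
  · filter_upwards [self_mem_nhdsWithin] with x hx
    have hx : 0 < x := hx
    rw [div_le_iff₀ (by positivity)]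
    exact (key x hx).2
end

section
/- Suppose R ∈ (0,∞) with R ≠ 1, δ > 0, ε > δ²R, and additionally ε < 1/(1−R) + δ²R/2 if R < 1. Define m(1) = 1 − ε(1−R) + (δ²/2)R(1−R), and for x > 0 and η ∈ ℝ with 1 + x + η/x ≠ 0 set a(x,η) = (2/(δ²R))·(m(1) + (1−R)(δ²R − ε)x + (δ²/2)R(1−R)x² + (δ²/2)(1−R)η)/(1 + x + η/x), and set b(x) = (2/δ²)(ε − δ²R) − 2Rx. Then there exists x₁ > 0 such that: (existence) there is a continuous function η : [0,x₁] → [0,∞) with η(0) = 0 which is differentiable on (0,x₁] and satisfies η'(x) = −a(x,η(x))·η(x)/x² + b(x) for every x ∈ (0,x₁]; and (uniqueness) any two continuous nonnegative functions on [0,x₁] vanishing at 0 and satisfying this differential equation on (0,x₁] are equal. -/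
/-!
Write the equation as `η' = f x η`. For `x > 0` and `η ≥ 0` the singular term is
`(c / x) * N x η * (η / (E + η))` with `c = 2 / (δ² R)`, `E = x + x²`, and `N` a polynomial, affine
in `η`, with `N 0 0 = m1 > 0`. Three facts near the origin carry the argument.

* `f x` is nonincreasing in `η` on the cone `0 ≤ η ≤ C x`, where `C = 2 b 0`: the increase of
  `η / (E + η)` there has rate at least of order `1 / E`, which beats the bounded slope of `N`,
  whatever the sign of `1 - R`.
* `0` is a strict subsolution, since `f x 0 = b x > 0`, and `K x²` is a strict supersolution when
  `K` is large, since `f x (K x²) → b 0 - c m1 K` as `x → 0`.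
* `f x η ≤ b x < C` as long as `N ≥ 0`.

Existence: the solutions started from the value `0` at times `s > 0` exist by Picard–Lindelöf and
stay in `[0, K x²]`. By monotonicity the distance between two of them does not increase, so it
is at most `K s²` when both have started by time `s`. As `s → 0` they therefore converge, locally
uniformly together with their derivatives, to a solution through the origin
(`exists_singular_solution`).

Uniqueness: a nonnegative solution vanishing at `0` stays in the cone, by comparison with the
barriers `ρ + C x`, and two solutions in the cone cannot move apart (`solutions_eqOn`).
-/

/-! ### Solutions away from the singular point -/

/-- Forward Cauchy problem with zero initial value, for a field that is only controlled on the
strip `0 ≤ y ≤ M`: the field is precomposed with the projection of `y` onto `[0, M]`, which makes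
it bounded and Lipschitz, so that Picard–Lindelöf yields a solution on the whole interval. -/
lemma exists_clipped_solution {f : ℝ → ℝ → ℝ} {s X M L : ℝ} (hsX : s ≤ X) (hM : 0 ≤ M)
    (hL : 0 ≤ L)
    (hLip : ∀ x ∈ Set.Icc s X, ∀ y₁ ∈ Set.Icc 0 M, ∀ y₂ ∈ Set.Icc 0 M,
      |f x y₁ - f x y₂| ≤ L * |y₁ - y₂|)
    (hcont : ∀ y ∈ Set.Icc 0 M, ContinuousOn (fun x => f x y) (Set.Icc s X)) :
    ∃ α : ℝ → ℝ, α s = 0 ∧ ∀ t ∈ Set.Icc s X,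
      HasDerivWithinAt α (f t (max 0 (min (α t) M))) (Set.Icc s X) t := by
  have hclip : ∀ y : ℝ, max 0 (min y M) ∈ Set.Icc 0 M := fun y =>
    ⟨le_max_left _ _, max_le hM (min_le_right _ _)⟩
  have hclipL : ∀ y z : ℝ, |max 0 (min y M) - max 0 (min z M)| ≤ |y - z| := by
    intro y z
    have h1 := abs_max_sub_max_le_abs (min y M) (min z M) 0
    have h2 := abs_min_sub_min_le_max y M z M
    rw [sub_self, abs_zero, max_eq_left (abs_nonneg _)] at h2
    rw [max_comm 0, max_comm 0]
    exact h1.trans h2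
  have h0M : (0:ℝ) ∈ Set.Icc 0 M := ⟨le_rfl, hM⟩
  obtain ⟨B, hB⟩ := isCompact_Icc.exists_bound_of_continuousOn (hcont 0 h0M)
  have hB0 : 0 ≤ B := (norm_nonneg _).trans (hB s ⟨le_rfl, hsX⟩)
  set S : ℝ := B + L * M with hS
  have hS0 : 0 ≤ S := by positivity
  have hpl : IsPicardLindelof (fun t y => f t (max 0 (min y M)))
      (⟨s, le_rfl, hsX⟩ : Set.Icc s X) 0 (Real.toNNReal (S * (X - s))) 0
      (Real.toNNReal S) (Real.toNNReal L) := by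
    refine ⟨fun t ht => ?_, fun y _ => hcont _ (hclip y), fun t ht y _ => ?_, ?_⟩
    · refine LipschitzOnWith.of_dist_le_mul fun y _ z _ => ?_
      rw [Real.dist_eq, Real.dist_eq, Real.coe_toNNReal _ hL]
      exact (hLip t ht _ (hclip y) _ (hclip z)).trans
        (mul_le_mul_of_nonneg_left (hclipL y z) hL)
    · rw [Real.coe_toNNReal _ hS0, Real.norm_eq_abs]
      have h1 := hLip t ht _ (hclip y) 0 h0M
      have h2 := hB t ht
      rw [Real.norm_eq_abs] at h2
      rw [sub_zero, abs_of_nonneg (hclip y).1] at h1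
      have h3 := mul_le_mul_of_nonneg_left (hclip y).2 hL
      have h4 := abs_sub_abs_le_abs_sub (f t (max 0 (min y M))) (f t 0)
      linarith
    · rw [Real.coe_toNNReal _ hS0, Real.coe_toNNReal _ (mul_nonneg hS0 (sub_nonneg.2 hsX))]
      simp [hsX]
  exact hpl.exists_eq_forall_mem_Icc_hasDerivWithinAt₀

/-- Two solutions that stay where the field is nonincreasing in `y` do not move apart. -/
lemma solutions_dist_antitone {f : ℝ → ℝ → ℝ} {s X : ℝ} {u v : ℝ → ℝ}
    (hu : ContinuousOn u (Set.Icc s X)) (hv : ContinuousOn v (Set.Icc s X))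
    (hu' : ∀ x ∈ Set.Ioo s X, HasDerivAt u (f x (u x)) x)
    (hv' : ∀ x ∈ Set.Ioo s X, HasDerivAt v (f x (v x)) x)
    (hmono : ∀ x ∈ Set.Ioo s X, (f x (u x) - f x (v x)) * (u x - v x) ≤ 0)
    {x : ℝ} (hx : x ∈ Set.Icc s X) : |u x - v x| ≤ |u s - v s| := by
  have hd : ∀ x ∈ Set.Ioo s X, HasDerivAt (fun x => (u x - v x) ^ 2)
      (2 * ((f x (u x) - f x (v x)) * (u x - v x))) x := by
    intro x hx
    refine (((hu' x hx).sub (hv' x hx)).pow 2).congr_deriv ?_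
    simp
    ring
  have hanti : AntitoneOn (fun x => (u x - v x) ^ 2) (Set.Icc s X) := by
    refine antitoneOn_of_deriv_nonpos (convex_Icc _ _) ((hu.sub hv).pow 2) ?_ ?_
    · rw [interior_Icc]
      exact fun x hx => (hd x hx).differentiableAt.differentiableWithinAt
    · rw [interior_Icc]
      intro x hx
      rw [(hd x hx).deriv]
      linarith [hmono x hx]
  exact sq_le_sq.1 (hanti ⟨le_rfl, hx.1.trans hx.2⟩ hx hx.1)

/-- The solution started from `0` at a time `s > 0` is trapped between the subsolution `0` and the
supersolution `K x ^ 2`. In particular clipping does not affect it. -/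
lemma exists_trapped_solution {f : ℝ → ℝ → ℝ} {s X K L : ℝ} (hs : 0 < s) (hsX : s < X)
    (hK : 0 ≤ K) (hL : 0 ≤ L)
    (hpos : ∀ x ∈ Set.Ioc 0 X, 0 < f x 0)
    (hsup : ∀ x ∈ Set.Ioc 0 X, f x (K * x ^ 2) < 2 * K * x)
    (hLip : ∀ x ∈ Set.Icc s X, ∀ y₁ ∈ Set.Icc 0 (K * X ^ 2), ∀ y₂ ∈ Set.Icc 0 (K * X ^ 2),
      |f x y₁ - f x y₂| ≤ L * |y₁ - y₂|)
    (hcont : ∀ y ∈ Set.Icc 0 (K * X ^ 2), ContinuousOn (fun x => f x y) (Set.Icc s X)) :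
    ∃ α : ℝ → ℝ, α s = 0 ∧ ContinuousOn α (Set.Icc s X) ∧
      (∀ t ∈ Set.Icc s X, 0 ≤ α t ∧ α t ≤ K * t ^ 2) ∧
      ∀ t ∈ Set.Ioo s X, HasDerivAt α (f t (α t)) t := by
  have hM : 0 ≤ K * X ^ 2 := by positivity
  obtain ⟨α, hα0, hα⟩ := exists_clipped_solution hsX.le hM hL hLip hcont
  have hc : ContinuousOn α (Set.Icc s X) := fun t ht => (hα t ht).continuousWithinAt
  have hr : ∀ t ∈ Set.Ico s X,
      HasDerivWithinAt α (f t (max 0 (min (α t) (K * X ^ 2)))) (Set.Ici t) t := fun t ht =>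
    (hα t ⟨ht.1, ht.2.le⟩).mono_of_mem_nhdsWithin (Icc_mem_nhdsGE_of_mem ht)
  have hlow : ∀ t ∈ Set.Icc s X, 0 ≤ α t := by
    intro t ht
    have := image_le_of_deriv_right_lt_deriv_boundary' (f := fun t => - α t) (B := fun _ => 0)
      (B' := fun _ => 0) hc.neg (fun t ht => (hr t ht).neg) (by simp [hα0]) continuousOn_const
      (fun t _ => hasDerivWithinAt_const _ _ _) (by
        intro t ht h
        have h' : α t = 0 := by linarith
        rw [h', min_eq_left hM, max_self]
        linarith [hpos t ⟨hs.trans_le ht.1, ht.2.le⟩]) ht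
    linarith
  have hup : ∀ t ∈ Set.Icc s X, α t ≤ K * t ^ 2 := by
    intro t ht
    refine image_le_of_deriv_right_lt_deriv_boundary' (B := fun t => K * t ^ 2)
      (B' := fun t => 2 * K * t) hc hr (by rw [hα0]; positivity)
      (by fun_prop)
      (fun t _ => ?_) (fun t ht h => ?_) ht
    · refine (((hasDerivAt_pow 2 t).const_mul K).congr_deriv ?_).hasDerivWithinAt
      simp
      ring
    · have ht0 : 0 < t := hs.trans_le ht.1
      have h1 : K * t ^ 2 ≤ K * X ^ 2 := by
        have := ht.2.le
        gcongr
      rw [h, min_eq_left h1, max_eq_right (by positivity)]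
      exact hsup t ⟨ht0, ht.2.le⟩
  refine ⟨α, hα0, hc, fun t ht => ⟨hlow t ht, hup t ht⟩, fun t ht => ?_⟩
  have ht' : t ∈ Set.Icc s X := ⟨ht.1.le, ht.2.le⟩
  have h0 : 0 < t := hs.trans ht.1
  have h1 : α t ≤ K * X ^ 2 := (hup t ht').trans (by have := ht.2.le; gcongr)
  have h2 := hα t ht'
  rw [min_eq_left h1, max_eq_right (hlow t ht')] at h2
  exact h2.hasDerivAt (Icc_mem_nhds ht.1 ht.2)

/-! ### Passage to the singular point -/

/-- Existence through the singular point: the solutions issued from `(s, 0)` converge, as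
`s → 0`, at the rate `K s ^ 2`, because of the trapping and the monotonicity of the field. -/
lemma exists_singular_solution {f : ℝ → ℝ → ℝ} {X K : ℝ} (hX : 0 < X) (hK : 0 ≤ K)
    (hmono : ∀ x ∈ Set.Ioc 0 X, ∀ y₁ ∈ Set.Icc 0 (K * x ^ 2), ∀ y₂ ∈ Set.Icc 0 (K * x ^ 2),
      (f x y₁ - f x y₂) * (y₁ - y₂) ≤ 0)
    (hpos : ∀ x ∈ Set.Ioc 0 X, 0 < f x 0)
    (hsup : ∀ x ∈ Set.Ioc 0 X, f x (K * x ^ 2) < 2 * K * x)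
    (hLip : ∀ s, 0 < s → ∃ L, 0 ≤ L ∧ ∀ x ∈ Set.Icc s X, ∀ y₁ ∈ Set.Icc 0 (K * X ^ 2),
      ∀ y₂ ∈ Set.Icc 0 (K * X ^ 2), |f x y₁ - f x y₂| ≤ L * |y₁ - y₂|)
    (hcont : ∀ y, 0 ≤ y → ContinuousOn (fun x => f x y) (Set.Ioi 0)) :
    ∃ η : ℝ → ℝ, η 0 = 0 ∧ (∀ x ∈ Set.Ico 0 X, 0 ≤ η x ∧ η x ≤ K * x ^ 2) ∧
      ∀ x ∈ Set.Ioo 0 X, HasDerivAt η (f x (η x)) x := by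
  have hex : ∀ s : ℝ, 0 < s → s < X → ∃ α : ℝ → ℝ, α s = 0 ∧ ContinuousOn α (Set.Icc s X) ∧
      (∀ t ∈ Set.Icc s X, 0 ≤ α t ∧ α t ≤ K * t ^ 2) ∧
      ∀ t ∈ Set.Ioo s X, HasDerivAt α (f t (α t)) t := by
    intro s hs hsX
    obtain ⟨L, hL, hL'⟩ := hLip s hs
    exact exists_trapped_solution hs hsX hK hL hpos hsup hL'
      (fun y hy => (hcont y hy.1).mono fun x hx => hs.trans_le hx.1)
  set σ : ℕ → ℝ := fun n => X / (n + 2) with hσ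
  have hσ0 : ∀ n, 0 < σ n := fun n => by positivity
  have hσX : ∀ n, σ n < X := fun n => by
    rw [hσ]
    refine div_lt_self hX ?_
    have : (0:ℝ) ≤ n := n.cast_nonneg
    linarith
  have hσanti : Antitone σ := fun m n hmn => by
    have : (m:ℝ) ≤ n := by exact_mod_cast hmn
    simp only [hσ]
    gcongr
  have hσlim : Filter.Tendsto σ Filter.atTop (nhds 0) :=
    tendsto_const_nhds.div_atTop
      (Filter.tendsto_atTop_add_const_right _ _ tendsto_natCast_atTop_atTop)
  have hrate : Filter.Tendsto (fun n => K * σ n ^ 2) Filter.atTop (nhds 0) := by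
    simpa using (hσlim.pow 2).const_mul K
  choose α hα0 hαc hαb hαd using fun n => hex (σ n) (hσ0 n) (hσX n)
  have hclose : ∀ m n, m ≤ n → ∀ t ∈ Set.Icc (σ m) X, |α n t - α m t| ≤ K * σ m ^ 2 := by
    intro m n hmn t ht
    have hle := hσanti hmn
    have h := solutions_dist_antitone (f := f) (u := α n) (v := α m)
      ((hαc n).mono (Set.Icc_subset_Icc_left hle)) (hαc m)
      (fun x hx => hαd n x ⟨hle.trans_lt hx.1, hx.2⟩) (hαd m)
      (fun x hx => hmono x ⟨(hσ0 m).trans hx.1, hx.2.le⟩ _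
        (hαb n x ⟨hle.trans hx.1.le, hx.2.le⟩) _ (hαb m x ⟨hx.1.le, hx.2.le⟩)) ht
    have hb := hαb n (σ m) ⟨hle, (hσX m).le⟩
    rw [hα0, sub_zero, abs_of_nonneg hb.1] at h
    exact h.trans hb.2
  have hlim : ∀ t : ℝ, ∃ y : ℝ, (t ≤ 0 → y = 0) ∧ (0 < t → t < X →
      Filter.Tendsto (fun n => α n t) Filter.atTop (nhds y)) := by
    intro t
    by_cases ht : 0 < t ∧ t < X
    · have hc : CauchySeq (fun n => α n t) := by
        rw [Metric.cauchySeq_iff']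
        intro e he
        obtain ⟨N, hN1, hN2⟩ :=
          ((hσlim.eventually_lt_const ht.1).and (hrate.eventually_lt_const he)).exists
        exact ⟨N, fun n hn => (hclose N n hn t ⟨hN1.le, ht.2.le⟩).trans_lt hN2⟩
      obtain ⟨y, hy⟩ := cauchySeq_tendsto_of_complete hc
      exact ⟨y, fun h => absurd ht.1 (not_lt.2 h), fun _ _ => hy⟩
    · exact ⟨0, fun _ => rfl, fun h1 h2 => absurd ⟨h1, h2⟩ ht⟩
  choose η hη0 hηlim using hlim
  have hηb : ∀ x ∈ Set.Ico 0 X, 0 ≤ η x ∧ η x ≤ K * x ^ 2 := by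
    rintro x ⟨hx0, hxX⟩
    rcases hx0.eq_or_lt with rfl | hx0
    · simp [hη0 0 le_rfl]
    · have hev : ∀ᶠ n in Filter.atTop, α n x ∈ Set.Icc 0 (K * x ^ 2) := by
        filter_upwards [hσlim.eventually_lt_const hx0] with n hn
        exact hαb n x ⟨hn.le, hxX.le⟩
      exact isClosed_Icc.mem_of_tendsto (hηlim x hx0 hxX) hev
  have hηclose : ∀ m, ∀ t ∈ Set.Ioo 0 X, σ m ≤ t → |η t - α m t| ≤ K * σ m ^ 2 := by
    intro m t ht hmt
    refine le_of_tendsto ((hηlim t ht.1 ht.2).sub_const (α m t)).abs ?_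
    filter_upwards [Filter.eventually_ge_atTop m] with n hn
    exact hclose m n hn t ⟨hmt, ht.2.le⟩
  refine ⟨η, hη0 0 le_rfl, hηb, fun x hx => ?_⟩
  -- On `(x / 2, X)` the derivatives converge uniformly since the field is Lipschitz there.
  have hx2 : 0 < x / 2 := half_pos hx.1
  obtain ⟨L, hL, hL'⟩ := hLip (x / 2) hx2
  have hM : ∀ t, 0 < t → t < X → ∀ y, 0 ≤ y ∧ y ≤ K * t ^ 2 → y ∈ Set.Icc 0 (K * X ^ 2) :=
    fun t ht htX y hy => ⟨hy.1, hy.2.trans (by gcongr)⟩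
  refine hasDerivAt_of_tendstoUniformlyOn (l := Filter.atTop) (f := α) (g := η)
    (f' := fun n t => f t (α n t)) (g' := fun t => f t (η t)) (s := Set.Ioo (x / 2) X) isOpen_Ioo
    ?_ ?_ (fun t ht => hηlim t (hx2.trans ht.1) ht.2) ⟨half_lt_self hx.1, hx.2⟩
  · rw [Metric.tendstoUniformlyOn_iff]
    intro e he
    have hLrate : Filter.Tendsto (fun n => L * (K * σ n ^ 2)) Filter.atTop (nhds 0) := by
      simpa using hrate.const_mul L
    filter_upwards [hσlim.eventually_lt_const hx2, hLrate.eventually_lt_const he] with n hn1 hn2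
    intro t ht
    have ht0 : 0 < t := hx2.trans ht.1
    have hnt : σ n ≤ t := (hn1.trans ht.1).le
    rw [Real.dist_eq]
    refine lt_of_le_of_lt ?_ hn2
    exact (hL' t ⟨ht.1.le, ht.2.le⟩ _ (hM t ht0 ht.2 _ (hηb t ⟨ht0.le, ht.2⟩)) _
      (hM t ht0 ht.2 _ (hαb n t ⟨hnt, ht.2.le⟩))).trans
      (mul_le_mul_of_nonneg_left (hηclose n t ⟨ht0, ht.2⟩ hnt) hL)
  · filter_upwards [hσlim.eventually_lt_const hx2] with n hn t ht
    exact hαd n t ⟨hn.trans ht.1, ht.2⟩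

/-! ### Uniqueness for fields that are nonincreasing in a cone -/

/-- A solution leaving the origin stays below the line `C x`, on which the slope of the field is
smaller than `C`. The barrier is raised to `ρ + C x` and `ρ → 0`, so that only continuity at the
singular point is needed. -/
lemma le_linear_of_solution {f : ℝ → ℝ → ℝ} {x₁ C r : ℝ} (hCr : C * x₁ < r) (hC : 0 ≤ C)
    (hslope : ∀ x ∈ Set.Ioc 0 x₁, ∀ y ∈ Set.Icc 0 r, f x y < C) {u : ℝ → ℝ}
    (hu : ContinuousOn u (Set.Icc 0 x₁)) (hu0 : u 0 = 0)
    (hu' : ∀ x ∈ Set.Ioc 0 x₁, HasDerivAt u (f x (u x)) x) :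
    ∀ x ∈ Set.Ioc 0 x₁, u x ≤ C * x := by
  intro x hx
  have hx1 : 0 < x₁ := hx.1.trans_le hx.2
  have key : ∀ ρ > 0, ρ < r - C * x₁ → u x ≤ ρ + C * x := by
    intro ρ hρ hρr
    have hcw : Filter.Tendsto u (nhdsWithin 0 (Set.Ioi 0)) (nhds 0) := by
      have h := hu 0 ⟨le_rfl, hx1.le⟩
      rw [ContinuousWithinAt, hu0] at h
      exact h.mono_left (nhdsWithin_le_of_mem (Icc_mem_nhdsGT hx1))
    obtain ⟨s, hs1, hs2⟩ :=
      ((hcw.eventually_lt_const hρ).and (Ioc_mem_nhdsGT hx.1)).exists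
    refine image_le_of_deriv_right_lt_deriv_boundary' (f := u) (f' := fun t => f t (u t))
      (B := fun t => ρ + C * t) (B' := fun _ => C)
      (hu.mono (Set.Icc_subset_Icc_left hs2.1.le))
      (fun t ht => (hu' t ⟨hs2.1.trans_le ht.1, ht.2.le⟩).hasDerivWithinAt)
      (hs1.le.trans (by have := mul_nonneg hC hs2.1.le; linarith)) (by fun_prop) (fun t _ => ?_)
      (fun t ht h => ?_) ⟨hs2.2, hx.2⟩
    · refine ((((hasDerivAt_id t).const_mul C).const_add ρ).congr_deriv ?_).hasDerivWithinAt
      simp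
    · have ht0 : 0 < t := hs2.1.trans_le ht.1
      have h1 : C * t ≤ C * x₁ := mul_le_mul_of_nonneg_left ht.2.le hC
      refine hslope t ⟨ht0, ht.2.le⟩ _ ⟨?_, ?_⟩
      · rw [h]; positivity
      · rw [h]; linarith
  refine le_of_forall_pos_lt_add fun e he => ?_
  have hd : 0 < r - C * x₁ := sub_pos.2 hCr
  have h := key (min (e / 2) ((r - C * x₁) / 2)) (by positivity)
    ((min_le_right _ _).trans_lt (half_lt_self hd))
  have h2 := min_le_left (e / 2) ((r - C * x₁) / 2)
  linarith

/-- Uniqueness: nonnegative solutions lie in the cone `0 ≤ y ≤ C x`, where the field is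
nonincreasing in `y`. -/
lemma solutions_eqOn {f : ℝ → ℝ → ℝ} {x₁ C r : ℝ} (hCr : C * x₁ < r) (hC : 0 ≤ C)
    (hslope : ∀ x ∈ Set.Ioc 0 x₁, ∀ y ∈ Set.Icc 0 r, f x y < C)
    (hmono : ∀ x ∈ Set.Ioc 0 x₁, ∀ y₁ ∈ Set.Icc 0 (C * x), ∀ y₂ ∈ Set.Icc 0 (C * x),
      (f x y₁ - f x y₂) * (y₁ - y₂) ≤ 0) {u v : ℝ → ℝ}
    (hu : ContinuousOn u (Set.Icc 0 x₁)) (hu0 : u 0 = 0) (hupos : ∀ x ∈ Set.Icc 0 x₁, 0 ≤ u x)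
    (hu' : ∀ x ∈ Set.Ioc 0 x₁, HasDerivAt u (f x (u x)) x)
    (hv : ContinuousOn v (Set.Icc 0 x₁)) (hv0 : v 0 = 0) (hvpos : ∀ x ∈ Set.Icc 0 x₁, 0 ≤ v x)
    (hv' : ∀ x ∈ Set.Ioc 0 x₁, HasDerivAt v (f x (v x)) x) :
    Set.EqOn u v (Set.Icc 0 x₁) := by
  intro x hx
  have hul := le_linear_of_solution hCr hC hslope hu hu0 hu'
  have hvl := le_linear_of_solution hCr hC hslope hv hv0 hv'
  have h := solutions_dist_antitone (f := f) hu hv (fun x hx => hu' x ⟨hx.1, hx.2.le⟩)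
    (fun x hx => hv' x ⟨hx.1, hx.2.le⟩)
    (fun x hx => hmono x ⟨hx.1, hx.2.le⟩ _ ⟨hupos x ⟨hx.1.le, hx.2.le⟩, hul x ⟨hx.1, hx.2.le⟩⟩ _
      ⟨hvpos x ⟨hx.1.le, hx.2.le⟩, hvl x ⟨hx.1, hx.2.le⟩⟩) hx
  rw [hu0, hv0, sub_self, abs_zero] at h
  exact sub_eq_zero.1 (abs_nonpos_iff.1 h)

/-! ### The singular term -/

/-- Difference of the singular term at two values of `η`, where `N` is affine in `η` with slope
`n`. The second factor on the right decides both monotonicity and the Lipschitz constant. -/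
lemma singular_term_sub {P n E y₁ y₂ : ℝ} (hE : 0 < E) (h1 : 0 ≤ y₁) (h2 : 0 ≤ y₂) :
    (P + n * y₁) * (y₁ / (E + y₁)) - (P + n * y₂) * (y₂ / (E + y₂)) =
      (y₁ - y₂) * (n * (y₁ / (E + y₁)) + (P + n * y₂) * (E / ((E + y₁) * (E + y₂)))) := by
  have : E + y₁ ≠ 0 := by positivity
  have : E + y₂ ≠ 0 := by positivity
  field_simp
  ring

lemma singular_factor_nonneg {P n E C m y₁ y₂ : ℝ} (hE : 0 < E) (hC : 0 ≤ C)
    (h1 : y₁ ∈ Set.Icc 0 (C * E)) (h2 : y₂ ∈ Set.Icc 0 (C * E))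
    (hP : m ≤ P + n * y₂) (hm : |n| * (C * (1 + C)) * E ≤ m) :
    0 ≤ n * (y₁ / (E + y₁)) + (P + n * y₂) * (E / ((E + y₁) * (E + y₂))) := by
  obtain ⟨h10, h11⟩ := h1
  obtain ⟨h20, h21⟩ := h2
  have e : n * (y₁ / (E + y₁)) + (P + n * y₂) * (E / ((E + y₁) * (E + y₂))) =
      (n * (y₁ * (E + y₂)) + (P + n * y₂) * E) / ((E + y₁) * (E + y₂)) := by
    have : E + y₁ ≠ 0 := by positivity
    have : E + y₂ ≠ 0 := by positivity
    field_simp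
  rw [e]
  refine div_nonneg ?_ (by positivity)
  have k1 : y₁ * (E + y₂) ≤ (C * E) * (E + C * E) := by gcongr
  have k2 := mul_le_mul_of_nonneg_left k1 (abs_nonneg n)
  have k3 : -|n| * (y₁ * (E + y₂)) ≤ n * (y₁ * (E + y₂)) :=
    mul_le_mul_of_nonneg_right (neg_abs_le n) (by positivity)
  have k4 := mul_le_mul_of_nonneg_right hP hE.le
  have k5 := mul_le_mul_of_nonneg_right hm hE.le
  nlinarith

lemma abs_singular_factor_le {P n E B s y₁ y₂ : ℝ} (hs : 0 < s) (hE : s ≤ E)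
    (h1 : 0 ≤ y₁) (h2 : 0 ≤ y₂) (hP : |P + n * y₂| ≤ B) :
    |n * (y₁ / (E + y₁)) + (P + n * y₂) * (E / ((E + y₁) * (E + y₂)))| ≤ |n| + B / s := by
  have hE0 : 0 < E := hs.trans_le hE
  have u1 : |y₁ / (E + y₁)| ≤ 1 := by
    rw [abs_of_nonneg (by positivity)]
    exact div_le_one_of_le₀ (by linarith) (by positivity)
  have u2 : |E / ((E + y₁) * (E + y₂))| ≤ 1 / s := by
    rw [abs_of_nonneg (by positivity), div_le_div_iff₀ (by positivity) hs, one_mul]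
    exact mul_le_mul (by linarith) (by linarith) hs.le (by positivity)
  have hB : 0 ≤ B := (abs_nonneg _).trans hP
  refine (abs_add_le _ _).trans ?_
  rw [abs_mul, abs_mul]
  refine add_le_add (mul_le_of_le_one_right (abs_nonneg n) u1) ?_
  rw [div_eq_mul_one_div B s]
  exact mul_le_mul hP u2 (abs_nonneg _) hB

/-! ### The free-boundary equation -/

/-- Existence and uniqueness of a nonnegative solution through the singular point at 0 of the
equation η' = −a(x,η)η/x² + b(x) arising from the free-boundary ODE at its singular point. -/
theorem singular_ode_exists_unique (R ε δ : ℝ)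
    (hR0 : 0 < R) (hR1 : R ≠ 1) (hδ : 0 < δ)
    (hε : δ ^ 2 * R < ε) (hε' : R < 1 → ε < 1 / (1 - R) + δ ^ 2 * R / 2)
    (m1 : ℝ) (hm1 : m1 = 1 - ε * (1 - R) + δ ^ 2 / 2 * R * (1 - R))
    (a : ℝ → ℝ → ℝ) (b : ℝ → ℝ)
    (ha : ∀ x η, a x η = (2 / (δ ^ 2 * R)) *
      (m1 + (1 - R) * (δ ^ 2 * R - ε) * x + δ ^ 2 / 2 * R * (1 - R) * x ^ 2
        + δ ^ 2 / 2 * (1 - R) * η) / (1 + x + η / x))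
    (hb : ∀ x, b x = (2 / δ ^ 2) * (ε - δ ^ 2 * R) - 2 * R * x) :
    ∃ x₁ > (0:ℝ),
      (∃ η : ℝ → ℝ, ContinuousOn η (Set.Icc 0 x₁) ∧ η 0 = 0 ∧
        (∀ x ∈ Set.Icc 0 x₁, 0 ≤ η x) ∧
        (∀ x ∈ Set.Ioc 0 x₁, HasDerivAt η (-(a x (η x)) * η x / x ^ 2 + b x) x)) ∧
      (∀ η₁ η₂ : ℝ → ℝ,
        ContinuousOn η₁ (Set.Icc 0 x₁) → η₁ 0 = 0 → (∀ x ∈ Set.Icc 0 x₁, 0 ≤ η₁ x) →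
        (∀ x ∈ Set.Ioc 0 x₁, HasDerivAt η₁ (-(a x (η₁ x)) * η₁ x / x ^ 2 + b x) x) →
        ContinuousOn η₂ (Set.Icc 0 x₁) → η₂ 0 = 0 → (∀ x ∈ Set.Icc 0 x₁, 0 ≤ η₂ x) →
        (∀ x ∈ Set.Ioc 0 x₁, HasDerivAt η₂ (-(a x (η₂ x)) * η₂ x / x ^ 2 + b x) x) →
        Set.EqOn η₁ η₂ (Set.Icc 0 x₁)) := by
  have hm1pos : 0 < m1 := by
    rcases lt_or_gt_of_ne hR1 with h | h
    · have h1R : 0 < 1 - R := sub_pos.2 h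
      have h2 := mul_lt_mul_of_pos_right (hε' h) h1R
      have h3 : (1 / (1 - R) + δ ^ 2 * R / 2) * (1 - R) = 1 + δ ^ 2 / 2 * R * (1 - R) := by
        field_simp
      rw [hm1]
      linarith
    · have h1 : 0 < δ ^ 2 * R := by positivity
      have h2 : 0 < (R - 1) * (ε - δ ^ 2 * R / 2) := mul_pos (by linarith) (by linarith)
      rw [hm1]
      linarith
  set c : ℝ := 2 / (δ ^ 2 * R) with hc
  have hc0 : 0 < c := by positivity
  set b₀ : ℝ := (2 / δ ^ 2) * (ε - δ ^ 2 * R) with hb₀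
  have hb₀0 : 0 < b₀ := mul_pos (by positivity) (by linarith)
  set p : ℝ := (1 - R) * (δ ^ 2 * R - ε)
  set q : ℝ := δ ^ 2 / 2 * R * (1 - R)
  set n : ℝ := δ ^ 2 / 2 * (1 - R)
  set P : ℝ → ℝ := fun x => m1 + p * x + q * x ^ 2 with hP
  set f : ℝ → ℝ → ℝ := fun x y => -(a x y) * y / x ^ 2 + b x with hf
  have hfeq : ∀ x, 0 < x → ∀ y, 0 ≤ y →
      f x y = b x - c / x * ((P x + n * y) * (y / (x + x ^ 2 + y))) := by
    intro x hx y hy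
    have h1 : x + x ^ 2 + y ≠ 0 := by positivity
    have h2 : 1 + x + y / x = (x + x ^ 2 + y) / x := by field_simp
    simp only [hf, ha, hP]
    rw [h2]
    field_simp
    ring
  have hfsub : ∀ x, 0 < x → ∀ y₁, 0 ≤ y₁ → ∀ y₂, 0 ≤ y₂ → f x y₁ - f x y₂ =
      -(c / x * ((y₁ - y₂) * (n * (y₁ / (x + x ^ 2 + y₁)) + (P x + n * y₂) *
        ((x + x ^ 2) / ((x + x ^ 2 + y₁) * (x + x ^ 2 + y₂)))))) := by
    intro x hx y₁ h1 y₂ h2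
    rw [hfeq x hx y₁ h1, hfeq x hx y₂ h2, ← singular_term_sub (by positivity) h1 h2]
    ring
  -- On a small box `N` keeps at least half of its value at the origin.
  obtain ⟨r, hr0, hr⟩ : ∃ r > 0, ∀ x ∈ Set.Icc 0 r, ∀ y ∈ Set.Icc 0 r, m1 / 2 ≤ P x + n * y := by
    have hcts : ContinuousAt (fun z : ℝ × ℝ => P z.1 + n * z.2) (0, 0) := by
      simp only [hP]
      fun_prop
    have hev : ∀ᶠ z : ℝ × ℝ in nhds (0, 0), m1 / 2 < P z.1 + n * z.2 :=
      hcts.eventually_const_lt (by simp [hP, hm1pos])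
    obtain ⟨r, hr0, hr⟩ := Metric.eventually_nhds_iff.1 hev
    refine ⟨r / 2, half_pos hr0, fun x hx y hy => (@hr (x, y) ?_).le⟩
    rw [Prod.dist_eq, Real.dist_eq, Real.dist_eq]
    simp only [sub_zero]
    rw [abs_of_nonneg hx.1, abs_of_nonneg hy.1]
    exact max_lt (by linarith [hx.2]) (by linarith [hy.2])
  set C : ℝ := 2 * b₀ with hC
  have hC0 : 0 < C := by positivity
  -- `f x (K x²)` tends to `b₀ - c m1 K`; this `K` leaves room to halve `N` and double `1 + (1 + K) x`.
  set K : ℝ := 4 * b₀ / (c * m1) with hK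
  have hK0 : 0 < K := by positivity
  obtain ⟨X, hX0, hX⟩ : ∃ X > 0, ∀ x ∈ Set.Ioc 0 X, x < r ∧ C * x < r ∧ 2 * R * x < b₀ ∧
      |n| * (C * (1 + C)) * (x + x ^ 2) < m1 / 2 ∧ K * x < C ∧ (1 + K) * x < 1 := by
    have hlt : ∀ (g : ℝ → ℝ) (v : ℝ), Continuous g → g 0 < v →
        ∀ᶠ x in nhdsWithin 0 (Set.Ioi 0), g x < v := fun g v hg h =>
      (hg.continuousAt.eventually_lt_const h).filter_mono nhdsWithin_le_nhds
    have hev := (hlt (fun x => x) r (by fun_prop) hr0).and <|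
      (hlt (fun x => C * x) r (by fun_prop) (by simpa using hr0)).and <|
      (hlt (fun x => 2 * R * x) b₀ (by fun_prop) (by simpa using hb₀0)).and <|
      (hlt (fun x => |n| * (C * (1 + C)) * (x + x ^ 2)) (m1 / 2) (by fun_prop)
        (by simpa using hm1pos)).and <|
      (hlt (fun x => K * x) C (by fun_prop) (by simpa using hC0)).and
      (hlt (fun x => (1 + K) * x) 1 (by fun_prop) (by simp))
    exact mem_nhdsGT_iff_exists_Ioc_subset.1 hev
  have hmono : ∀ x ∈ Set.Ioc 0 X, ∀ y₁ ∈ Set.Icc 0 (C * x), ∀ y₂ ∈ Set.Icc 0 (C * x),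
      (f x y₁ - f x y₂) * (y₁ - y₂) ≤ 0 := by
    intro x hx y₁ h1 y₂ h2
    obtain ⟨k1, k2, -, k4, -, -⟩ := hX x hx
    have hx0 : 0 < x := hx.1
    have hxE : C * x ≤ C * (x + x ^ 2) :=
      mul_le_mul_of_nonneg_left (by linarith [sq_nonneg x]) hC0.le
    have hQ := singular_factor_nonneg (P := P x) (n := n) (E := x + x ^ 2) (by positivity) hC0.le
      ⟨h1.1, h1.2.trans hxE⟩ ⟨h2.1, h2.2.trans hxE⟩
      (hr x ⟨hx0.le, k1.le⟩ y₂ ⟨h2.1, h2.2.trans k2.le⟩) k4.le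
    rw [hfsub x hx0 y₁ h1.1 y₂ h2.1]
    have h3 : 0 ≤ c / x := by positivity
    have h4 := mul_nonneg (mul_nonneg h3 (sq_nonneg (y₁ - y₂))) hQ
    linarith
  have hKC : ∀ x ∈ Set.Ioc 0 X, K * x ^ 2 ≤ C * x := by
    intro x hx
    have h := mul_le_mul_of_nonneg_right (hX x hx).2.2.2.2.1.le hx.1.le
    linarith
  have hpos : ∀ x ∈ Set.Ioc 0 X, 0 < f x 0 := by
    intro x hx
    rw [hfeq x hx.1 0 le_rfl, hb]
    have := (hX x hx).2.2.1
    simp only [zero_div, mul_zero]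
    linarith
  have hsup : ∀ x ∈ Set.Ioc 0 X, f x (K * x ^ 2) < 2 * K * x := by
    intro x hx
    have hx0 : 0 < x := hx.1
    obtain ⟨k1, k2, k3, -, k5, k6⟩ := hX x hx
    have hN := hr x ⟨hx0.le, k1.le⟩ (K * x ^ 2) ⟨by positivity, (hKC x hx).trans k2.le⟩
    rw [hfeq x hx0 _ (by positivity), hb]
    have e : c / x * ((P x + n * (K * x ^ 2)) * (K * x ^ 2 / (x + x ^ 2 + K * x ^ 2))) =
        c * K * (P x + n * (K * x ^ 2)) / (1 + (1 + K) * x) := by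
      have : 1 + (1 + K) * x ≠ 0 := by positivity
      have e2 : x + x ^ 2 + K * x ^ 2 = x * (1 + (1 + K) * x) := by ring
      rw [e2]
      field_simp
    rw [e]
    have h1 : b₀ ≤ c * K * (P x + n * (K * x ^ 2)) / (1 + (1 + K) * x) := by
      rw [le_div_iff₀ (by positivity)]
      have h2 := mul_le_mul_of_nonneg_left hN (mul_pos hc0 hK0).le
      have h3 : c * K * (m1 / 2) = 2 * b₀ := by
        rw [hK]
        field_simp
        ring
      have h4 := mul_lt_mul_of_pos_left k6 hb₀0
      linarith
    have h5 : 0 < R * x := by positivity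
    have h6 : 0 < K * x := by positivity
    linarith
  have hslope : ∀ x ∈ Set.Ioc 0 X, ∀ y ∈ Set.Icc 0 r, f x y < C := by
    intro x hx y hy
    have hx0 : 0 < x := hx.1
    have hN := hr x ⟨hx0.le, (hX x hx).1.le⟩ y hy
    have hy0 := hy.1
    rw [hfeq x hx0 y hy0, hb]
    have hN0 : 0 ≤ P x + n * y := by linarith
    have h1 : 0 ≤ c / x * ((P x + n * y) * (y / (x + x ^ 2 + y))) := by positivity
    have h5 : 0 < R * x := by positivity
    linarith
  have hLip : ∀ s, 0 < s → ∃ L, 0 ≤ L ∧ ∀ x ∈ Set.Icc s X, ∀ y₁ ∈ Set.Icc 0 (K * X ^ 2),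
      ∀ y₂ ∈ Set.Icc 0 (K * X ^ 2), |f x y₁ - f x y₂| ≤ L * |y₁ - y₂| := by
    intro s hs
    obtain ⟨B, hB⟩ := (isCompact_Icc.prod isCompact_Icc).exists_bound_of_continuousOn
      (s := Set.Icc s X ×ˢ Set.Icc 0 (K * X ^ 2)) (f := fun z : ℝ × ℝ => P z.1 + n * z.2)
      (by simp only [hP]; fun_prop)
    refine ⟨c / s * (|n| + |B| / s), by positivity, fun x hx y₁ h1 y₂ h2 => ?_⟩
    have hx0 : 0 < x := hs.trans_le hx.1
    have hQ := abs_singular_factor_le (P := P x) (n := n) (E := x + x ^ 2) hs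
      (by linarith [sq_nonneg x, hx.1]) h1.1 h2.1 ((hB (x, y₂) ⟨hx, h2⟩).trans (le_abs_self B))
    rw [hfsub x hx0 y₁ h1.1 y₂ h2.1, abs_neg, abs_mul, abs_mul, abs_of_pos (div_pos hc0 hx0),
      mul_left_comm, mul_comm]
    have h3 : c / x ≤ c / s := div_le_div_of_nonneg_left hc0.le hs hx.1
    exact mul_le_mul_of_nonneg_right (mul_le_mul h3 hQ (abs_nonneg _) (by positivity))
      (abs_nonneg _)
  have hcont : ∀ y, 0 ≤ y → ContinuousOn (fun x => f x y) (Set.Ioi 0) := by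
    intro y hy
    have h : ContinuousOn (fun x => b₀ - 2 * R * x -
        c / x * ((m1 + p * x + q * x ^ 2 + n * y) * (y / (x + x ^ 2 + y)))) (Set.Ioi 0) := by
      have h1 : ∀ x ∈ Set.Ioi (0:ℝ), x ≠ 0 := fun x hx => ne_of_gt hx
      have h2 : ∀ x ∈ Set.Ioi (0:ℝ), x + x ^ 2 + y ≠ 0 := fun x hx => by
        have : 0 < x := hx
        positivity
      fun_prop (disch := assumption)
    refine h.congr fun x hx => ?_
    simp only
    rw [hfeq x hx y hy, hb]
  obtain ⟨η, hη0, hηb, hηd⟩ := exists_singular_solution hX0 hK0.le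
    (fun x hx y₁ h1 y₂ h2 => hmono x hx y₁ ⟨h1.1, h1.2.trans (hKC x hx)⟩
      y₂ ⟨h2.1, h2.2.trans (hKC x hx)⟩) hpos hsup hLip hcont
  have hXX : X / 2 < X := half_lt_self hX0
  -- The interval is halved so that the derivative at its right end is two-sided.
  refine ⟨X / 2, half_pos hX0, ⟨η, ?_, hη0, fun x hx => (hηb x ⟨hx.1, hx.2.trans_lt hXX⟩).1,
    fun x hx => hηd x ⟨hx.1, hx.2.trans_lt hXX⟩⟩, ?_⟩
  · intro x hx
    rcases hx.1.eq_or_lt with rfl | hx0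
    · rw [ContinuousWithinAt, hη0]
      have hz : Filter.Tendsto (fun x : ℝ => K * x ^ 2) (nhdsWithin 0 (Set.Icc 0 (X / 2)))
          (nhds 0) := by
        have h : Continuous fun x : ℝ => K * x ^ 2 := by fun_prop
        simpa using (h.tendsto 0).mono_left nhdsWithin_le_nhds
      refine tendsto_of_tendsto_of_tendsto_of_le_of_le' tendsto_const_nhds hz ?_ ?_
      · filter_upwards [self_mem_nhdsWithin] with t ht
        exact (hηb t ⟨ht.1, ht.2.trans_lt hXX⟩).1
      · filter_upwards [self_mem_nhdsWithin] with t ht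
        exact (hηb t ⟨ht.1, ht.2.trans_lt hXX⟩).2
    · exact (hηd x ⟨hx0, hx.2.trans_lt hXX⟩).continuousAt.continuousWithinAt
  · intro u v hu hu0 hupos hu' hv hv0 hvpos hv'
    have hsub : ∀ x ∈ Set.Ioc 0 (X / 2), x ∈ Set.Ioc 0 X := fun x hx =>
      ⟨hx.1, hx.2.trans hXX.le⟩
    exact solutions_eqOn (f := f) (hX (X / 2) ⟨half_pos hX0, hXX.le⟩).2.1 hC0.le
      (fun x hx => hslope x (hsub x hx)) (fun x hx => hmono x (hsub x hx))
      hu hu0 hupos hu' hv hv0 hvpos hv'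
end

section
/- Fix real parameters R ∈ (0,∞) with R ≠ 1, ε ∈ ℝ and δ > 0, and suppose ε > δ²R, and additionally ε < 1/(1−R) + δ²R/2 if R < 1. Let x₀ > 0 and let n : [1, 1+x₀] → ℝ be continuous with n(1) = m(1), differentiable on (1, 1+x₀] with n'(q) = O(q, n(q)) and with (1−R)·(n(q) − m(q)) ≥ 0 and n(q) ≠ ℓ(q) for every q ∈ (1, 1+x₀]. Then lim_{q→1⁺} (n(q) − m(q))/(q−1)² = δ²R(1−R)(ε − δ²R)/(2·m(1)). -/
/-!
Write `x = q - 1`, `a = δ² / 2` and `z = (n - m) / (1 - R) ≥ 0`. The equation `n' = O(q, n)` becomes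
`z' = (ε - δ² R q) - (n / (R x)) · z / (a q x + z)`, in which the last fraction is increasing in
`z`. On the parabola `z = M x²` the right side minus `2 M x` tends to
`(ε - δ² R) - m(1) M / (R a)` as `x → 0⁺`, which is negative for `M` above
`L = a R (ε - δ² R) / m(1)` and positive for `M` below `L`. By the monotonicity in `z`, for `M > L`
the difference `z - M x²` is decreasing wherever it is positive (near `x = 0`); since it vanishes at
`x = 0`, it can never become positive. The same holds for `M x² - z` when `M < L`
(where `M x² - z` is positive, `z ≥ 0` forces `M > 0`). Hence
`z / x²` is eventually at most every `M > L` and at least every `M < L`, so it tends to `L`.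
-/

open Filter
open Set Topology

/-- A barrier principle: a function which starts nonpositive and has nonpositive derivative
wherever it is positive stays nonpositive. No derivative is needed at the left endpoint. -/
lemma nonpos_of_deriv_nonpos_of_pos {f f' : ℝ → ℝ} {a b : ℝ}
    (hc : ContinuousOn f (Icc a b)) (ha : f a ≤ 0)
    (hd : ∀ x ∈ Ioo a b, HasDerivAt f (f' x) x)
    (hneg : ∀ x ∈ Ioo a b, 0 < f x → f' x ≤ 0) : ∀ x ∈ Ioo a b, f x ≤ 0 := by
  intro x hx
  by_contra! hpos
  -- `s` is the last point before `x` at which `f ≤ 0`.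
  have hcx : ContinuousOn f (Icc a x) := hc.mono (Icc_subset_Icc_right hx.2.le)
  have hcomp : IsCompact (Icc a x ∩ f ⁻¹' Iic 0) :=
    isCompact_Icc.of_isClosed_subset (hcx.preimage_isClosed_of_isClosed isClosed_Icc isClosed_Iic)
      inter_subset_left
  obtain ⟨s, ⟨hs, hfs⟩, hmax⟩ := hcomp.exists_isGreatest ⟨a, ⟨le_rfl, hx.1.le⟩, ha⟩
  have hint : ∀ y ∈ Ioo s x, y ∈ Ioo a b := fun y hy =>
    ⟨hs.1.trans_lt hy.1, hy.2.trans hx.2⟩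
  have hanti : AntitoneOn f (Icc s x) := by
    apply antitoneOn_of_deriv_nonpos (convex_Icc s x) (hcx.mono (Icc_subset_Icc_left hs.1))
    · intro y hy
      rw [interior_Icc] at hy
      exact (hd y (hint y hy)).differentiableAt.differentiableWithinAt
    · intro y hy
      rw [interior_Icc] at hy
      rw [(hd y (hint y hy)).deriv]
      apply hneg y (hint y hy)
      by_contra! hy0
      exact absurd (hmax ⟨⟨hs.1.trans hy.1.le, hy.2.le⟩, hy0⟩) (not_le.2 hy.1)
  have h1 := hanti (left_mem_Icc.2 hs.2) (right_mem_Icc.2 hs.2) hs.2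
  have h2 : f s ≤ 0 := hfs
  linarith

/-- Monotonicity in `z` of the fraction in the rescaled equation, compared with its value on the
parabola `z = M x²`. -/
lemma frac_compare {c x M z : ℝ} (hc : 0 < c) (hx : 0 < x) (hM : 0 ≤ M) (hz : M * x ^ 2 ≤ z) :
    M / (c + M * x) ≤ z / (x * (c * x + z)) := by
  have hz0 : 0 ≤ z := le_trans (by positivity) hz
  rw [div_le_div_iff₀ (by positivity) (by positivity)]
  nlinarith [mul_le_mul_of_nonneg_left hz hc.le]

/-- The reversed comparison, below the parabola. -/
lemma frac_compare' {c x M z : ℝ} (hc : 0 < c) (hx : 0 < x) (hz0 : 0 ≤ z) (hz : z ≤ M * x ^ 2) :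
    z / (x * (c * x + z)) ≤ M / (c + M * x) := by
  have hM : 0 ≤ M := by
    by_contra! h
    nlinarith [mul_pos hx hx]
  rw [div_le_div_iff₀ (by positivity) (by positivity)]
  nlinarith [mul_le_mul_of_nonneg_left hz hc.le]

/-- Quadratic rate for the rescaled equation
`z' = A - N · z / (x (c x + z))`, where `x = q - 1` and `A`, `N`, `c` have positive limits at
`q = 1`. -/
lemma tendsto_div_sq {z A N c : ℝ → ℝ} {A₀ N₀ c₀ b : ℝ} (hb : 1 < b)
    (hA₀ : 0 < A₀) (hN₀ : 0 < N₀) (hc₀ : 0 < c₀)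
    (hA : Tendsto A (𝓝[>] 1) (𝓝 A₀)) (hN : Tendsto N (𝓝[>] 1) (𝓝 N₀))
    (hc : Tendsto c (𝓝[>] 1) (𝓝 c₀))
    (hzc : ContinuousOn z (Icc 1 b)) (hz1 : z 1 = 0)
    (hz0 : ∀ q ∈ Ioo 1 b, 0 ≤ z q)
    (hzd : ∀ q ∈ Ioo 1 b,
      HasDerivAt z (A q - N q * (z q / ((q - 1) * (c q * (q - 1) + z q)))) q) :
    Tendsto (fun q => z q / (q - 1) ^ 2) (𝓝[>] 1) (𝓝 (A₀ * c₀ / N₀)) := by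
  have hx : Tendsto (fun q : ℝ => q - 1) (𝓝[>] 1) (𝓝 0) := by
    have : Tendsto (fun q : ℝ => q - 1) (𝓝 1) (𝓝 (1 - 1)) :=
      (continuous_id.sub continuous_const).tendsto 1
    rw [sub_self] at this
    exact this.mono_left nhdsWithin_le_nhds
  -- The value of `(z - M x²)'` on the parabola `z = M x²`.
  have hF : ∀ M : ℝ, Tendsto
      (fun q => A q - N q * (M / (c q + M * (q - 1))) - 2 * M * (q - 1)) (𝓝[>] 1)
      (𝓝 (A₀ - N₀ * (M / c₀))) := by
    intro M
    have h := (hA.sub (hN.mul ((tendsto_const_nhds (x := M)).div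
      (hc.add (hx.const_mul M)) (by simpa using hc₀.ne')))).sub (hx.const_mul (2 * M))
    simpa using h
  have hpd : ∀ M q : ℝ, HasDerivAt (fun q : ℝ => M * (q - 1) ^ 2) (2 * M * (q - 1)) q := by
    intro M q
    exact ((((hasDerivAt_id q).sub_const 1).pow 2).const_mul M).congr_deriv (by simp; ring)
  have hpc : ∀ M : ℝ, Continuous (fun q : ℝ => M * (q - 1) ^ 2) := fun M => by fun_prop
  have hgood : ∀ᶠ q in 𝓝[>] (1 : ℝ), 0 < N q ∧ 0 < c q ∧ q < b :=
    (hN.eventually (lt_mem_nhds hN₀)).and ((hc.eventually (lt_mem_nhds hc₀)).and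
      (nhdsWithin_le_nhds (Iio_mem_nhds hb)))
  have hupper : ∀ M, 0 ≤ M → A₀ - N₀ * (M / c₀) < 0 →
      ∀ᶠ q in 𝓝[>] (1 : ℝ), z q ≤ M * (q - 1) ^ 2 := by
    intro M hM hlim
    obtain ⟨r, hr, hsub⟩ := (mem_nhdsGT_iff_exists_Ioo_subset).1
      (hgood.and ((hF M).eventually (gt_mem_nhds hlim)))
    have hr1 : 1 < r := hr
    have hlt : 1 < min r b := lt_min hr1 hb
    have key := nonpos_of_deriv_nonpos_of_pos (f := fun q => z q - M * (q - 1) ^ 2)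
      (f' := fun q => A q - N q * (z q / ((q - 1) * (c q * (q - 1) + z q))) - 2 * M * (q - 1))
      (a := 1) (b := min r b)
      ((hzc.mono (Icc_subset_Icc_right (min_le_right _ _))).sub (hpc M).continuousOn)
      (by simp [hz1])
      (fun q hq => (hzd q ⟨hq.1, hq.2.trans_le (min_le_right _ _)⟩).sub (hpd M q))
      (by
        intro q hq hpos
        obtain ⟨⟨hNq, hcq, -⟩, hFq⟩ := hsub ⟨hq.1, hq.2.trans_le (min_le_left _ _)⟩
        have hcmp := frac_compare hcq (sub_pos.2 hq.1) hM (sub_pos.1 hpos).le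
        have := mul_le_mul_of_nonneg_left hcmp hNq.le
        linarith)
    filter_upwards [Ioo_mem_nhdsGT hlt] with q hq
    exact sub_nonpos.1 (key q hq)
  have hlower : ∀ M, 0 < A₀ - N₀ * (M / c₀) →
      ∀ᶠ q in 𝓝[>] (1 : ℝ), M * (q - 1) ^ 2 ≤ z q := by
    intro M hlim
    obtain ⟨r, hr, hsub⟩ := (mem_nhdsGT_iff_exists_Ioo_subset).1
      (hgood.and ((hF M).eventually (lt_mem_nhds hlim)))
    have hr1 : 1 < r := hr
    have hlt : 1 < min r b := lt_min hr1 hb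
    have key := nonpos_of_deriv_nonpos_of_pos (f := fun q => M * (q - 1) ^ 2 - z q)
      (f' := fun q => 2 * M * (q - 1) - (A q - N q * (z q / ((q - 1) * (c q * (q - 1) + z q)))))
      (a := 1) (b := min r b)
      ((hpc M).continuousOn.sub (hzc.mono (Icc_subset_Icc_right (min_le_right _ _))))
      (by simp [hz1])
      (fun q hq => (hpd M q).sub (hzd q ⟨hq.1, hq.2.trans_le (min_le_right _ _)⟩))
      (by
        intro q hq hpos
        obtain ⟨⟨hNq, hcq, -⟩, hFq⟩ := hsub ⟨hq.1, hq.2.trans_le (min_le_left _ _)⟩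
        have hcmp := frac_compare' hcq (sub_pos.2 hq.1)
          (hz0 q ⟨hq.1, hq.2.trans_le (min_le_right _ _)⟩) (sub_pos.1 hpos).le
        have := mul_le_mul_of_nonneg_left hcmp hNq.le
        linarith)
    filter_upwards [Ioo_mem_nhdsGT hlt] with q hq
    exact sub_nonpos.1 (key q hq)
  have hL : 0 < A₀ * c₀ / N₀ := by positivity
  have hsgn : ∀ M, A₀ - N₀ * (M / c₀) = N₀ / c₀ * (A₀ * c₀ / N₀ - M) := by
    intro M; field_simp
  have hNc : 0 < N₀ / c₀ := by positivity
  refine tendsto_order.2 ⟨fun M hM => ?_, fun M hM => ?_⟩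
  · obtain ⟨M', h1, h2⟩ := exists_between hM
    filter_upwards [hlower M' (by rw [hsgn]; exact mul_pos hNc (sub_pos.2 h2)),
      self_mem_nhdsWithin] with q hq hq1
    have : (0 : ℝ) < q - 1 := sub_pos.2 hq1
    exact h1.trans_le ((le_div_iff₀ (by positivity)).2 hq)
  · obtain ⟨M', h1, h2⟩ := exists_between hM
    filter_upwards [hupper M' (hL.trans h1).le
      (by rw [hsgn]; exact mul_neg_of_pos_of_neg hNc (sub_neg.2 h1)),
      self_mem_nhdsWithin] with q hq hq1
    have : (0 : ℝ) < q - 1 := sub_pos.2 hq1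
    exact ((div_le_iff₀ (by positivity)).2 hq).trans_lt h2

/-- A solution of n' = O(q,n) through the singular point (1, m(1)) separates from the
quadratic m at rate δ²R(1−R)(ε − δ²R)/(2m(1)) · (q−1)². -/
theorem singular_point_quadratic_rate (R ε δ : ℝ)
    (hR0 : 0 < R) (hR1 : R ≠ 1) (hδ : 0 < δ)
    (hε : δ ^ 2 * R < ε) (hε' : R < 1 → ε < 1 / (1 - R) + δ ^ 2 * R / 2)
    (m ℓ : ℝ → ℝ) (OO : ℝ → ℝ → ℝ)
    (hm : ∀ q, m q = 1 - ε * (1 - R) * q + δ ^ 2 / 2 * R * (1 - R) * q ^ 2)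
    (hℓ : ∀ q, ℓ q = m q + δ ^ 2 / 2 * (1 - R) * q * (1 - q))
    (hO : ∀ q v, OO q v = ((1 - R) / R) * (v / (1 - q)) * ((m q - v) / (ℓ q - v)))
    (x₀ : ℝ) (hx₀ : 0 < x₀)
    (n : ℝ → ℝ) (hcont : ContinuousOn n (Set.Icc 1 (1 + x₀))) (hn1 : n 1 = m 1)
    (hderiv : ∀ q ∈ Set.Ioc 1 (1 + x₀),
      HasDerivWithinAt n (OO q (n q)) (Set.Icc 1 (1 + x₀)) q)
    (hsign : ∀ q ∈ Set.Ioc 1 (1 + x₀), 0 ≤ (1 - R) * (n q - m q))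
    (hne : ∀ q ∈ Set.Ioc 1 (1 + x₀), n q ≠ ℓ q) :
    Tendsto (fun q => (n q - m q) / (q - 1) ^ 2) (nhdsWithin 1 (Set.Ioi 1))
      (nhds (δ ^ 2 * R * (1 - R) * (ε - δ ^ 2 * R) / (2 * m 1))) := by
  have hR : 1 - R ≠ 0 := sub_ne_zero.2 hR1.symm
  have hδ2 : 0 < δ ^ 2 := by positivity
  have hb : 1 < 1 + x₀ := by linarith
  have hm1 : 0 < m 1 := by
    rw [hm]
    rcases lt_or_gt_of_ne hR1 with h | h
    · have h1 : 0 < 1 - R := sub_pos.2 h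
      have h2 := mul_lt_mul_of_pos_left (hε' h) h1
      rw [mul_add, mul_one_div_cancel hR] at h2
      nlinarith
    · have h1 : 0 < δ ^ 2 * R := by positivity
      have h2 : 0 < ε - δ ^ 2 * R / 2 := by linarith
      nlinarith [mul_pos (sub_pos.2 h) h2]
  have hmd : ∀ q, HasDerivAt m (-(ε * (1 - R)) + δ ^ 2 * R * (1 - R) * q) q := by
    intro q
    rw [funext hm]
    exact ((((hasDerivAt_id q).const_mul (ε * (1 - R))).const_sub 1).add
      (((hasDerivAt_id q).pow 2).const_mul (δ ^ 2 / 2 * R * (1 - R)))).congr_deriv (by simp; ring)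
  have hmc : Continuous m := continuous_iff_continuousAt.2 fun q => (hmd q).continuousAt
  have hz0 : ∀ q ∈ Ioo 1 (1 + x₀), 0 ≤ (n q - m q) / (1 - R) := by
    intro q hq
    have h : (n q - m q) / (1 - R) = (1 - R) * (n q - m q) / (1 - R) ^ 2 := by field_simp
    rw [h]
    exact div_nonneg (hsign q ⟨hq.1, hq.2.le⟩) (sq_nonneg _)
  have hnlim : Tendsto n (𝓝[>] 1) (𝓝 (m 1)) := by
    have h := hcont 1 ⟨le_rfl, hb.le⟩
    rw [ContinuousWithinAt, hn1] at h
    rw [← nhdsWithin_Ioc_eq_nhdsGT hb]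
    exact h.mono_left (nhdsWithin_mono _ Ioc_subset_Icc_self)
  have hAlim : Tendsto (fun q : ℝ => ε - δ ^ 2 * R * q) (𝓝[>] 1) (𝓝 (ε - δ ^ 2 * R)) := by
    have h : Continuous (fun q : ℝ => ε - δ ^ 2 * R * q) := by fun_prop
    have h' := h.tendsto 1
    rw [mul_one] at h'
    exact h'.mono_left nhdsWithin_le_nhds
  have hclim : Tendsto (fun q : ℝ => δ ^ 2 / 2 * q) (𝓝[>] 1) (𝓝 (δ ^ 2 / 2)) := by
    have h : Continuous (fun q : ℝ => δ ^ 2 / 2 * q) := by fun_prop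
    have h' := h.tendsto 1
    rw [mul_one] at h'
    exact h'.mono_left nhdsWithin_le_nhds
  have key := tendsto_div_sq (z := fun q => (n q - m q) / (1 - R)) (N := fun q => n q / R)
    hb (sub_pos.2 hε) (div_pos hm1 hR0) (half_pos hδ2) hAlim (hnlim.div_const R) hclim
    ((hcont.sub hmc.continuousOn).div_const _) (by simp [hn1]) hz0
    (by
      intro q hq
      have hn' : HasDerivAt n (OO q (n q)) q :=
        (hderiv q ⟨hq.1, hq.2.le⟩).hasDerivAt (Icc_mem_nhds hq.1 hq.2)
      refine ((hn'.sub (hmd q)).div_const (1 - R)).congr_deriv ?_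
      have hx : 0 < q - 1 := sub_pos.2 hq.1
      have hz := hz0 q hq
      obtain ⟨z, hzdef⟩ : ∃ z, z = (n q - m q) / (1 - R) := ⟨_, rfl⟩
      have hnm : m q = n q - (1 - R) * z := by rw [hzdef]; field_simp; ring
      rw [← hzdef] at hz
      have hden : δ ^ 2 / 2 * q * (q - 1) + z ≠ 0 := by
        have : 0 < q := by linarith
        positivity
      have hO1 : OO q (n q) = -((1 - R) * (n q / R * (z / ((q - 1) *
          (δ ^ 2 / 2 * q * (q - 1) + z))))) := by
        have h1 : m q - n q = -(1 - R) * z := by rw [hnm]; ring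
        have h2 : ℓ q - n q = -(1 - R) * (δ ^ 2 / 2 * q * (q - 1) + z) := by
          rw [hℓ, hnm]; ring
        have h3 : 1 - q = -(q - 1) := by ring
        rw [hO, h1, h2, h3, mul_div_mul_left _ _ (neg_ne_zero.2 hR), div_neg]
        have hx0 := hx.ne'
        field_simp
      rw [← hzdef, hO1]
      field_simp
      ring)
  have h := key.const_mul (1 - R)
  convert h using 1
  · funext q
    rw [div_right_comm, mul_div_cancel₀ _ hR]
  · congr 1
    have := hm1.ne'
    field_simp
end

section
/- Fix real parameters R ∈ (0,∞) with R ≠ 1, ε > 0 and δ > 0, and suppose m(1) > 0. Define the affine function c(q) = 1 + (1−R)(δ²R/2 − ε)q. Let 0 < r < b < 1 and let n : [r,b] → ℝ be continuous with n(r) = m(r), differentiable on (r,b] with n'(q) = O(q, n(q)) for q ∈ (r,b], and suppose (1−R)·n(q) < (1−R)·ℓ(q) for every q ∈ [r,b]. Then (1−R)·n(q) ≤ (1−R)·c(q) for every q ∈ [r,b]. -/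
/-!
For `R > 1` the claim is immediate, since `ℓ - c = (δ²/2)(1-R)²q(1-q) ≥ 0` on `[0,1]`: the assumed
bound by `ℓ` is stronger than the one by `c`. For `R < 1` the line `c` is a strict upper barrier:
at a contact point `n q = c q` one has `(m - c)/(ℓ - c) = -R/(1-R)`, so `O(q, c q) = -c q/(1-q)`,
and as `c q = (1-q) + q m(1)`, the slope of `c` exceeds this by `m(1)/(1-q) > 0`. Since
`n r = m r < c r`, the fencing lemma `image_le_of_deriv_right_lt_deriv_boundary'` applies.
-/

/-- Solutions of n' = O(q,n) started on the curve m stay below (above, if R > 1) the straight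
line c through (0,1) with slope (1−R)(δ²R/2 − ε). -/
theorem solution_below_chord (R ε δ : ℝ)
    (hR0 : 0 < R) (hR1 : R ≠ 1) (hε : 0 < ε) (hδ : 0 < δ)
    (m ℓ c : ℝ → ℝ) (OO : ℝ → ℝ → ℝ)
    (hm : ∀ q, m q = 1 - ε * (1 - R) * q + δ ^ 2 / 2 * R * (1 - R) * q ^ 2)
    (hℓ : ∀ q, ℓ q = m q + δ ^ 2 / 2 * (1 - R) * q * (1 - q))
    (hc : ∀ q, c q = 1 + (1 - R) * (δ ^ 2 * R / 2 - ε) * q)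
    (hO : ∀ q v, OO q v = ((1 - R) / R) * (v / (1 - q)) * ((m q - v) / (ℓ q - v)))
    (hm1 : 0 < m 1)
    (r b : ℝ) (hr : 0 < r) (hrb : r < b) (hb : b < 1)
    (n : ℝ → ℝ) (hcont : ContinuousOn n (Set.Icc r b)) (hnr : n r = m r)
    (hderiv : ∀ q ∈ Set.Ioc r b, HasDerivWithinAt n (OO q (n q)) (Set.Icc r b) q)
    (hlt : ∀ q ∈ Set.Icc r b, (1 - R) * n q < (1 - R) * ℓ q) :
    ∀ q ∈ Set.Icc r b, (1 - R) * n q ≤ (1 - R) * c q := by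
  intro q hq
  obtain ⟨hq1, hq2⟩ := hq
  have hδ2 : 0 < δ ^ 2 / 2 := by positivity
  rcases lt_or_gt_of_ne hR1 with h | h
  · have hR' : 0 < 1 - R := by linarith
    refine mul_le_mul_of_nonneg_left ?_ hR'.le
    by_contra! hcon
    have hmc : n r < c r := by
      have hpos : 0 < (1 - R) * (δ ^ 2 / 2 * R) * (r * (1 - r)) :=
        mul_pos (mul_pos hR' (mul_pos hδ2 hR0)) (mul_pos hr (by linarith))
      rw [hnr, hm, hc]
      linarith
    have hrq : r < q := by
      refine lt_of_le_of_ne hq1 ?_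
      rintro rfl
      linarith
    have hc' : ∀ x, HasDerivAt c ((1 - R) * (δ ^ 2 * R / 2 - ε)) x := by
      intro x
      rw [show c = fun q => 1 + (1 - R) * (δ ^ 2 * R / 2 - ε) * q from funext hc]
      simpa using ((hasDerivAt_id x).const_mul ((1 - R) * (δ ^ 2 * R / 2 - ε))).const_add 1
    have hcc : Continuous c := continuous_iff_continuousAt.2 fun x => (hc' x).continuousAt
    -- Differentiability of `n` is only known on `(r, b]`, so the comparison starts at some `a > r`.
    obtain ⟨a, hac, har, haq⟩ : ∃ a, n a < c a ∧ r < a ∧ a < q := by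
      have h1 : ContinuousWithinAt n (Set.Ioo r q) r :=
        (hcont r ⟨le_rfl, hrb.le⟩).mono fun x hx => ⟨hx.1.le, hx.2.le.trans hq2⟩
      have h2 := h1.eventually_lt hcc.continuousWithinAt hmc
      rw [nhdsWithin_Ioo_eq_nhdsGT hrq] at h2
      obtain ⟨a, ha⟩ := (h2.and (Ioo_mem_nhdsGT hrq)).exists
      exact ⟨a, ha.1, ha.2.1, ha.2.2⟩
    refine absurd (image_le_of_deriv_right_lt_deriv_boundary' (f := n) (B := c)
      (f' := fun x => OO x (n x)) (B' := fun _ => (1 - R) * (δ ^ 2 * R / 2 - ε))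
      (hcont.mono (Set.Icc_subset_Icc har.le hq2)) ?_ hac.le hcc.continuousOn
      (fun x _ => (hc' x).hasDerivWithinAt) ?_ (Set.right_mem_Icc.2 haq.le)) hcon.not_ge
    · intro x hx
      have hrx : r < x := har.trans_le hx.1
      have hxb : x < b := hx.2.trans_le hq2
      exact (hderiv x ⟨hrx, hxb.le⟩).mono_of_mem_nhdsWithin
        (mem_nhdsWithin_of_mem_nhds (Icc_mem_nhds hrx hxb))
    · intro x hx hnx
      have hx0 : 0 < x := by linarith [hx.1]
      have hx1 : 0 < 1 - x := by linarith [hx.2]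
      have hratio : (m x - c x) / (ℓ x - c x) = -(R / (1 - R)) := by
        have e1 : m x - c x = -(R * ((1 - R) * (δ ^ 2 / 2) * (x * (1 - x)))) := by
          rw [hm, hc]; ring
        have e2 : ℓ x - c x = (1 - R) * ((1 - R) * (δ ^ 2 / 2) * (x * (1 - x))) := by
          rw [hℓ, hm, hc]; ring
        have e3 : (1 - R) * (δ ^ 2 / 2) * (x * (1 - x)) ≠ 0 := by positivity
        rw [e1, e2, neg_div, mul_div_mul_right _ _ e3]
      have hOc : OO x (n x) = -(c x / (1 - x)) := by
        rw [hO, hnx, hratio]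
        field_simp
      have hgap : (1 - R) * (δ ^ 2 * R / 2 - ε) + c x / (1 - x) = m 1 / (1 - x) := by
        rw [hc, hm]
        field_simp
        ring
      have := div_pos hm1 hx1
      simp only [hOc]
      linarith
  · have hnl := hlt q ⟨hq1, hq2⟩
    have hgap : (1 - R) * ℓ q ≤ (1 - R) * c q := by
      have hpos : 0 ≤ (R - 1) ^ 3 * (δ ^ 2 / 2) * (q * (1 - q)) :=
        mul_nonneg (mul_nonneg (pow_nonneg (by linarith) 3) hδ2.le)
          (mul_nonneg (by linarith) (by linarith))
      rw [hℓ, hm, hc]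
      linarith
    linarith
end

section
/- Suppose R ∈ (0,1), δ > 0 and 0 < ε < min{δ²R, δ·√(2R/(1−R))} (so that q_M = ε/(δ²R) ∈ (0,1), m_M > 0, m(1) > 0 and m'(1) > 0). Let r ∈ (0, q_M). Then: (a) there is no continuous function n : [r,1) → ℝ with n(r) = m(r), differentiable on (r,1) with n'(q) = O(q, n(q)) and satisfying m(q) ≤ n(q) < ℓ(q) for every q ∈ (r,1); and (b) if b ∈ (r,1), n : [r,b] → ℝ is continuous with n(r) = m(r), differentiable on (r,b) with n'(q) = O(q,n(q)), m(q) < n(q) < ℓ(q) for q ∈ (r,b), and n(b) = m(b), then b > q_M. In other words, the first crossing point ζ(r) of the solution started at (r, m(r)) with the curve m lies in the open interval (q_M, 1). -/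
/-! Write `g = n - m ≥ 0`.

For the return point: while `q ≤ q_M` the parabola `m` is nonincreasing, so the equation gives
`g' ≥ -K g`, where the rate `K` is continuous, hence bounded, near a point `b < 1` at which
`n` meets `m` (there `ℓ - n = ℓ - m > 0`). A positive function satisfying such an inequality
cannot vanish at `b` (`pos_of_deriv_ge_neg_mul`), so `b > q_M`.

For the absence of a solution trapped between `m` and `ℓ` on all of `(r, 1)`: such an `n` is
nonincreasing and dominates `m`, so `n ≥ m(1) > 0`. On `(q_M, 1)` one has
`m(1) - m(q) ≥ a (1 - q)` with `a > 0`, whereas `ℓ - m ≤ c (1 - q)`. Hence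
`(n - m) / (ℓ - n) ≥ a / c` and `n' ≤ -k / (1 - q)` with `k > 0`. The logarithmic divergence
then drives `n` below zero before `q = 1` (`exists_nonpos_of_deriv_le`). -/

/-- A Grönwall-type bound: `g * exp (K q)` is nondecreasing, so `g` stays positive up to and
including the right endpoint. -/
theorem pos_of_deriv_ge_neg_mul {g g' : ℝ → ℝ} {c b K : ℝ} (hcb : c < b)
    (hg : ContinuousOn g (Set.Icc c b))
    (hd : ∀ q ∈ Set.Ioo c b, HasDerivAt g (g' q) q)
    (hK : ∀ q ∈ Set.Ioo c b, -K * g q ≤ g' q) (hc : 0 < g c) : 0 < g b := by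
  have hmono : MonotoneOn (fun q => g q * Real.exp (K * q)) (Set.Icc c b) := by
    have hder : ∀ q ∈ Set.Ioo c b, HasDerivAt (fun q => g q * Real.exp (K * q))
        (g' q * Real.exp (K * q) + g q * (Real.exp (K * q) * (K * 1))) q := fun q hq =>
      (hd q hq).mul (((hasDerivAt_id' q).const_mul K).exp)
    refine monotoneOn_of_deriv_nonneg (convex_Icc c b) (hg.mul (by fun_prop)) ?_ ?_
    · rw [interior_Icc]
      exact fun q hq => (hder q hq).differentiableAt.differentiableWithinAt
    · rw [interior_Icc]
      intro q hq
      rw [(hder q hq).deriv]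
      have h1 := hK q hq
      have h2 := Real.exp_pos (K * q)
      nlinarith
  have h := hmono (Set.left_mem_Icc.2 hcb.le) (Set.right_mem_Icc.2 hcb.le) hcb.le
  have h1 : 0 < g c * Real.exp (K * c) := mul_pos hc (Real.exp_pos _)
  exact (mul_pos_iff_of_pos_right (Real.exp_pos (K * b))).1 (h1.trans_le h)

/-- If `n' ≤ -k / (1 - q)` with `k > 0`, then `n - k log (1 - q)` is nonincreasing, so `n`
becomes nonpositive before `q = 1`. -/
theorem exists_nonpos_of_deriv_le {n n' : ℝ → ℝ} {c k : ℝ} (hc1 : c < 1) (hk : 0 < k)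
    (hn : ContinuousOn n (Set.Ico c 1))
    (hd : ∀ q ∈ Set.Ioo c 1, HasDerivAt n (n' q) q)
    (hle : ∀ q ∈ Set.Ioo c 1, n' q ≤ -(k / (1 - q))) (hc : 0 < n c) :
    ∃ q ∈ Set.Ioo c 1, n q ≤ 0 := by
  have hanti : AntitoneOn (fun q => n q - k * Real.log (1 - q)) (Set.Ico c 1) := by
    have hder : ∀ q ∈ Set.Ioo c 1, HasDerivAt (fun q => n q - k * Real.log (1 - q))
        (n' q - k * (-1 / (1 - q))) q := fun q hq =>
      (hd q hq).sub ((((hasDerivAt_id' q).const_sub 1).log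
        (by have := hq.2; linarith)).const_mul k)
    refine antitoneOn_of_deriv_nonpos (convex_Ico c 1) (hn.sub ?_) ?_ ?_
    · refine continuousOn_const.mul (ContinuousOn.log (by fun_prop) ?_)
      intro q hq
      have := hq.2
      linarith
    · rw [interior_Ico]
      exact fun q hq => (hder q hq).differentiableAt.differentiableWithinAt
    · rw [interior_Ico]
      intro q hq
      rw [(hder q hq).deriv]
      have h1 := hle q hq
      have h2 : k * (-1 / (1 - q)) = -(k / (1 - q)) := by ring
      linarith
  -- chosen so that `k * log (1 - q) = k * log (1 - c) - n c`
  set q := 1 - (1 - c) * Real.exp (-(n c / k)) with hq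
  have hE : Real.exp (-(n c / k)) < 1 := by
    rw [Real.exp_lt_one_iff]
    have := div_pos hc hk
    linarith
  have hE0 := Real.exp_pos (-(n c / k))
  have hcq : c < q := by nlinarith
  have hq1 : q < 1 := by nlinarith
  refine ⟨q, ⟨hcq, hq1⟩, ?_⟩
  have h := hanti ⟨le_rfl, hc1⟩ ⟨hcq.le, hq1⟩ hcq.le
  have hlog : Real.log (1 - q) = Real.log (1 - c) - n c / k := by
    rw [hq, sub_sub_cancel, Real.log_mul (by linarith) hE0.ne', Real.log_exp]
    ring
  simp only [hlog] at h
  have : k * (Real.log (1 - c) - n c / k) = k * Real.log (1 - c) - n c := by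
    field_simp
  linarith


/-- In Case 1AbIIii (R < 1, 0 < ε < min{δ²R, δ√(2R/(1−R))}) the first crossing point ζ(r)
of the solution of n' = O(q,n) started at (r, m(r)), r ∈ (0, q_M), with the curve m lies in
the open interval (q_M, 1): no solution stays between m and ℓ on all of (r,1), and any
return point b to the curve m satisfies b > q_M. -/
theorem crossing_point_location (R ε δ : ℝ)
    (hR0 : 0 < R) (hR1 : R < 1) (hδ : 0 < δ)
    (hε0 : 0 < ε) (hε1 : ε < δ ^ 2 * R) (hε2 : ε < δ * Real.sqrt (2 * R / (1 - R)))
    (m ℓ : ℝ → ℝ) (OO : ℝ → ℝ → ℝ)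
    (hm : ∀ q, m q = 1 - ε * (1 - R) * q + δ ^ 2 / 2 * R * (1 - R) * q ^ 2)
    (hℓ : ∀ q, ℓ q = m q + δ ^ 2 / 2 * (1 - R) * q * (1 - q))
    (hO : ∀ q v, OO q v = ((1 - R) / R) * (v / (1 - q)) * ((m q - v) / (ℓ q - v)))
    (qM : ℝ) (hqM : qM = ε / (δ ^ 2 * R))
    (r : ℝ) (hr0 : 0 < r) (hr1 : r < qM) :
    (¬ ∃ n : ℝ → ℝ, ContinuousOn n (Set.Ico r 1) ∧ n r = m r ∧
        (∀ q ∈ Set.Ioo r 1, HasDerivAt n (OO q (n q)) q) ∧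
        (∀ q ∈ Set.Ioo r 1, m q ≤ n q ∧ n q < ℓ q)) ∧
    (∀ b ∈ Set.Ioo r 1, ∀ n : ℝ → ℝ, ContinuousOn n (Set.Icc r b) → n r = m r →
        (∀ q ∈ Set.Ioo r b, HasDerivAt n (OO q (n q)) q) →
        (∀ q ∈ Set.Ioo r b, m q < n q ∧ n q < ℓ q) →
        n b = m b → qM < b) := by
  have hR1' : 0 < 1 - R := by linarith
  have hδR : 0 < δ ^ 2 * R := by positivity
  have hεq : ε = δ ^ 2 * R * qM := by rw [hqM]; field_simp
  have hqM0 : 0 < qM := hr0.trans hr1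
  have hqM1 : qM < 1 := by rw [hqM, div_lt_one hδR]; exact hε1
  have hεsq : ε ^ 2 * (1 - R) < 2 * δ ^ 2 * R := by
    have h1 : ε ^ 2 < (δ * Real.sqrt (2 * R / (1 - R))) ^ 2 := by
      have := Real.sqrt_nonneg (2 * R / (1 - R))
      gcongr
    rw [mul_pow, Real.sq_sqrt (by positivity), ← mul_div_assoc, lt_div_iff₀ hR1'] at h1
    linarith
  -- completing the square at the vertex `qM`
  have hmsq : ∀ q, m q = m qM + δ ^ 2 * R * (1 - R) / 2 * (q - qM) ^ 2 := by
    intro q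
    rw [hm, hm, hεq]
    ring
  have hmM : 0 < m qM := by
    have h1 : m qM = 1 - δ ^ 2 * R * (1 - R) / 2 * qM ^ 2 := by
      rw [hm, hεq]; ring
    have h2 : δ ^ 2 * R * qM ^ 2 * (1 - R) < 2 := by
      rw [hεq] at hεsq
      refine lt_of_mul_lt_mul_left ?_ hδR.le
      linarith
    linarith
  have hmpos : ∀ q, 0 < m q := by
    intro q
    rw [hmsq]
    positivity
  have hmc : Continuous m := by
    rw [funext hm]
    fun_prop
  have hℓc : Continuous ℓ := by
    rw [funext hℓ]
    fun_prop
  have hmd : ∀ q, HasDerivAt m (δ ^ 2 * R * (1 - R) * (q - qM)) q := by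
    intro q
    rw [funext hmsq]
    have h := ((((hasDerivAt_id' q).sub_const qM).pow 2).const_mul
      (δ ^ 2 * R * (1 - R) / 2)).const_add (m qM)
    refine h.congr_deriv ?_
    norm_num
    ring
  constructor
  · rintro ⟨n, hnc, -, hnd, hn⟩
    have hsub : ∀ q, q ∈ Set.Ioo qM 1 → q ∈ Set.Ioo r 1 := fun q hq => ⟨hr1.trans hq.1, hq.2⟩
    have hnc' : ContinuousOn n (Set.Ico qM 1) := hnc.mono (Set.Ico_subset_Ico_left hr1.le)
    have hOle : ∀ q ∈ Set.Ioo r 1, OO q (n q) ≤ 0 := by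
      intro q hq
      obtain ⟨h1, h2⟩ := hn q hq
      have h3 : 0 ≤ n q := (hmpos q).le.trans h1
      rw [hO]
      refine mul_nonpos_of_nonneg_of_nonpos ?_
        (div_nonpos_of_nonpos_of_nonneg (by linarith) (by linarith))
      exact mul_nonneg (by positivity) (div_nonneg h3 (by linarith [hq.2]))
    have hanti : AntitoneOn n (Set.Ico qM 1) := by
      refine antitoneOn_of_deriv_nonpos (convex_Ico qM 1) hnc' ?_ ?_
      · rw [interior_Ico]
        exact fun q hq => (hnd q (hsub q hq)).differentiableAt.differentiableWithinAt
      · rw [interior_Ico]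
        intro q hq
        rw [(hnd q (hsub q hq)).deriv]
        exact hOle q (hsub q hq)
    have hnm1 : ∀ q ∈ Set.Ioo qM 1, m 1 ≤ n q := by
      intro q hq
      refine le_of_tendsto (hmc.continuousWithinAt (s := Set.Iio 1) (x := 1)) ?_
      filter_upwards [Ioo_mem_nhdsLT hq.2] with s hs
      exact (hn s ⟨(hr1.trans hq.1).trans hs.1, hs.2⟩).1.trans
        (hanti ⟨hq.1.le, hq.2⟩ ⟨(hq.1.trans hs.1).le, hs.2⟩ hs.1.le)
    -- `a` bounds below the slope of the chords of `m` ending at `1`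
    set a := δ ^ 2 * R * (1 - R) * (1 - qM) / 2 with ha
    set c := δ ^ 2 / 2 * (1 - R) with hc
    have hapos : 0 < a := by
      have : 0 < 1 - qM := by linarith
      positivity
    have hcpos : 0 < c := by positivity
    have hk : 0 < (1 - R) / R * (m 1 * (a / c)) := by
      have := hmpos 1
      positivity
    obtain ⟨q, hq, hq0⟩ := exists_nonpos_of_deriv_le (n' := fun q => OO q (n q)) hqM1 hk hnc'
      (fun q hq => hnd q (hsub q hq)) (fun q hq => by
        obtain ⟨h1, h2⟩ := hn q (hsub q hq)
        have h3 := hnm1 q hq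
        have hq1 : 0 < 1 - q := by linarith [hq.2]
        have hchord : a * (1 - q) ≤ m 1 - m q := by
          have : m 1 - m q - a * (1 - q)
              = δ ^ 2 * R * (1 - R) / 2 * ((1 - q) * (q - qM)) := by
            rw [hmsq 1, hmsq q, ha]; ring
          have h4 : 0 < q - qM := by linarith [hq.1]
          have : 0 ≤ δ ^ 2 * R * (1 - R) / 2 * ((1 - q) * (q - qM)) := by positivity
          linarith
        have hgap : ℓ q - n q ≤ c * (1 - q) := by
          have h5 : ℓ q = m q + c * q * (1 - q) := hℓ q
          have h6 : 0 ≤ c * (1 - q) * (1 - q) := by positivity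
          nlinarith
        have hratio : a / c ≤ (n q - m q) / (ℓ q - n q) := by
          rw [div_le_div_iff₀ hcpos (by linarith)]
          calc a * (ℓ q - n q) ≤ a * (c * (1 - q)) := by gcongr
            _ = a * (1 - q) * c := by ring
            _ ≤ (n q - m q) * c := by gcongr; linarith
        have hprod : m 1 * (a / c) ≤ n q * ((n q - m q) / (ℓ q - n q)) :=
          mul_le_mul h3 hratio (by positivity) ((hmpos 1).le.trans h3)
        have hOO : OO q (n q)
            = -((1 - R) / R * (n q * ((n q - m q) / (ℓ q - n q))) / (1 - q)) := by
          rw [hO]; ring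
        show OO q (n q) ≤ _
        rw [hOO]
        gcongr)
      ((hmpos qM).trans_le (hn qM ⟨hr1, hqM1⟩).1)
    linarith [hnm1 q hq, hmpos 1]
  · intro b hb n hnc _ hnd hn hnb
    by_contra! hbM
    have hcr : r < (r + b) / 2 := by linarith [hb.1]
    have hcb : (r + b) / 2 < b := by linarith [hb.1]
    set c := (r + b) / 2 with hc
    have hnc' : ContinuousOn n (Set.Icc c b) := hnc.mono (Set.Icc_subset_Icc_left hcr.le)
    have hgap : ∀ q ∈ Set.Icc c b, 0 < ℓ q - n q := by
      intro q hq
      rcases hq.2.eq_or_lt with rfl | hlt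
      · have h1 : 0 < δ ^ 2 / 2 * (1 - R) * q * (1 - q) := by
          have : 0 < 1 - q := by linarith [hb.2]
          have : 0 < q := hr0.trans hb.1
          positivity
        rw [hnb, hℓ]
        linarith
      · linarith [(hn q ⟨hcr.trans_le hq.1, hlt⟩).2]
    have hKc : ContinuousOn (fun q => (1 - R) / R * (n q / (1 - q)) / (ℓ q - n q))
        (Set.Icc c b) := by
      refine ContinuousOn.div (continuousOn_const.mul (hnc'.div (by fun_prop) ?_))
        (hℓc.continuousOn.sub hnc') (fun q hq => (hgap q hq).ne')
      intro q hq
      have := hq.2.trans_lt hb.2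
      linarith
    obtain ⟨K, hK⟩ := isCompact_Icc.bddAbove_image hKc
    have hpos := pos_of_deriv_ge_neg_mul (g := fun q => n q - m q)
      (g' := fun q => OO q (n q) - δ ^ 2 * R * (1 - R) * (q - qM)) (K := K) hcb
      (hnc'.sub hmc.continuousOn)
      (fun q hq => (hnd q ⟨hcr.trans hq.1, hq.2⟩).sub (hmd q)) (fun q hq => by
        have h1 := hn q ⟨hcr.trans hq.1, hq.2⟩
        have h2 : (1 - R) / R * (n q / (1 - q)) / (ℓ q - n q) ≤ K :=
          hK ⟨q, ⟨hq.1.le, hq.2.le⟩, rfl⟩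
        have h3 : OO q (n q)
            = -((1 - R) / R * (n q / (1 - q)) / (ℓ q - n q) * (n q - m q)) := by
          rw [hO]; ring
        have h4 := mul_le_mul_of_nonneg_right h2 (sub_nonneg.2 h1.1.le)
        have h5 : 0 ≤ δ ^ 2 * R * (1 - R) * (qM - q) := by
          have : 0 ≤ qM - q := by linarith [hq.2]
          positivity
        show -K * (n q - m q) ≤ OO q (n q) - δ ^ 2 * R * (1 - R) * (q - qM)
        rw [h3]
        linarith)
      (sub_pos.2 (hn c ⟨hcr, hcb⟩).1)
    simp only [hnb, sub_self, lt_irrefl] at hpos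
end

section
/- Suppose R ∈ (0,1), δ > 0 and 0 < ε < δ²R, so that q_M = ε/(δ²R) ∈ (0,1). Let h > 0 and let n : [q_M, q_M + h) → ℝ be differentiable with n(q_M) = m_M, n'(q) = O(q, n(q)) and n(q) ≠ ℓ(q) for every q ∈ [q_M, q_M + h). Then there exists h' ∈ (0,h] such that n(q) < m(q) for every q ∈ (q_M, q_M + h'). In other words, the solution of n' = O(q,n) started at the vertex (q_M, m_M) of the quadratic m immediately falls strictly below m, i.e. ζ(q_M) = q_M. -/
/-!
Along a solution the right-hand side is `OO q (n q) = K q * (m q - n q)`, where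
`K q = (1 - R) / R * (n q / (1 - q)) / (ℓ q - n q)` is continuous to the right of `qM`. Hence the
gap `d = m - n` solves the linear equation `d' = m' - K d` with `d qM = 0`. Multiplying by the
integrating factor `exp (∫ K)` gives `(d * exp (∫ K))' = m' * exp (∫ K)`, which is positive to the
right of the vertex, so `d` is positive there. The sign of `K`, hence of `m qM`, plays no role.
-/

open Set in
/-- A solution of `d' = f - K d` starting from `0` is positive when `f` is; proved with the
integrating factor `exp (∫ K)`. -/
theorem pos_of_linear_ode {a b : ℝ} {d f K : ℝ → ℝ} (hab : a ≤ b)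
    (hK : ContinuousOn K (Icc a b)) (hd : ContinuousOn d (Icc a b)) (hda : d a = 0)
    (hd' : ∀ q ∈ Ioo a b, HasDerivAt d (f q - K q * d q) q)
    (hf : ∀ q ∈ Ioo a b, 0 < f q) : ∀ q ∈ Ioo a b, 0 < d q := by
  -- Extending `K` continuously to `ℝ` makes its primitive differentiable everywhere.
  set K' : ℝ → ℝ := IccExtend hab ((Icc a b).domRestrict K) with hK'
  have hK'c : Continuous K' := (continuousOn_iff_continuous_domRestrict.1 hK).Icc_extend'
  have hE : ∀ q, HasDerivAt (fun q => Real.exp (∫ x in a..q, K' x))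
      (Real.exp (∫ x in a..q, K' x) * K' q) q := fun q =>
    (hK'c.integral_hasStrictDerivAt a q).hasDerivAt.exp
  have hmono : StrictMonoOn (fun q => d q * Real.exp (∫ x in a..q, K' x)) (Icc a b) := by
    apply strictMonoOn_of_deriv_pos (convex_Icc a b)
    · exact hd.mul fun q _ => (hE q).continuousAt.continuousWithinAt
    · intro q hq
      rw [interior_Icc] at hq
      have hKq : K' q = K q := IccExtend_of_mem hab _ (Ioo_subset_Icc_self hq)
      have hprod := ((hd' q hq).mul (hE q)).deriv
      have hpos := mul_pos (hf q hq) (Real.exp_pos (∫ x in a..q, K' x))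
      rw [hKq] at hprod
      refine lt_of_lt_of_eq hpos (Eq.trans ?_ hprod.symm)
      ring
  intro q hq
  have hlt := hmono (left_mem_Icc.2 hab) (Ioo_subset_Icc_self hq) hq.1
  simp only [hda, zero_mul] at hlt
  exact pos_of_mul_pos_left hlt (Real.exp_pos _).le

/-- The solution of n' = O(q,n) started at the vertex (q_M, m_M) of the quadratic m
immediately falls strictly below m, i.e. ζ(q_M) = q_M. -/
theorem solution_from_vertex_falls_below (R ε δ : ℝ)
    (hR0 : 0 < R) (hR1 : R < 1) (hδ : 0 < δ)
    (hε0 : 0 < ε) (hε1 : ε < δ ^ 2 * R)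
    (m ℓ : ℝ → ℝ) (OO : ℝ → ℝ → ℝ)
    (hm : ∀ q, m q = 1 - ε * (1 - R) * q + δ ^ 2 / 2 * R * (1 - R) * q ^ 2)
    (hℓ : ∀ q, ℓ q = m q + δ ^ 2 / 2 * (1 - R) * q * (1 - q))
    (hO : ∀ q v, OO q v = ((1 - R) / R) * (v / (1 - q)) * ((m q - v) / (ℓ q - v)))
    (qM mM : ℝ) (hqM : qM = ε / (δ ^ 2 * R)) (hmM : mM = m qM)
    (h : ℝ) (hh : 0 < h)
    (n : ℝ → ℝ) (hn0 : n qM = mM)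
    (hderiv : ∀ q ∈ Set.Ico qM (qM + h),
      HasDerivWithinAt n (OO q (n q)) (Set.Ico qM (qM + h)) q)
    (hne : ∀ q ∈ Set.Ico qM (qM + h), n q ≠ ℓ q) :
    ∃ h' ∈ Set.Ioc (0:ℝ) h, ∀ q ∈ Set.Ioo qM (qM + h'), n q < m q := by
  have hqM1 : qM < 1 := by
    rw [hqM, div_lt_one (by positivity)]
    exact hε1
  have hεq : ε = δ ^ 2 * R * qM := by
    rw [hqM]
    field_simp
  have hmin : 0 < min h (1 - qM) := lt_min hh (by linarith)
  have hle1 := min_le_left h (1 - qM)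
  have hle2 := min_le_right h (1 - qM)
  -- The interval is kept inside `[qM, qM + h)` and away from the singularity `q = 1`.
  refine ⟨min h (1 - qM) / 2, ⟨by linarith, by linarith⟩, ?_⟩
  set b := qM + min h (1 - qM) / 2 with hb
  have hsub : Set.Icc qM b ⊆ Set.Ico qM (qM + h) := fun q hq => ⟨hq.1, by linarith [hq.2]⟩
  have hmd : ∀ q, HasDerivAt m (δ ^ 2 * R * (1 - R) * (q - qM)) q := by
    intro q
    have h1 := (((hasDerivAt_id q).const_mul (ε * (1 - R))).const_sub 1).add
      (((hasDerivAt_id q).pow 2).const_mul (δ ^ 2 / 2 * R * (1 - R)))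
    refine (h1.congr_of_eventuallyEq (Filter.Eventually.of_forall fun x => ?_)).congr_deriv ?_
    · simp [hm]
    · simp only [hεq, id]
      push_cast
      ring
  have hmc : Continuous m := continuous_iff_continuousAt.2 fun q => (hmd q).continuousAt
  have hℓc : Continuous ℓ := by
    rw [funext hℓ]
    fun_prop
  have hnc : ContinuousOn n (Set.Icc qM b) := fun q hq =>
    (hderiv q (hsub hq)).continuousWithinAt.mono hsub
  have key := pos_of_linear_ode (a := qM) (b := b) (d := fun q => m q - n q)
    (f := fun q => δ ^ 2 * R * (1 - R) * (q - qM))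
    (K := fun q => (1 - R) / R * (n q / (1 - q)) / (ℓ q - n q)) (by linarith)
    (by
      refine (continuousOn_const.mul (hnc.div (by fun_prop) fun q hq => ?_)).div
        (hℓc.continuousOn.sub hnc) fun q hq => sub_ne_zero.2 (hne q (hsub hq)).symm
      have := hq.2
      exact ne_of_gt (by linarith))
    (hmc.continuousOn.sub hnc) (by simp [hn0, hmM])
    (fun q hq => by
      have hn' := (hderiv q (hsub (Set.Ioo_subset_Icc_self hq))).hasDerivAt
        (Ico_mem_nhds hq.1 (by linarith [hq.2]))
      refine ((hmd q).sub hn').congr_deriv ?_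
      rw [hO]
      ring)
    (fun q hq => by
      have h1 : 0 < 1 - R := by linarith
      have h2 : 0 < q - qM := by linarith [hq.1]
      positivity)
  exact fun q hq => sub_pos.1 (key q hq)
end

section
/- Suppose R ∈ (0,1), δ > 0 and 0 < ε < min{δ²R, δ·√(2R/(1−R))}. Then for every M > 0 there exists r₀ ∈ (0, q_M) such that: for every r ∈ (0, r₀), every b ∈ (r, 1), and every continuous function n : [r,b] → ℝ with n(r) = m(r), n(b) = m(b), differentiable on (r,b) with n'(q) = O(q, n(q)) and m(q) < n(q) < ℓ(q) for all q ∈ (r,b), one has ∫_r^b (1/(q(1−q)))·((n(q) − m(q))/(ℓ(q) − n(q))) dq ≥ M. In other words, Λ(r) → ∞ as r ↓ 0, where Λ(r) is this integral evaluated along the solution started at (r, m(r)) up to its first return to the curve m. -/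
/-!
Put `h = n - m` and `g = (n - m) / (ℓ - n)`. The equation reads
`h' = -((1 - R) / R) * n / (1 - q) * g - m'`. With `κ = δ² (1 - R) / 2`, on `(0, q_M / 2]` one has
`-m' ≥ c := ε (1 - R) / 2` and `n / (1 - q) ≤ 2 (1 + κ)`, so `h' ≥ c - K g` there, with
`K = 2 (1 - R) / R * (1 + κ)`. Two consequences:

* the solution cannot return to `m` before `q_M / 2`, because at a return point `g = 0`, hence
  `h' > 0` just before it (`return_after`);
* since `0 < ℓ - n ≤ ℓ - m ≤ κ q`, we have `h ≤ κ q g`, so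
  `(h / q)' = h' / q - h / q² ≥ c / q - (K + κ) g / q`. Integrating over `[r, q_M / 2]`, with
  `h r = 0` and `h / q ≤ κ`, gives `(K + κ) ∫ g / q ≥ c log (q_M / (2 r)) - κ`
  (`log_lower_bound`), which tends to infinity as `r ↓ 0`.
-/

open intervalIntegral Set

/-- If `h > 0` on `(r, b)`, `h b = 0`, and `h' ≥ c - K g` at the points `q ≤ a` of `(r, b)`,
where `c > 0` and `g` is continuous with `g b = 0`, then `b` lies beyond `a`. -/
lemma return_after {h h' g : ℝ → ℝ} {r b a c K : ℝ} (hrb : r < b) (hc : 0 < c)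
    (hcont : ContinuousOn h (Icc r b)) (gcont : ContinuousOn g (Icc r b))
    (hb : h b = 0) (gb : g b = 0)
    (hd : ∀ q ∈ Ioo r b, HasDerivAt h (h' q) q)
    (hlow : ∀ q ∈ Ioo r b, q ≤ a → c - K * g q ≤ h' q)
    (hpos : ∀ q ∈ Ioo r b, 0 < h q) : a < b := by
  by_contra! hba
  have hcw : ContinuousWithinAt (fun q => c - K * g q) (Icc r b) b :=
    (continuousOn_const.sub (continuousOn_const.mul gcont)) b ⟨hrb.le, le_rfl⟩
  have hev : ∀ᶠ q in nhdsWithin b (Icc r b), 0 < c - K * g q :=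
    hcw.eventually (lt_mem_nhds (by simpa [gb] using hc))
  have hev2 : ∀ᶠ q in nhdsWithin b (Iio b), q ∈ Icc r b → 0 < c - K * g q :=
    (eventually_nhdsWithin_iff.1 hev).filter_mono nhdsWithin_le_nhds
  obtain ⟨s, hs, hsub⟩ := (mem_nhdsLT_iff_exists_Ioo_subset' hrb).1 hev2
  -- a point strictly inside `(r, b)` such that `h' > 0` on its right, up to `b`
  set u := (max s r + b) / 2 with hu
  have hmax : max s r < b := max_lt hs hrb
  have hus : max s r < u := by rw [hu]; linarith
  have hub : u < b := by rw [hu]; linarith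
  have hsu : s < u := (le_max_left _ _).trans_lt hus
  have hru : r < u := (le_max_right _ _).trans_lt hus
  have hmono : StrictMonoOn h (Icc u b) := by
    refine strictMonoOn_of_deriv_pos (convex_Icc _ _)
      (hcont.mono (Icc_subset_Icc_left hru.le)) fun q hq => ?_
    rw [interior_Icc] at hq
    have hq' : q ∈ Ioo r b := ⟨hru.trans hq.1, hq.2⟩
    rw [(hd q hq').deriv]
    have h1 : 0 < c - K * g q := hsub ⟨hsu.trans hq.1, hq.2⟩ ⟨hq'.1.le, hq'.2.le⟩
    linarith [hlow q hq' (hq.2.le.trans hba)]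
  have h2 := hmono ⟨le_rfl, hub.le⟩ ⟨hub.le, le_rfl⟩ hub
  linarith [hpos u ⟨hru, hub⟩]

/-- The logarithmic lower bound, from `(h / q)' ≥ c / q - (K + κ) g / q`. The integrand `f` is only
assumed to dominate `g / q`. -/
lemma log_lower_bound {h h' g f : ℝ → ℝ} {r a c K κ : ℝ} (hr : 0 < r) (hra : r < a)
    (hK : 0 ≤ K) (hκ : 0 ≤ κ)
    (hcont : ContinuousOn h (Icc r a)) (fcont : ContinuousOn f (Icc r a))
    (h0 : h r = 0) (ha : h a ≤ κ * a)
    (hd : ∀ q ∈ Ioo r a, HasDerivAt h (h' q) q)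
    (hlow : ∀ q ∈ Ioo r a, c - K * g q ≤ h' q)
    (hg : ∀ q ∈ Ioo r a, h q ≤ κ * q * g q)
    (hf : ∀ q ∈ Ioo r a, g q / q ≤ f q) :
    c * Real.log (a / r) - κ ≤ (K + κ) * ∫ q in r..a, f q := by
  have hne : ∀ q ∈ Icc r a, q ≠ 0 := fun q hq => (hr.trans_le hq.1).ne'
  have key := intervalIntegral.sub_le_integral_of_hasDeriv_right_of_le
    (g := fun q => c * Real.log q - h q / q)
    (g' := fun q => c * q⁻¹ - (h' q * q - h q * 1) / q ^ 2)
    (φ := fun q => (K + κ) * f q) hra.le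
    ((continuousOn_const.mul (Real.continuousOn_log.mono hne)).sub
      (hcont.div continuousOn_id hne))
    (fun q hq => (((Real.hasDerivAt_log (hr.trans hq.1).ne').const_mul c).sub
      ((hd q hq).div (hasDerivAt_id q) (hr.trans hq.1).ne')).hasDerivWithinAt)
    ((continuousOn_const.mul fcont).integrableOn_Icc)
    (fun q hq => by
      have hq0 : 0 < q := hr.trans hq.1
      have h1 : (K + κ) * (g q / q) ≤ (K + κ) * f q :=
        mul_le_mul_of_nonneg_left (hf q hq) (by linarith)
      refine le_trans ?_ h1
      have h2 : (K + κ) * (g q / q) - (c * q⁻¹ - (h' q * q - h q * 1) / q ^ 2)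
          = ((h' q - (c - K * g q)) * q + (κ * q * g q - h q)) / q ^ 2 := by
        field_simp
        ring
      have h3 : 0 ≤ ((h' q - (c - K * g q)) * q + (κ * q * g q - h q)) / q ^ 2 := by
        have := mul_nonneg (sub_nonneg.2 (hlow q hq)) hq0.le
        have := hg q hq
        apply div_nonneg _ (sq_nonneg q)
        linarith
      linarith)
  rw [intervalIntegral.integral_const_mul] at key
  have h4 : h a / a ≤ κ := (div_le_iff₀ (hr.trans hra)).2 ha
  rw [Real.log_div (hr.trans hra).ne' hr.ne']
  simp only [h0, zero_div] at key
  linarith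

/-- Λ(r) → ∞ as r ↓ 0: for every M there is r₀ ∈ (0, q_M) such that for every starting
point r < r₀ and every solution of n' = O(q,n) joining (r, m(r)) to (b, m(b)) between the
curves m and ℓ, the integral ∫_r^b (1/(q(1−q)))·(n−m)/(ℓ−n) dq is at least M. -/
theorem Lambda_diverges_at_zero (R ε δ : ℝ)
    (hR0 : 0 < R) (hR1 : R < 1) (hδ : 0 < δ)
    (hε0 : 0 < ε) (hε1 : ε < δ ^ 2 * R) (hε2 : ε < δ * Real.sqrt (2 * R / (1 - R)))
    (m ℓ : ℝ → ℝ) (OO : ℝ → ℝ → ℝ)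
    (hm : ∀ q, m q = 1 - ε * (1 - R) * q + δ ^ 2 / 2 * R * (1 - R) * q ^ 2)
    (hℓ : ∀ q, ℓ q = m q + δ ^ 2 / 2 * (1 - R) * q * (1 - q))
    (hO : ∀ q v, OO q v = ((1 - R) / R) * (v / (1 - q)) * ((m q - v) / (ℓ q - v)))
    (qM : ℝ) (hqM : qM = ε / (δ ^ 2 * R)) :
    ∀ M : ℝ, 0 < M → ∃ r₀ ∈ Set.Ioo (0:ℝ) qM,
      ∀ r ∈ Set.Ioo (0:ℝ) r₀, ∀ b ∈ Set.Ioo r 1,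
      ∀ n : ℝ → ℝ, ContinuousOn n (Set.Icc r b) → n r = m r → n b = m b →
        (∀ q ∈ Set.Ioo r b, HasDerivAt n (OO q (n q)) q) →
        (∀ q ∈ Set.Ioo r b, m q < n q ∧ n q < ℓ q) →
        M ≤ ∫ q in r..b, (1 / (q * (1 - q))) * ((n q - m q) / (ℓ q - n q)) := by
  intro M hM
  have h1R : 0 < 1 - R := by linarith
  obtain ⟨κ, hκ⟩ : ∃ κ, κ = δ ^ 2 / 2 * (1 - R) := ⟨_, rfl⟩
  have hκ0 : 0 < κ := by rw [hκ]; positivity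
  obtain ⟨K, hK⟩ : ∃ K, K = (1 - R) / R * (2 * (1 + κ)) := ⟨_, rfl⟩
  have hK0 : 0 < K := by rw [hK]; positivity
  obtain ⟨c, hc⟩ : ∃ c, c = ε * (1 - R) / 2 := ⟨_, rfl⟩
  have hc0 : 0 < c := by rw [hc]; positivity
  have hqM0 : 0 < qM := by rw [hqM]; positivity
  have hqM1 : qM < 1 := by rw [hqM, div_lt_one (by positivity)]; exact hε1
  have hεq : δ ^ 2 * R * qM = ε := by rw [hqM]; field_simp
  -- `r₀` is the point where the bound `c log (q_M / (2 r)) - κ` equals `(K + κ) M`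
  have hexp : Real.exp (-(((K + κ) * M + κ) / c)) < 1 := by
    rw [Real.exp_lt_one_iff]
    have : 0 < ((K + κ) * M + κ) / c := by positivity
    linarith
  refine ⟨qM / 2 * Real.exp (-(((K + κ) * M + κ) / c)), ⟨by positivity, by nlinarith⟩, ?_⟩
  rintro r ⟨hr0, hr⟩ b ⟨hrb, hb1⟩ n ncont nr nb nd nbd
  have hra : r < qM / 2 := by nlinarith
  have hmd : ∀ q, HasDerivAt m (-(ε * (1 - R)) + δ ^ 2 * R * (1 - R) * q) q := by
    intro q
    rw [show m = fun q => 1 - ε * (1 - R) * q + δ ^ 2 / 2 * R * (1 - R) * q ^ 2 from funext hm]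
    have := (((hasDerivAt_id q).const_mul (ε * (1 - R))).const_sub 1).add
      ((hasDerivAt_pow 2 q).const_mul (δ ^ 2 / 2 * R * (1 - R)))
    refine this.congr_deriv ?_
    push_cast
    ring
  have mcont : Continuous m := continuous_iff_continuousAt.2 fun q => (hmd q).continuousAt
  have hℓm : ∀ q, ℓ q = m q + κ * q * (1 - q) := fun q => by rw [hℓ, hκ]
  have ℓcont : Continuous ℓ := by
    rw [show ℓ = fun q => m q + κ * q * (1 - q) from funext hℓm]
    fun_prop
  have hpos : ∀ q ∈ Icc r b, 0 < ℓ q - n q := by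
    intro q hq
    have hq0 : 0 < q := hr0.trans_le hq.1
    have hq1 : 0 < 1 - q := by linarith [hq.2]
    rcases eq_or_lt_of_le hq.1 with h | h
    · rw [← h, nr, hℓm, h]
      have : 0 < κ * q * (1 - q) := by positivity
      linarith
    rcases eq_or_lt_of_le hq.2 with h' | h'
    · rw [h', nb, hℓm, ← h']
      have : 0 < κ * q * (1 - q) := by positivity
      linarith
    linarith [(nbd q ⟨h, h'⟩).2]
  have hnm : ∀ q ∈ Icc r b, 0 ≤ n q - m q := by
    intro q hq
    rcases eq_or_lt_of_le hq.1 with h | h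
    · rw [← h, nr, sub_self]
    rcases eq_or_lt_of_le hq.2 with h' | h'
    · rw [h', nb, sub_self]
    linarith [(nbd q ⟨h, h'⟩).1]
  have hcont : ContinuousOn (fun q => n q - m q) (Icc r b) := ncont.sub mcont.continuousOn
  have gcont : ContinuousOn (fun q => (n q - m q) / (ℓ q - n q)) (Icc r b) :=
    hcont.div (ℓcont.continuousOn.sub ncont) fun q hq => (hpos q hq).ne'
  have g0 : ∀ q ∈ Icc r b, 0 ≤ (n q - m q) / (ℓ q - n q) := fun q hq =>
    div_nonneg (hnm q hq) (hpos q hq).le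
  have fcont : ContinuousOn
      (fun q => (1 / (q * (1 - q))) * ((n q - m q) / (ℓ q - n q))) (Icc r b) := by
    refine ContinuousOn.mul (continuousOn_const.div (by fun_prop) fun q hq => ?_) gcont
    have hq0 : 0 < q := hr0.trans_le hq.1
    have hq1 : 0 < 1 - q := by linarith [hq.2]
    positivity
  have hd : ∀ q ∈ Ioo r b, HasDerivAt (fun q => n q - m q)
      (OO q (n q) - (-(ε * (1 - R)) + δ ^ 2 * R * (1 - R) * q)) q :=
    fun q hq => (nd q hq).sub (hmd q)
  have hlow : ∀ q ∈ Ioo r b, q ≤ qM / 2 →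
      c - K * ((n q - m q) / (ℓ q - n q))
        ≤ OO q (n q) - (-(ε * (1 - R)) + δ ^ 2 * R * (1 - R) * q) := by
    intro q hq hqa
    have hq0 : 0 < q := hr0.trans hq.1
    have hg := g0 q (Ioo_subset_Icc_self hq)
    have hm' : c ≤ ε * (1 - R) - δ ^ 2 * R * (1 - R) * q := by
      have : δ ^ 2 * R * (1 - R) * q ≤ δ ^ 2 * R * (1 - R) * (qM / 2) :=
        mul_le_mul_of_nonneg_left hqa (by positivity)
      rw [hc]
      nlinarith
    have hm1 : m q ≤ 1 := by
      rw [hm, ← hεq]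
      have : 0 ≤ δ ^ 2 * R * (1 - R) * q * (qM - q / 2) :=
        mul_nonneg (by positivity) (by linarith)
      linarith
    have hn1 : n q ≤ 1 + κ := by
      have h1 := (nbd q hq).2
      rw [hℓm] at h1
      have : κ * q * (1 - q) ≤ κ := by nlinarith [mul_nonneg hκ0.le (sq_nonneg (q - 1 / 2))]
      linarith
    have hn2 : n q / (1 - q) ≤ 2 * (1 + κ) := by
      rw [div_le_iff₀ (by linarith)]
      nlinarith
    have hO' : OO q (n q) = -((1 - R) / R * (n q / (1 - q)) * ((n q - m q) / (ℓ q - n q))) := by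
      rw [hO, ← neg_sub (n q) (m q), neg_div]
      ring
    have : (1 - R) / R * (n q / (1 - q)) * ((n q - m q) / (ℓ q - n q))
        ≤ K * ((n q - m q) / (ℓ q - n q)) := by
      rw [hK]
      exact mul_le_mul_of_nonneg_right
        (mul_le_mul_of_nonneg_left hn2 (by positivity)) hg
    rw [hO']
    linarith
  have hab : qM / 2 < b := return_after hrb hc0 hcont gcont (by simp [nb]) (by simp [nb]) hd hlow
    fun q hq => sub_pos.2 (nbd q hq).1
  have hsub : Icc r (qM / 2) ⊆ Icc r b := Icc_subset_Icc_right hab.le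
  have hsub' : Ioo r (qM / 2) ⊆ Ioo r b := Ioo_subset_Ioo_right hab.le
  have hκq : ∀ q ∈ Ioo r b, κ * q * (1 - q) ≤ κ * q := fun q hq => by
    have : 0 < κ * q * q := by have := hr0.trans hq.1; positivity
    linarith
  have key := log_lower_bound (f := fun q => (1 / (q * (1 - q))) * ((n q - m q) / (ℓ q - n q)))
    hr0 hra hK0.le hκ0.le (hcont.mono hsub) (fcont.mono hsub) (by simp [nr])
    (by
      have h1 := (nbd _ ⟨hra, hab⟩).2
      rw [hℓm] at h1
      linarith [hκq _ ⟨hra, hab⟩])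
    (fun q hq => hd q (hsub' hq)) (fun q hq => hlow q (hsub' hq) hq.2.le)
    (fun q hq => by
      have hq' := hsub' hq
      have hl := hpos q (Ioo_subset_Icc_self hq')
      have hle : ℓ q - n q ≤ κ * q := by
        rw [hℓm]
        linarith [hκq q hq', (nbd q hq').1]
      have := mul_le_mul_of_nonneg_right hle (g0 q (Ioo_subset_Icc_self hq'))
      rwa [mul_div_cancel₀ _ hl.ne'] at this)
    (fun q hq => by
      have hq0 : 0 < q := hr0.trans hq.1
      have hq1 : 0 < 1 - q := by linarith [hq.2]
      rw [div_eq_mul_one_div, mul_comm]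
      refine mul_le_mul_of_nonneg_right (one_div_le_one_div_of_le (by positivity) ?_)
        (g0 q (Ioo_subset_Icc_self (hsub' hq)))
      nlinarith)
  have hmono : (∫ q in r..(qM / 2), (1 / (q * (1 - q))) * ((n q - m q) / (ℓ q - n q)))
      ≤ ∫ q in r..b, (1 / (q * (1 - q))) * ((n q - m q) / (ℓ q - n q)) := by
    refine intervalIntegral.integral_mono_interval le_rfl hra.le hab.le ?_
      (fcont.intervalIntegrable_of_Icc hrb.le)
    filter_upwards [MeasureTheory.ae_restrict_mem measurableSet_Ioc] with q hq
    have hq0 : 0 < q := hr0.trans hq.1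
    have hq1 : 0 < 1 - q := by linarith [hq.2]
    exact mul_nonneg (by positivity) (g0 q (Ioc_subset_Icc_self hq))
  refine le_trans ?_ hmono
  have hlog : ((K + κ) * M + κ) / c ≤ Real.log (qM / 2 / r) := by
    rw [Real.le_log_iff_exp_le (by positivity), le_div_iff₀ hr0]
    have := mul_lt_mul_of_pos_left hr (Real.exp_pos (((K + κ) * M + κ) / c))
    rw [mul_left_comm, ← Real.exp_add, add_neg_cancel, Real.exp_zero, mul_one] at this
    exact this.le
  rw [div_le_iff₀ hc0] at hlog
  refine le_of_mul_le_mul_left ?_ (by positivity : 0 < K + κ)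
  linarith
end

section
/- Fix real parameters R ∈ (0,∞) with R ≠ 1, ε ∈ ℝ and δ > 0. Let 0 < r₁ < r₂ < b < 1. Suppose n₁ : [r₁,b] → ℝ and n₂ : [r₂,b] → ℝ are continuous, with n₁(r₁) = m(r₁), n₂(r₂) = m(r₂), n₁ differentiable on (r₁,b] with n₁'(q) = O(q, n₁(q)) and (1−R)·m(q) < (1−R)·n₁(q) < (1−R)·ℓ(q) for q ∈ (r₁,b], and n₂ differentiable on (r₂,b] with n₂'(q) = O(q, n₂(q)) and (1−R)·m(q) < (1−R)·n₂(q) < (1−R)·ℓ(q) for q ∈ (r₂,b]. Then (1−R)·n₁(q) > (1−R)·n₂(q) for every q ∈ [r₂, b]. In other words, solutions of n' = O(q,n) started on the curve m at different starting points cannot cross, and n_r(q) is monotone in the starting point r. -/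
/-!
The map `v ↦ O(q, v)` is rational, and its difference quotient has a closed form in which
`n₁ - n₂` cancels:
`O(q, x) - O(q, y) = (x - y) · (1 - R) / (R (1 - q)) · (m ℓ - ℓ (x + y) + x y) / ((ℓ - x) (ℓ - y))`.
Hence `D = (1 - R) (n₁ - n₂)` solves a linear equation `D' = G D` on `(r₂, b]`. The coefficient `G`
is continuous on all of `[r₂, b]`: at the starting point `r₂`, where `n₂` meets `m`, one still has
`ℓ ≠ m`. A solution of a linear equation with bounded coefficient cannot reach zero from a positive
initial value (`pos_of_linear_ode`), and `D r₂ > 0` because `n₁` has already left the curve `m`.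
-/

/-- A solution of a scalar linear equation `D' = G D` with continuous coefficient stays positive if
it starts positive. The equation is only needed in the open interval. -/
theorem pos_of_linear_ode_s12 {a b : ℝ} {D G : ℝ → ℝ}
    (hD : ContinuousOn D (Set.Icc a b)) (hG : ContinuousOn G (Set.Icc a b))
    (hd : ∀ q ∈ Set.Ioo a b, HasDerivAt D (G q * D q) q) (ha : 0 < D a) :
    ∀ q ∈ Set.Icc a b, 0 < D q := by
  intro q hq
  obtain ⟨K, hK⟩ := isCompact_Icc.exists_bound_of_continuousOn hG
  -- The derivative of `D² exp(2 K x)` is `2 (G + K) D² exp(2 K x)`, which is nonnegative as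
  -- `|G| ≤ K`. So `D²` cannot vanish.
  have hmono : MonotoneOn (fun x => D x ^ 2 * Real.exp (2 * K * x)) (Set.Icc a b) := by
    have hder : ∀ x ∈ interior (Set.Icc a b),
        HasDerivAt (fun x => D x ^ 2 * Real.exp (2 * K * x))
          (2 * (G x + K) * (D x ^ 2 * Real.exp (2 * K * x))) x := by
      intro x hx
      rw [interior_Icc] at hx
      have h1 := (hd x hx).pow 2
      have h2 := ((hasDerivAt_id x).const_mul (2 * K)).exp
      refine (h1.mul h2).congr_deriv ?_
      simp only [Pi.pow_apply, id_eq, Nat.cast_ofNat]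
      ring
    refine monotoneOn_of_hasDerivWithinAt_nonneg (convex_Icc a b) (by fun_prop)
      (fun x hx => (hder x hx).hasDerivWithinAt) ?_
    intro x hx
    have := abs_le.mp (hK x (interior_subset hx))
    have h0 : 0 ≤ G x + K := by linarith [this.1]
    positivity
  have hne : ∀ x ∈ Set.Icc a b, D x ≠ 0 := by
    intro x hx h0
    have h := hmono (Set.left_mem_Icc.mpr (hx.1.trans hx.2)) hx hx.1
    have hp : 0 < D a ^ 2 * Real.exp (2 * K * a) := by positivity
    simp only [h0] at h
    linarith
  by_contra! hle
  obtain ⟨x, hx, hx0⟩ := intermediate_value_Icc' hq.1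
    (hD.mono (Set.Icc_subset_Icc_right hq.2)) ⟨hle, ha.le⟩
  exact hne x ⟨hx.1, hx.2.trans hq.2⟩ hx0


/-- Solutions of n' = O(q,n) started on the curve m at different starting points cannot
cross: if r₁ < r₂ then (1−R)·n_{r₁} > (1−R)·n_{r₂} wherever both are defined past r₂. -/
theorem solutions_do_not_cross (R ε δ : ℝ)
    (hR0 : 0 < R) (hR1 : R ≠ 1) (hδ : 0 < δ)
    (m ℓ : ℝ → ℝ) (OO : ℝ → ℝ → ℝ)
    (hm : ∀ q, m q = 1 - ε * (1 - R) * q + δ ^ 2 / 2 * R * (1 - R) * q ^ 2)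
    (hℓ : ∀ q, ℓ q = m q + δ ^ 2 / 2 * (1 - R) * q * (1 - q))
    (hO : ∀ q v, OO q v = ((1 - R) / R) * (v / (1 - q)) * ((m q - v) / (ℓ q - v)))
    (r₁ r₂ b : ℝ) (h1 : 0 < r₁) (h2 : r₁ < r₂) (h3 : r₂ < b) (h4 : b < 1)
    (n₁ n₂ : ℝ → ℝ)
    (hc1 : ContinuousOn n₁ (Set.Icc r₁ b)) (hn1 : n₁ r₁ = m r₁)
    (hd1 : ∀ q ∈ Set.Ioc r₁ b, HasDerivWithinAt n₁ (OO q (n₁ q)) (Set.Icc r₁ b) q)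
    (hb1 : ∀ q ∈ Set.Ioc r₁ b, (1 - R) * m q < (1 - R) * n₁ q ∧ (1 - R) * n₁ q < (1 - R) * ℓ q)
    (hc2 : ContinuousOn n₂ (Set.Icc r₂ b)) (hn2 : n₂ r₂ = m r₂)
    (hd2 : ∀ q ∈ Set.Ioc r₂ b, HasDerivWithinAt n₂ (OO q (n₂ q)) (Set.Icc r₂ b) q)
    (hb2 : ∀ q ∈ Set.Ioc r₂ b, (1 - R) * m q < (1 - R) * n₂ q ∧ (1 - R) * n₂ q < (1 - R) * ℓ q) :
    ∀ q ∈ Set.Icc r₂ b, (1 - R) * n₂ q < (1 - R) * n₁ q := by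
  have hR : (1 - R) ≠ 0 := sub_ne_zero.mpr hR1.symm
  have hne1 : ∀ q ∈ Set.Icc r₂ b, ℓ q - n₁ q ≠ 0 := by
    intro q hq h
    have h' := (hb1 q ⟨h2.trans_le hq.1, hq.2⟩).2
    rw [sub_eq_zero.mp h] at h'
    exact lt_irrefl _ h'
  have hne2 : ∀ q ∈ Set.Icc r₂ b, ℓ q - n₂ q ≠ 0 := by
    intro q hq h
    rcases hq.1.eq_or_lt with rfl | hlt
    · -- At the starting point, `ℓ - n₂ = ℓ - m = (δ² / 2) (1 - R) r₂ (1 - r₂)`.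
      rw [hn2, hℓ, add_sub_cancel_left] at h
      have hr : r₂ ≠ 0 := (h1.trans h2).ne'
      have hr' : 1 - r₂ ≠ 0 := by linarith
      have : δ ^ 2 / 2 * (1 - R) * r₂ * (1 - r₂) ≠ 0 := by positivity
      exact this h
    · have h' := (hb2 q ⟨hlt, hq.2⟩).2
      rw [sub_eq_zero.mp h] at h'
      exact lt_irrefl _ h'
  have hq1 : ∀ q ∈ Set.Icc r₂ b, 1 - q ≠ 0 := fun q hq => by linarith [hq.2]
  have hmc : Continuous m := by
    rw [funext hm]
    fun_prop
  have hℓc : Continuous ℓ := by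
    rw [funext hℓ]
    fun_prop
  have hmc' := hmc.continuousOn (s := Set.Icc r₂ b)
  have hℓc' := hℓc.continuousOn (s := Set.Icc r₂ b)
  have hc1' : ContinuousOn n₁ (Set.Icc r₂ b) := hc1.mono (Set.Icc_subset_Icc_left h2.le)
  have hpos := pos_of_linear_ode_s12 (a := r₂) (b := b) (D := fun q => (1 - R) * (n₁ q - n₂ q))
    (G := fun q => (1 - R) / (R * (1 - q)) *
      ((m q * ℓ q - ℓ q * (n₁ q + n₂ q) + n₁ q * n₂ q) / ((ℓ q - n₁ q) * (ℓ q - n₂ q))))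
    (by fun_prop) ?_ ?_ ?_
  · intro q hq
    have := hpos q hq
    linarith
  · refine ContinuousOn.mul (ContinuousOn.div (by fun_prop) (by fun_prop) ?_)
      (ContinuousOn.div (by fun_prop) (by fun_prop) ?_)
    · exact fun q hq => mul_ne_zero hR0.ne' (hq1 q hq)
    · exact fun q hq => mul_ne_zero (hne1 q hq) (hne2 q hq)
  · intro q hq
    have hq' := Set.Ioo_subset_Icc_self hq
    have e1 := (hd1 q ⟨h2.trans hq.1, hq.2.le⟩).hasDerivAt (Icc_mem_nhds (h2.trans hq.1) hq.2)
    have e2 := (hd2 q ⟨hq.1, hq.2.le⟩).hasDerivAt (Icc_mem_nhds hq.1 hq.2)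
    refine ((e1.sub e2).const_mul (1 - R)).congr_deriv ?_
    have a1 := hne1 q hq'
    have a2 := hne2 q hq'
    have a3 := hq1 q hq'
    rw [hO, hO]
    field_simp
    ring
  · have := (hb1 r₂ ⟨h2, h3.le⟩).1
    simp only [hn2]
    linarith
end

section
/- Fix real parameters R ∈ (0,∞) with R ≠ 1, ε ∈ ℝ and δ > 0, and suppose ε > δ²R, and additionally ε < 1/(1−R) + δ²R/2 if R < 1. Let r ∈ (0,1) and let n : [r,1) → ℝ be continuous with n(r) = m(r), differentiable on (r,1) with n'(q) = O(q, n(q)), and suppose (1−R)·m(q) ≤ (1−R)·n(q) ≤ (1−R)·ℓ(q) for all q ∈ (r,1). Then lim_{q→1⁻} n(q) = m(1) and lim_{q→1⁻} (n(q) − m(1))/(q − 1) = m'(1). In other words, every solution started on the curve m at a point r < 1 passes through the singular point (1, m(1)) with left derivative m'(1) = −ε(1−R) + δ²R(1−R) there. -/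
/-!
Write `D = δ²/2` and `n = m + (1 - R) (1 - q) h`. The bounds between `m` and `ℓ` say exactly that
`0 ≤ h q ≤ D q`, so `n → m 1`, and since `m` is a polynomial the claim about the difference quotient
is equivalent to `h q → 0` as `q → 1⁻`. The ODE becomes
`h' = (ε - 2DRq + h - (n / R) h / ((1 - q) (D q - h))) / (1 - q)`.
As `n` stays above `m 1 / 2 > 0` near `1` and `0 < D q - h ≤ D`, this yields the linear differential
inequality `h' ≤ (A - B h / (1 - q)) / (1 - q)` with `A, B > 0`. Its strongly damping term forces
`h = O(1 - q)`, by the integrating factor `exp (B / (1 - q))`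
(`tendsto_zero_of_singular_damping`).

The division in `OO` returns `0` when `n q = ℓ q`, i.e. `h q = D q`, so this case has to be excluded
near `1`: there `D q - h` would have an interior minimum, whence `h' = D`, whereas the equation with
vanishing right-hand side gives `h' = (ε - 2DRq + D q) / (1 - q)`, which is larger than `D` near `1`.
-/

open Filter

/-- A nonnegative function satisfying `h' ≤ (A - B h / (1 - q)) / (1 - q)` on a left neighbourhood
of `1` tends to `0` there: `(h - (2A/B) (1 - q)) exp (B / (1 - q))` is nonincreasing close to `1`. -/
lemma tendsto_zero_of_singular_damping {h h' : ℝ → ℝ} {A B q₀ : ℝ} (hA : 0 < A) (hB : 0 < B)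
    (hq₀ : q₀ < 1) (hd : ∀ q ∈ Set.Ioo q₀ 1, HasDerivAt h (h' q) q)
    (h0 : ∀ q ∈ Set.Ioo q₀ 1, 0 ≤ h q)
    (hle : ∀ q ∈ Set.Ioo q₀ 1, h' q ≤ (A - B * h q / (1 - q)) / (1 - q)) :
    Tendsto h (nhdsWithin 1 (Set.Iio 1)) (nhds 0) := by
  set M := 2 * A / B with hM
  have hMB : M * B = 2 * A := by rw [hM]; field_simp
  have hM0 : 0 < M := by positivity
  -- the integrating factor beats the source term as soon as `1 - q < B / 2`
  set q₁ := max q₀ (1 - B / 2) with hq₁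
  have hq₁1 : q₁ < 1 := max_lt hq₀ (by linarith)
  have hsub : ∀ q ∈ Set.Ioo q₁ 1, q ∈ Set.Ioo q₀ 1 ∧ 1 - q < B / 2 ∧ 0 < 1 - q := by
    intro q hq
    have h1 := le_max_left q₀ (1 - B / 2)
    have h2 := le_max_right q₀ (1 - B / 2)
    exact ⟨⟨by linarith [hq.1], hq.2⟩, by linarith [hq.1], by linarith [hq.2]⟩
  set F : ℝ → ℝ := fun q => (h q - M * (1 - q)) * Real.exp (B / (1 - q)) with hF
  have hFd : ∀ q ∈ Set.Ioo q₁ 1, HasDerivAt F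
      ((h' q + M) * Real.exp (B / (1 - q))
        + (h q - M * (1 - q)) * (Real.exp (B / (1 - q)) * (B / (1 - q) ^ 2))) q := by
    intro q hq
    obtain ⟨hq0, -, hs⟩ := hsub q hq
    have e1 : HasDerivAt (fun q : ℝ => 1 - q) (-1) q := by
      simpa using (hasDerivAt_id q).const_sub 1
    have e2 : HasDerivAt (fun q : ℝ => B / (1 - q)) (B / (1 - q) ^ 2) q := by
      exact ((hasDerivAt_const q B).div e1 hs.ne').congr_deriv (by simp)
    have e3 := ((hd q hq0).sub (e1.const_mul M)).mul e2.exp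
    exact e3.congr_deriv (by simp)
  have hanti : AntitoneOn F (Set.Ioo q₁ 1) := by
    apply antitoneOn_of_deriv_nonpos (convex_Ioo _ _)
    · exact fun q hq => (hFd q hq).continuousAt.continuousWithinAt
    · intro q hq
      rw [interior_Ioo] at hq
      exact (hFd q hq).differentiableAt.differentiableWithinAt
    · intro q hq
      rw [interior_Ioo] at hq
      rw [(hFd q hq).deriv]
      obtain ⟨hq0, hsB, hs⟩ := hsub q hq
      have key : h' q + M + (h q - M * (1 - q)) * (B / (1 - q) ^ 2) ≤ 0 := by
        have e : (A - B * h q / (1 - q)) / (1 - q) + M + (h q - M * (1 - q)) * (B / (1 - q) ^ 2)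
            = (A - M * B + M * (1 - q)) / (1 - q) := by
          field_simp; ring
        have : (A - M * B + M * (1 - q)) / (1 - q) ≤ 0 := by
          apply div_nonpos_of_nonpos_of_nonneg _ hs.le
          nlinarith
        linarith [hle q hq0]
      have := mul_nonpos_of_nonpos_of_nonneg key (Real.exp_pos (B / (1 - q))).le
      linarith
  set p := (q₁ + 1) / 2 with hp
  have hp1 : p ∈ Set.Ioo q₁ 1 := ⟨by rw [hp]; linarith, by rw [hp]; linarith⟩
  -- `exp x ≥ x` turns the exponentially small remainder into a linear one
  have hbound : ∀ q ∈ Set.Ioo p 1, h q ≤ (M + |F p| / B) * (1 - q) := by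
    intro q hq
    have hq' : q ∈ Set.Ioo q₁ 1 := ⟨hp1.1.trans hq.1, hq.2⟩
    obtain ⟨-, -, hs⟩ := hsub q hq'
    have h1 : F q ≤ |F p| := (hanti hp1 hq' hq.1.le).trans (le_abs_self _)
    have h2 : B / (1 - q) ≤ Real.exp (B / (1 - q)) := by
      linarith [Real.add_one_le_exp (B / (1 - q))]
    have h3 : 0 < B / (1 - q) := by positivity
    by_contra! hcon
    have h4 : |F p| / B * (1 - q) < h q - M * (1 - q) := by linarith
    have h5 : |F p| = |F p| / B * (1 - q) * (B / (1 - q)) := by field_simp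
    have h6 : |F p| / B * (1 - q) * (B / (1 - q)) < (h q - M * (1 - q)) * (B / (1 - q)) :=
      mul_lt_mul_of_pos_right h4 h3
    have h7 : 0 ≤ |F p| / B * (1 - q) := by positivity
    have h8 : (h q - M * (1 - q)) * (B / (1 - q)) ≤ F q :=
      mul_le_mul_of_nonneg_left h2 (by linarith)
    linarith
  have hlim : Tendsto (fun q : ℝ => (M + |F p| / B) * (1 - q)) (nhdsWithin 1 (Set.Iio 1))
      (nhds 0) := by
    have : Continuous fun q : ℝ => (M + |F p| / B) * (1 - q) := by fun_prop
    simpa using (this.tendsto 1).mono_left nhdsWithin_le_nhds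
  have hev : ∀ᶠ q in nhdsWithin (1 : ℝ) (Set.Iio 1), q ∈ Set.Ioo p 1 :=
    Ioo_mem_nhdsLT hp1.2
  refine tendsto_of_tendsto_of_tendsto_of_le_of_le' tendsto_const_nhds hlim ?_ ?_
  · filter_upwards [hev] with q hq
    exact h0 q (hsub q ⟨hp1.1.trans hq.1, hq.2⟩).1
  · filter_upwards [hev] with q hq using hbound q hq

/-- Every solution of n' = O(q,n) started on the curve m at a point r < 1 and remaining
between m and ℓ passes through the singular point (1, m(1)) with left derivative
m'(1) = −ε(1−R) + δ²R(1−R). -/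
theorem solution_through_singular_point (R ε δ : ℝ)
    (hR0 : 0 < R) (hR1 : R ≠ 1) (hδ : 0 < δ)
    (hε : δ ^ 2 * R < ε) (hε' : R < 1 → ε < 1 / (1 - R) + δ ^ 2 * R / 2)
    (m ℓ : ℝ → ℝ) (OO : ℝ → ℝ → ℝ)
    (hm : ∀ q, m q = 1 - ε * (1 - R) * q + δ ^ 2 / 2 * R * (1 - R) * q ^ 2)
    (hℓ : ∀ q, ℓ q = m q + δ ^ 2 / 2 * (1 - R) * q * (1 - q))
    (hO : ∀ q v, OO q v = ((1 - R) / R) * (v / (1 - q)) * ((m q - v) / (ℓ q - v)))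
    (r : ℝ) (hr0 : 0 < r) (hr1 : r < 1)
    (n : ℝ → ℝ) (hcont : ContinuousOn n (Set.Ico r 1)) (hnr : n r = m r)
    (hderiv : ∀ q ∈ Set.Ioo r 1, HasDerivAt n (OO q (n q)) q)
    (hbet : ∀ q ∈ Set.Ioo r 1,
      (1 - R) * m q ≤ (1 - R) * n q ∧ (1 - R) * n q ≤ (1 - R) * ℓ q) :
    Tendsto n (nhdsWithin 1 (Set.Iio 1)) (nhds (m 1)) ∧
    Tendsto (fun q => (n q - m 1) / (q - 1)) (nhdsWithin 1 (Set.Iio 1))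
      (nhds (-ε * (1 - R) + δ ^ 2 * R * (1 - R))) := by
  have ha : 1 - R ≠ 0 := sub_ne_zero.mpr hR1.symm
  have ha2 : 0 < (1 - R) ^ 2 := by positivity
  obtain ⟨D, hD⟩ : ∃ D, D = δ ^ 2 / 2 := ⟨_, rfl⟩
  have hD0 : 0 < D := by rw [hD]; positivity
  have hδD : δ ^ 2 = 2 * D := by rw [hD]; ring
  rw [← hD] at hℓ hm
  rw [hδD] at hε hε' ⊢
  have hDR : 0 < D * R := mul_pos hD0 hR0
  have hε0 : 0 < ε := by nlinarith
  have hm1 : 0 < m 1 := by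
    rw [hm]
    rcases lt_or_gt_of_ne hR1 with h | h
    · have h1 : 0 < 1 - R := by linarith
      have h2 := mul_lt_mul_of_pos_right (hε' h) h1
      have h3 : (1 / (1 - R) + 2 * D * R / 2) * (1 - R) = 1 + D * R * (1 - R) := by field_simp
      linarith
    · nlinarith
  have hmc : Continuous m := by
    rw [show m = _ from funext hm]; fun_prop
  set h : ℝ → ℝ := fun q => (n q - m q) / ((1 - R) * (1 - q)) with hh
  have hn : ∀ q, q < 1 → n q = m q + (1 - R) * ((1 - q) * h q) := by
    intro q hq
    have : 1 - q ≠ 0 := by linarith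
    simp only [hh]; field_simp; ring
  have hb : ∀ q ∈ Set.Ioo r 1, 0 ≤ h q ∧ h q ≤ D * q := by
    intro q hq
    have hs : 0 < 1 - q := by linarith [hq.2]
    obtain ⟨h1, h2⟩ := hbet q hq
    rw [hℓ] at h2
    rw [hn q hq.2] at h1 h2
    have hpos : 0 < (1 - R) ^ 2 * (1 - q) := by positivity
    constructor
    · refine le_of_mul_le_mul_left ?_ hpos
      linarith
    · refine le_of_mul_le_mul_left ?_ hpos
      linarith
  have hev : ∀ᶠ q in nhdsWithin (1 : ℝ) (Set.Iio 1), q ∈ Set.Ioo r 1 := Ioo_mem_nhdsLT hr1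
  have hgz : Tendsto (fun q => (1 - q) * h q) (nhdsWithin 1 (Set.Iio 1)) (nhds 0) := by
    have hc : Continuous fun q : ℝ => (1 - q) * (D * q) := by fun_prop
    have hl : Tendsto (fun q : ℝ => (1 - q) * (D * q)) (nhdsWithin 1 (Set.Iio 1)) (nhds 0) := by
      simpa using (hc.tendsto 1).mono_left nhdsWithin_le_nhds
    refine tendsto_of_tendsto_of_tendsto_of_le_of_le' tendsto_const_nhds hl ?_ ?_
    · filter_upwards [hev] with q hq
      exact mul_nonneg (by linarith [hq.2]) (hb q hq).1
    · filter_upwards [hev] with q hq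
      exact mul_le_mul_of_nonneg_left (hb q hq).2 (by linarith [hq.2])
  have hnlim : Tendsto n (nhdsWithin 1 (Set.Iio 1)) (nhds (m 1)) := by
    have h1 := ((hmc.tendsto 1).mono_left nhdsWithin_le_nhds).add (hgz.const_mul (1 - R))
    rw [mul_zero, add_zero] at h1
    refine h1.congr' ?_
    filter_upwards [hev] with q hq using (hn q hq.2).symm
  refine ⟨hnlim, ?_⟩
  obtain ⟨h', hh'⟩ : ∃ h' : ℝ → ℝ, h' = fun q => (ε - 2 * D * R * q + h q
    - n q / R * (h q / ((1 - q) * (D * q - h q)))) / (1 - q) := ⟨_, rfl⟩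
  -- at a point where `h q = D q` both sides carry a division by zero, and the formula still holds
  have hhd : ∀ q ∈ Set.Ioo r 1, HasDerivAt h (h' q) q := by
    intro q hq
    have hs : 1 - q ≠ 0 := by linarith [hq.2]
    have hmd : HasDerivAt m (-(ε * (1 - R)) + D * R * (1 - R) * (2 * q)) q := by
      rw [show m = _ from funext hm]
      have e1 := ((hasDerivAt_id q).const_mul (ε * (1 - R))).const_sub 1
      have e2 := ((hasDerivAt_id q).pow 2).const_mul (D * R * (1 - R))
      exact (e1.add e2).congr_deriv (by simp)
    have e1 : HasDerivAt (fun q : ℝ => (1 - R) * (1 - q)) ((1 - R) * (-1)) q :=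
      ((hasDerivAt_id q).const_sub 1).const_mul (1 - R)
    have e3 := ((hderiv q hq).sub hmd).div e1 (mul_ne_zero ha hs)
    refine e3.congr_deriv ?_
    have hOO : OO q (n q) = -((1 - R) / R * (n q / (1 - q)) * (h q / (D * q - h q))) := by
      rw [hO]
      have e4 : m q - n q = ((1 - R) * (1 - q)) * (-h q) := by rw [hn q hq.2]; ring
      have e5 : ℓ q - n q = ((1 - R) * (1 - q)) * (D * q - h q) := by
        rw [hℓ, hn q hq.2]; ring
      rw [e4, e5, mul_div_mul_left _ _ (mul_ne_zero ha hs), neg_div]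
      ring
    have e6 : (n - m) q = (1 - R) * ((1 - q) * h q) := by
      rw [Pi.sub_apply, hn q hq.2]; ring
    rw [e6, hOO, hh']
    simp only [div_mul_eq_div_div_swap (h q) (1 - q)]
    generalize h q / (D * q - h q) = w
    field_simp
    ring
  have hn2 : ∀ᶠ q in nhdsWithin (1 : ℝ) (Set.Iio 1), m 1 / 2 < n q :=
    hnlim.eventually (lt_mem_nhds (by linarith))
  have hc2 : ∀ᶠ q in nhdsWithin (1 : ℝ) (Set.Iio 1), D * (1 - q) < ε - 2 * D * R * q + D * q := by
    apply Filter.Eventually.filter_mono nhdsWithin_le_nhds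
    have c1 : Continuous fun q : ℝ => D * (1 - q) := by fun_prop
    have c2 : Continuous fun q : ℝ => ε - 2 * D * R * q + D * q := by fun_prop
    exact c1.tendsto 1 |>.eventually_lt (c2.tendsto 1) (by linarith)
  obtain ⟨q₀, hq₀, hall⟩ := (mem_nhdsLT_iff_exists_Ioo_subset).1 (hev.and (hn2.and hc2))
  have hhlim : Tendsto h (nhdsWithin 1 (Set.Iio 1)) (nhds 0) := by
    refine tendsto_zero_of_singular_damping (A := ε + D) (B := m 1 / 2 / R / D) (by positivity)
      (by positivity) hq₀ (fun q hq => hhd q (hall hq).1) (fun q hq => (hb q (hall hq).1).1) ?_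
    intro q hq
    obtain ⟨hqr, hnq, hcq⟩ := hall hq
    have hs : 0 < 1 - q := by linarith [hq.2]
    have hq0 : 0 < q := hr0.trans hqr.1
    obtain ⟨hb0, hb1⟩ := hb q hqr
    have hlt : h q < D * q := by
      refine lt_of_le_of_ne hb1 fun heq => ?_
      -- a contact point is an interior minimum of `D q - h`
      have hmin : IsLocalMin (fun x => D * x - h x) q := by
        filter_upwards [isOpen_Ioo.mem_nhds hqr] with x hx
        have := (hb x hx).2
        linarith
      have hz := hmin.hasDerivAt_eq_zero (((hasDerivAt_id q).const_mul D).sub (hhd q hqr))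
      rw [hh'] at hz
      simp only [heq, sub_self, mul_zero, div_zero, sub_zero, mul_one] at hz
      have hz' : (ε - 2 * D * R * q + D * q) / (1 - q) = D := by linarith
      rw [div_eq_iff hs.ne'] at hz'
      linarith
    rw [hh']
    refine div_le_div_of_nonneg_right ?_ hs.le
    have h1 : ε - 2 * D * R * q + h q ≤ ε + D := by
      have : 0 < 2 * D * R * q := by positivity
      nlinarith [hq.2]
    have h2 : m 1 / 2 / R / D * h q / (1 - q) ≤ n q / R * (h q / ((1 - q) * (D * q - h q))) := by
      have e : m 1 / 2 / R / D * h q / (1 - q) = m 1 / 2 / R * (h q / ((1 - q) * D)) := by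
        field_simp
      rw [e]
      have h3 : 0 < D * q - h q := by linarith
      have h4 : D * q - h q ≤ D := by nlinarith [hq.2]
      have : 0 < n q := by linarith
      gcongr
    linarith
  have hpoly : Tendsto (fun q : ℝ => -ε * (1 - R) + D * R * (1 - R) * (1 + q))
      (nhdsWithin 1 (Set.Iio 1)) (nhds (-ε * (1 - R) + D * R * (1 - R) * (1 + 1))) :=
    Tendsto.mono_left (Continuous.tendsto (by fun_prop) 1) nhdsWithin_le_nhds
  have hfin := hpoly.sub (hhlim.const_mul (1 - R))
  rw [show -ε * (1 - R) + 2 * D * R * (1 - R)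
    = -ε * (1 - R) + D * R * (1 - R) * (1 + 1) - (1 - R) * 0 by ring]
  refine hfin.congr' ?_
  filter_upwards [hev] with q hq
  have hs : q - 1 ≠ 0 := by linarith [hq.2]
  rw [hn q hq.2, hm q, hm 1, eq_div_iff hs]
  ring
end

section
/- Suppose R ∈ (0,1), δ > 0 and ε > 1/(1−R) + δ²R/2 (so that m(1) < 0). Let q₋ < q₊ be the roots of m and p₋ < p₊ the roots of ℓ; then p₋ < 0 < q₋ < p₊ < 1 < q₊. Moreover, for every r ∈ (0, q₋), there is no continuous function n : [r, p₊] → ℝ with n(q) > 0 for all q ∈ [r, p₊], n(r) = m(r), and n differentiable on (r, p₊) with n'(q) = O(q, n(q)) and n(q) ≠ ℓ(q) for all q ∈ (r, p₊). Consequently there is no strictly positive solution of the free-boundary problem n' = O(q,n), n(q_*) = m(q_*), n(q^*) = m(q^*) with 0 < q_* < q₋, and the optimal consumption/investment problem is ill-posed for every level of transaction costs. -/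
/-!
No analysis of the differential equation is needed. Since `ℓ - m` is a positive multiple of
`q (1 - q)`, a continuous `n` with `n r = m r`, `0 < r < 1`, starts strictly below `ℓ`. If
`n` is positive at `p₊`, then it ends strictly above `ℓ p₊ = 0`, so the intermediate value theorem
makes `n` meet `ℓ` strictly inside `(r, p₊)`, where the right-hand side of the equation is singular
and contact is excluded.

The ordering of the roots is read off from the factorizations
`m q = a (q - q₋) (q - q₊)` with `a > 0` and `ℓ q = -c (q - p₋) (q - p₊)` with `c > 0`
(`quadratic_eq_of_roots`), evaluated at `0` (where both are `1`), at `1` (where both are negative)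
and at `q₋` (where `ℓ` is positive).
-/

theorem quadratic_eq_of_roots {a b c x y : ℝ} (hxy : x < y)
    (hx : c + b * x + a * x ^ 2 = 0) (hy : c + b * y + a * y ^ 2 = 0) (q : ℝ) :
    c + b * q + a * q ^ 2 = a * ((q - x) * (q - y)) := by
  -- Vieta: subtracting the two root equations and dividing by `x - y`.
  have hb : b = -a * (x + y) := by
    have h : (x - y) * (b + a * (x + y)) = 0 := by linear_combination hx - hy
    rcases mul_eq_zero.1 h with h | h
    · linarith
    · linarith
  subst hb
  linear_combination hx

/-- Case 1Aa: if R < 1 and ε > 1/(1−R) + δ²R/2 then m(1) < 0, the roots interlace as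
p₋ < 0 < q₋ < p₊ < 1 < q₊, and for every r ∈ (0, q₋) there is no strictly positive
solution of n' = O(q,n) on [r, p₊] started at (r, m(r)): the problem is ill-posed for
every level of transaction costs. -/
theorem ill_posed_case (R ε δ : ℝ)
    (hR0 : 0 < R) (hR1 : R < 1) (hδ : 0 < δ)
    (hε : 1 / (1 - R) + δ ^ 2 * R / 2 < ε)
    (m ℓ : ℝ → ℝ) (OO : ℝ → ℝ → ℝ)
    (hm : ∀ q, m q = 1 - ε * (1 - R) * q + δ ^ 2 / 2 * R * (1 - R) * q ^ 2)
    (hℓ : ∀ q, ℓ q = m q + δ ^ 2 / 2 * (1 - R) * q * (1 - q))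
    (hO : ∀ q v, OO q v = ((1 - R) / R) * (v / (1 - q)) * ((m q - v) / (ℓ q - v)))
    (qm qp pm pp : ℝ)
    (hqroots : m qm = 0 ∧ m qp = 0 ∧ qm < qp)
    (hproots : ℓ pm = 0 ∧ ℓ pp = 0 ∧ pm < pp) :
    m 1 < 0 ∧
    (pm < 0 ∧ 0 < qm ∧ qm < pp ∧ pp < 1 ∧ 1 < qp) ∧
    (∀ r ∈ Set.Ioo (0:ℝ) qm,
      ¬ ∃ n : ℝ → ℝ, ContinuousOn n (Set.Icc r pp) ∧
          (∀ q ∈ Set.Icc r pp, 0 < n q) ∧ n r = m r ∧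
          (∀ q ∈ Set.Ioo r pp, HasDerivAt n (OO q (n q)) q) ∧
          (∀ q ∈ Set.Ioo r pp, n q ≠ ℓ q)) := by
  obtain ⟨hqm, hqp, hq⟩ := hqroots
  obtain ⟨hpm, hpp, hp⟩ := hproots
  have hR : 0 < 1 - R := by linarith
  have hk : 0 < δ ^ 2 / 2 * (1 - R) := by positivity
  have hm1 : m 1 < 0 := by
    have h : 1 / (1 - R) * (1 - R) = 1 := by field_simp
    have h' := mul_lt_mul_of_pos_right hε hR
    rw [hm]
    nlinarith
  have hm0 : m 0 = 1 := by rw [hm]; ring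
  have hl0 : ℓ 0 = 1 := by rw [hℓ, hm0]; ring
  have hl1 : ℓ 1 < 0 := by rw [hℓ]; linarith
  have ha : 0 < δ ^ 2 / 2 * R * (1 - R) := by positivity
  have hc : 0 < δ ^ 2 / 2 * (1 - R) * (1 - R) := by positivity
  have hmf : ∀ q, m q = δ ^ 2 / 2 * R * (1 - R) * ((q - qm) * (q - qp)) := fun q => by
    rw [hm] at hqm hqp
    rw [← quadratic_eq_of_roots (b := -(ε * (1 - R))) (c := 1) hq
      (by linear_combination hqm) (by linear_combination hqp), hm]
    ring
  have hlf : ∀ q, ℓ q = -(δ ^ 2 / 2 * (1 - R) * (1 - R)) * ((q - pm) * (q - pp)) := fun q => by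
    rw [hℓ, hm] at hpm hpp
    rw [← quadratic_eq_of_roots (b := -(ε * (1 - R)) + δ ^ 2 / 2 * (1 - R)) (c := 1) hp
      (by linear_combination hpm) (by linear_combination hpp), hℓ, hm]
    ring
  have hqm1 : qm < 1 ∧ 1 < qp := by
    have h : (1 - qm) * (1 - qp) < 0 := neg_of_mul_neg_right (hmf 1 ▸ hm1) ha.le
    rcases mul_neg_iff.1 h with h | h <;> constructor <;> linarith
  have hqm0 : 0 < qm := by
    have h : 0 < (0 - qm) * (0 - qp) := by
      refine pos_of_mul_pos_right ?_ ha.le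
      rw [← hmf, hm0]; exact one_pos
    nlinarith
  have hpneg : ∀ q, 0 < ℓ q → pm < q ∧ q < pp := fun q h => by
    rw [hlf, neg_mul, neg_pos] at h
    have h := neg_of_mul_neg_right h hc.le
    rcases mul_neg_iff.1 h with h | h <;> constructor <;> linarith
  have hp0 := hpneg 0 (by rw [hl0]; exact one_pos)
  have hqmp : qm < pp := by
    refine (hpneg qm ?_).2
    rw [hℓ, hqm, zero_add]
    exact mul_pos (mul_pos hk hqm0) (by linarith)
  have hpp1 : pp < 1 := by
    rw [hlf, neg_mul, neg_lt_zero] at hl1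
    have h := pos_of_mul_pos_right hl1 hc.le
    nlinarith
  refine ⟨hm1, ⟨hp0.1, hqm0, hqmp, hpp1, hqm1.2⟩, ?_⟩
  rintro r ⟨hr0, hrq⟩ ⟨n, hn, hpos, hnr, -, hne⟩
  have hrp : r ≤ pp := by linarith
  have hℓc : Continuous ℓ := by
    rw [funext hlf]
    fun_prop
  have hend : ℓ pp - n pp < 0 := by
    rw [hpp]
    linarith [hpos pp (Set.right_mem_Icc.2 hrp)]
  have hstart : 0 < ℓ r - n r := by
    rw [hnr, hℓ, add_sub_cancel_left]
    exact mul_pos (mul_pos hk hr0) (by linarith)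
  obtain ⟨q, hqI, hq0⟩ :=
    intermediate_value_Ioo' hrp (hℓc.continuousOn.sub hn) ⟨hend, hstart⟩
  exact hne q hqI (sub_eq_zero.1 hq0).symm
end

section
/- Suppose R ∈ (0,1), δ > 0 and 0 < ε < min{δ²R, δ·√(2R/(1−R))}. Let q_* < q^* and let n : [q_*, q^*] → ℝ be continuous with n(q_*) = m(q_*) and n(q^*) = m(q^*), differentiable on (q_*, q^*) with n'(q) = O(q, n(q)), and satisfying m(q) < n(q) < ℓ(q) for all q ∈ (q_*, q^*). Then q_* < q_M < q^*, m(q^*) < m(q_*), and q^* − q_M < q_M − q_*; in particular q^* < 2·q_M. Consequently m_M < m(q^*) < m(q_*), so the value function with transaction costs is dominated by the Merton value function with zero transaction costs. -/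
/-!
The gap `m < ℓ` forces `(qs, qS) ⊆ (0, 1)`, and `ε < δ √(2R/(1-R))` makes the minimum of `m`
positive. Hence `n > m > 0` and `n' = OO q (n q) < 0` inside the interval, so
`m qS = n qS < n qs = m qs`. As `m q = mM + c (q - qM)²` with `c > 0`, this says
`qs + qS < 2 qM`, which gives everything except `qM < qS`.

If `qS ≤ qM`, let `y = n - m`. Then `y > 0` on `(qs, qS)`, `y qS = 0`, and `y' = -A y - m'`, where
`A = (1-R)/R · n / ((1-q)(ℓ-n))` stays bounded near `qS`, because `0 < qS ≤ qM < 1` keeps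
`ℓ - n` away from `0`. Since `m' < 0` to the left of `qM`, `y' + K y > 0` there for a constant `K`,
so `e^{Kq} y` increases to `0` and `y < 0`: a contradiction
(`gronwall_left_contra`).
-/

/-- Gronwall-type obstruction: a continuous `y` on `[a, b]` with `y a ≥ 0` and `y b = 0` cannot
satisfy `y' + K y > 0` on `(a, b)`, since `e^{Kq} y` would be strictly increasing. -/
lemma gronwall_left_contra {a b K : ℝ} (hab : a < b) {y y' : ℝ → ℝ}
    (hc : ContinuousOn y (Set.Icc a b)) (hd : ∀ q ∈ Set.Ioo a b, HasDerivAt y (y' q) q)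
    (hK : ∀ q ∈ Set.Ioo a b, 0 < y' q + K * y q) (ha : 0 ≤ y a) (hb : y b = 0) : False := by
  have hmono : StrictMonoOn (fun q => Real.exp (K * q) * y q) (Set.Icc a b) := by
    refine strictMonoOn_of_hasDerivWithinAt_pos (convex_Icc a b)
      (f' := fun q => Real.exp (K * q) * (y' q + K * y q)) ?_ ?_ ?_
    · exact (by fun_prop : Continuous fun q : ℝ => Real.exp (K * q)).continuousOn.mul hc
    · intro q hq
      rw [interior_Icc] at hq
      have h1 : HasDerivAt (fun q : ℝ => Real.exp (K * q)) (Real.exp (K * q) * (K * 1)) q :=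
        ((hasDerivAt_id q).const_mul K).exp
      have h2 := h1.mul (hd q hq)
      refine (h2.congr_deriv ?_).hasDerivWithinAt
      ring
    · intro q hq
      rw [interior_Icc] at hq
      exact mul_pos (Real.exp_pos _) (hK q hq)
  have h := hmono (Set.left_mem_Icc.2 hab.le) (Set.right_mem_Icc.2 hab.le) hab
  simp only [hb, mul_zero] at h
  have := mul_nonneg (Real.exp_pos (K * a)).le ha
  linarith

/-- For a solution of the free-boundary problem in Case 1AbIIii, the free boundaries
straddle the Merton point q_M, m(q^*) < m(q_*), the right boundary is closer to q_M than
the left one (so q^* < 2q_M), and m_M < m(q^*) < m(q_*): the value function with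
transaction costs is dominated by the Merton value function. -/
theorem free_boundary_straddles_merton (R ε δ : ℝ)
    (hR0 : 0 < R) (hR1 : R < 1) (hδ : 0 < δ)
    (hε0 : 0 < ε) (hε1 : ε < δ ^ 2 * R) (hε2 : ε < δ * Real.sqrt (2 * R / (1 - R)))
    (m ℓ : ℝ → ℝ) (OO : ℝ → ℝ → ℝ)
    (hm : ∀ q, m q = 1 - ε * (1 - R) * q + δ ^ 2 / 2 * R * (1 - R) * q ^ 2)
    (hℓ : ∀ q, ℓ q = m q + δ ^ 2 / 2 * (1 - R) * q * (1 - q))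
    (hO : ∀ q v, OO q v = ((1 - R) / R) * (v / (1 - q)) * ((m q - v) / (ℓ q - v)))
    (qM mM : ℝ) (hqM : qM = ε / (δ ^ 2 * R)) (hmM : mM = m qM)
    (qs qS : ℝ) (hq : qs < qS)
    (n : ℝ → ℝ) (hcont : ContinuousOn n (Set.Icc qs qS))
    (hns : n qs = m qs) (hnS : n qS = m qS)
    (hderiv : ∀ q ∈ Set.Ioo qs qS, HasDerivAt n (OO q (n q)) q)
    (hbet : ∀ q ∈ Set.Ioo qs qS, m q < n q ∧ n q < ℓ q) :
    qs < qM ∧ qM < qS ∧ m qS < m qs ∧ qS - qM < qM - qs ∧ qS < 2 * qM ∧ mM < m qS := by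
  have hR1' : 0 < 1 - R := by linarith
  have hδ2 : 0 < δ ^ 2 := by positivity
  have hc : 0 < δ ^ 2 / 2 * R * (1 - R) := by positivity
  have hε : ε = δ ^ 2 * R * qM := by rw [hqM]; field_simp
  have hqM1 : qM < 1 := by
    rw [hqM, div_lt_one (by positivity)]; exact hε1
  have hmsq : ∀ q, m q = mM + δ ^ 2 / 2 * R * (1 - R) * (q - qM) ^ 2 := by
    intro q
    rw [hmM, hm, hm, hε]; ring
  have hmMpos : 0 < mM := by
    have h1 : ε ^ 2 < δ ^ 2 * (2 * R / (1 - R)) := by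
      calc ε ^ 2 < (δ * Real.sqrt (2 * R / (1 - R))) ^ 2 :=
            pow_lt_pow_left₀ hε2 hε0.le two_ne_zero
        _ = δ ^ 2 * (2 * R / (1 - R)) := by
            rw [mul_pow, Real.sq_sqrt (by positivity)]
    rw [← mul_div_assoc, lt_div_iff₀ hR1', hε] at h1
    have h2 : δ ^ 2 * R * (δ ^ 2 * R * qM ^ 2 * (1 - R)) < δ ^ 2 * R * 2 := by nlinarith
    have h3 := lt_of_mul_lt_mul_left h2 (by positivity)
    rw [hmM, hm, hε]
    nlinarith
  have hmpos : ∀ q, 0 < m q := by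
    intro q
    rw [hmsq]; positivity
  have h01 : ∀ q ∈ Set.Ioo qs qS, 0 < q ∧ q < 1 := by
    intro q hq'
    obtain ⟨h1, h2⟩ := hbet q hq'
    have h3 : 0 < δ ^ 2 / 2 * (1 - R) * (q * (1 - q)) := by
      have := hℓ q
      nlinarith
    have h4 : 0 < q * (1 - q) := by
      by_contra! h
      have : 0 < δ ^ 2 / 2 * (1 - R) := by positivity
      nlinarith
    constructor <;> nlinarith
  have hqs0 : 0 ≤ qs := by
    by_contra! h
    have h1 : qs < min 0 qS := lt_min h hq
    obtain ⟨q, hq1, hq2⟩ := exists_between h1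
    have := h01 q ⟨hq1, hq2.trans_le (min_le_right _ _)⟩
    have := hq2.trans_le (min_le_left 0 qS)
    linarith
  have hanti : StrictAntiOn n (Set.Icc qs qS) := by
    refine strictAntiOn_of_hasDerivWithinAt_neg (convex_Icc qs qS)
      (f' := fun q => OO q (n q)) hcont ?_ ?_
    · intro q hq'
      rw [interior_Icc] at hq'
      exact (hderiv q hq').hasDerivWithinAt
    · intro q hq'
      rw [interior_Icc] at hq'
      obtain ⟨h1, h2⟩ := hbet q hq'
      obtain ⟨h3, h4⟩ := h01 q hq'
      rw [hO]
      have hn : 0 < n q := (hmpos q).trans h1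
      have h5 : 0 < 1 - q := by linarith
      exact mul_neg_of_pos_of_neg (by positivity)
        (div_neg_of_neg_of_pos (by linarith) (by linarith))
  have hlt : m qS < m qs := by
    rw [← hns, ← hnS]
    exact hanti (Set.left_mem_Icc.2 hq.le) (Set.right_mem_Icc.2 hq.le) hq
  have hsum : qs + qS < 2 * qM := by
    rw [hmsq qS, hmsq qs] at hlt
    have h1 : (qS - qM) ^ 2 < (qs - qM) ^ 2 :=
      lt_of_mul_lt_mul_left (by linarith) hc.le
    nlinarith
  have hMS : qM < qS := by
    by_contra! hle
    have hS1 : qS < 1 := hle.trans_lt hqM1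
    have hS0 : 0 < qS := hqs0.trans_lt hq
    have hmcont : Continuous m := by
      rw [funext hm]; fun_prop
    have hℓcont : Continuous ℓ := by
      rw [funext hℓ]; fun_prop
    have hgap : 0 < (1 - qS) * (ℓ qS - n qS) := by
      rw [hnS, hℓ]
      have : 0 < 1 - qS := by linarith
      have : 0 < δ ^ 2 / 2 * (1 - R) * qS * (1 - qS) := by positivity
      exact mul_pos (by linarith) (by linarith)
    set A : ℝ → ℝ := fun q => (1 - R) / R * (n q / ((1 - q) * (ℓ q - n q))) with hA
    have hAc : ContinuousWithinAt A (Set.Icc qs qS) qS := by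
      have hn := hcont qS (Set.right_mem_Icc.2 hq.le)
      refine continuousWithinAt_const.mul (hn.div ?_ hgap.ne')
      exact (continuousWithinAt_const.sub continuousWithinAt_id).mul
        (hℓcont.continuousWithinAt.sub hn)
    have hev : ∀ᶠ q in nhdsWithin qS (Set.Iio qS), A q < A qS + 1 := by
      have h1 : nhdsWithin qS (Set.Ioo qs qS) = nhdsWithin qS (Set.Iio qS) :=
        nhdsWithin_Ioo_eq_nhdsLT hq
      rw [← h1]
      exact (hAc.mono Set.Ioo_subset_Icc_self).eventually_lt_const (lt_add_one _)
    obtain ⟨a, ha, hsub⟩ := (mem_nhdsLT_iff_exists_mem_Ico_Ioo_subset hq).1 hev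
    have hsubI : Set.Ioo a qS ⊆ Set.Ioo qs qS := Set.Ioo_subset_Ioo_left ha.1
    have hca : ContinuousOn n (Set.Icc a qS) := hcont.mono (Set.Icc_subset_Icc_left ha.1)
    have hma : ∀ q, HasDerivAt m (δ ^ 2 * R * (1 - R) * (q - qM)) q := by
      intro q
      rw [funext hmsq]
      have h1 := ((((hasDerivAt_id q).sub_const qM).pow 2).const_mul
        (δ ^ 2 / 2 * R * (1 - R))).const_add mM
      refine h1.congr_deriv ?_
      simp
      ring
    refine gronwall_left_contra (K := A qS + 1) ha.2 (y := fun q => n q - m q)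
      (y' := fun q => OO q (n q) - δ ^ 2 * R * (1 - R) * (q - qM))
      (hca.sub hmcont.continuousOn) (fun q hq' => (hderiv q (hsubI hq')).sub (hma q)) ?_ ?_ ?_
    · intro q hq'
      have hAq : A q < A qS + 1 := hsub hq'
      obtain ⟨h1, h2⟩ := hbet q (hsubI hq')
      have h3 : 0 < 1 - q := by linarith [hq'.2]
      have h4 : 0 < ℓ q - n q := by linarith
      have hOA : OO q (n q) = -(A q * (n q - m q)) := by
        rw [hO, hA]
        field_simp
        ring
      have h5 : 0 < δ ^ 2 * R * (1 - R) * (qM - q) :=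
        mul_pos (by positivity) (by linarith [hq'.2])
      have h6 : 0 < (A qS + 1 - A q) * (n q - m q) := mul_pos (by linarith) (by linarith)
      simp only [hOA]
      nlinarith
    · rcases eq_or_lt_of_le ha.1 with h | h
      · simp [← h, hns]
      · exact sub_nonneg.2 (hbet a ⟨h, ha.2⟩).1.le
    · simp [hnS]
  refine ⟨by linarith, hMS, hlt, by linarith, by linarith, ?_⟩
  rw [hmsq qS]
  have : 0 < qS - qM := by linarith
  have : 0 < δ ^ 2 / 2 * R * (1 - R) * (qS - qM) ^ 2 := by positivity
  linarith
end

section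
/- Fix real parameters R ∈ (0,∞) with R ≠ 1, ε ∈ ℝ and δ > 0. Let J ⊆ (−∞,1) be an interval and let N : J → (0,∞) be differentiable. Define n(q) = N(q)^{−1/R}·(1−q)^{1−1/R} for q ∈ J, and suppose that for every q ∈ J one has ℓ(q) ≠ n(q) and N'(q) = N(q)·(δ²/2)(1−R)²·q/(ℓ(q) − n(q)). Then n is differentiable on J and n'(q) = ((1−R)/R)·(n(q)/(1−q))·((m(q) − n(q))/(ℓ(q) − n(q))) = O(q, n(q)) for every q ∈ J. -/
/-!
The proof is logarithmic differentiation. Since `n = N ^ (-1/R) * (1 - q) ^ (1 - 1/R)`,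
`n' / n = -(1/R) * N' / N - (1 - 1/R) / (1 - q)`. Inserting the equation for `N'` and putting
everything over `(1 - q) * (ℓ - n)` gives the numerator
`(1 - R)/R * (ℓ - n - δ²/2 * (1 - R) * q * (1 - q))`, which is `(1 - R)/R * (m - n)` by the
definition of `ℓ`.
-/

/-- Order-reduction identity: if N is positive and satisfies
N' = N·(δ²/2)(1−R)²q/(ℓ − n) on an interval J ⊆ (−∞,1), where
n(q) = N(q)^{−1/R}(1−q)^{1−1/R}, then n satisfies the autonomous first-order equation
n'(q) = ((1−R)/R)·(n/(1−q))·((m−n)/(ℓ−n)) = O(q, n(q)). -/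
theorem order_reduction_identity (R ε δ : ℝ)
    (hR0 : 0 < R) (hR1 : R ≠ 1) (hδ : 0 < δ)
    (m ℓ : ℝ → ℝ) (OO : ℝ → ℝ → ℝ)
    (hm : ∀ q, m q = 1 - ε * (1 - R) * q + δ ^ 2 / 2 * R * (1 - R) * q ^ 2)
    (hℓ : ∀ q, ℓ q = m q + δ ^ 2 / 2 * (1 - R) * q * (1 - q))
    (hO : ∀ q v, OO q v = ((1 - R) / R) * (v / (1 - q)) * ((m q - v) / (ℓ q - v)))
    (J : Set ℝ) (hJ : J ⊆ Set.Iio 1) (hJint : J.OrdConnected)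
    (N n : ℝ → ℝ)
    (hNpos : ∀ q ∈ J, 0 < N q)
    (hn : ∀ q, n q = N q ^ (-(1 / R)) * (1 - q) ^ (1 - 1 / R))
    (hne : ∀ q ∈ J, ℓ q ≠ n q)
    (hN : ∀ q ∈ J, HasDerivAt N (N q * (δ ^ 2 / 2) * (1 - R) ^ 2 * q / (ℓ q - n q)) q) :
    ∀ q ∈ J, HasDerivAt n (OO q (n q)) q := by
  intro q hq
  have hNq := hNpos q hq
  have hq1 : 0 < 1 - q := sub_pos.2 (hJ hq)
  have hD : ℓ q - n q ≠ 0 := sub_ne_zero.2 (hne q hq)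
  have hlin : HasDerivAt (fun x : ℝ => 1 - x) (-1) q := (hasDerivAt_id q).const_sub 1
  have hprod := ((hN q hq).rpow_const (p := -(1 / R)) (Or.inl hNq.ne')).mul
    (hlin.rpow_const (p := 1 - 1 / R) (Or.inl hq1.ne'))
  have hfun : n = (fun x => N x ^ (-(1 / R))) * fun x => (1 - x) ^ (1 - 1 / R) := funext hn
  rw [← hfun] at hprod
  refine hprod.congr_deriv ?_
  -- Both terms of the product rule are multiples of `n q`, so the claim reduces to
  -- the formula for the logarithmic derivative `n' / n`.
  rw [Real.rpow_sub_one hNq.ne', Real.rpow_sub_one hq1.ne', hO]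
  have hlog : -(1 / R) * ((δ ^ 2 / 2) * (1 - R) ^ 2 * q / (ℓ q - n q)) - (1 - 1 / R) / (1 - q)
      = (1 - R) / R / (1 - q) * ((m q - n q) / (ℓ q - n q)) := by
    have hmℓ : m q = ℓ q - δ ^ 2 / 2 * (1 - R) * q * (1 - q) := by rw [hℓ]; ring
    rw [hmℓ]
    generalize ℓ q = L at *
    generalize n q = v at *
    field_simp
    ring
  calc _ = (N q ^ (-(1 / R)) * (1 - q) ^ (1 - 1 / R)) *
        (-(1 / R) * ((δ ^ 2 / 2) * (1 - R) ^ 2 * q / (ℓ q - n q)) - (1 - 1 / R) / (1 - q)) := by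
        generalize ℓ q - n q = D at *
        generalize N q ^ (-(1 / R)) = A
        generalize (1 - q) ^ (1 - 1 / R) = B
        field_simp
        ring
    _ = n q * ((1 - R) / R / (1 - q) * ((m q - n q) / (ℓ q - n q))) := by rw [hlog, ← hn]
    _ = _ := by ring
end

section
/- Let q⋆ : (0,∞) → (0,1) be a nonincreasing function. For λ ≥ 0 and γ ∈ [0,1) with λ + γ > 0, define the round-trip transaction cost ξ(λ,γ) = (λ+γ)/(1−γ) and the purchase boundary p⋆(λ,γ) = q⋆(ξ(λ,γ)) / ((1+λ) − λ·q⋆(ξ(λ,γ))). Then: (i) for each fixed γ, the map λ ↦ p⋆(λ,γ) is strictly decreasing on [0,∞); (ii) for each fixed λ, the map γ ↦ p⋆(λ,γ) is nonincreasing, and it is strictly decreasing if q⋆ is strictly decreasing. -/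
/-!
Write `p = q / ((1 + l) - l * q)`. The denominator is `1 + l * (1 - q) > 0`, and clearing
denominators, `p(l₁, q₁) - p(l₂, q₂)` has the sign of
`(q₁ - q₂) * (1 + l₁) + (l₂ - l₁) * q₁ * (1 - q₂)`.
So `p` is strictly increasing in `q` and strictly decreasing in `l` for `q ∈ (0,1)`.
The round-trip cost `(l + g) / (1 - g)` is strictly increasing in each of `l` and `g`, so raising
either cost does not raise `q⋆`. Raising `l` moreover lowers `p` strictly through its explicit
dependence on `l`, whence strictness in `l` needs no strictness of `q⋆`.
-/

theorem boundary_denom_pos {l q : ℝ} (hl : 0 ≤ l) (hq : q < 1) : 0 < (1 + l) - l * q := by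
  nlinarith [mul_nonneg hl (sub_pos.2 hq).le]

/-- The boundary strictly decreases when the purchase cost strictly increases and the
free-boundary point does not increase. -/
theorem boundary_lt_of_cost_lt {l₁ l₂ q₁ q₂ : ℝ} (hl : 0 ≤ l₁) (hll : l₁ < l₂) (h0 : 0 < q₁)
    (h1 : q₁ < 1) (hq : q₂ ≤ q₁) :
    q₂ / ((1 + l₂) - l₂ * q₂) < q₁ / ((1 + l₁) - l₁ * q₁) := by
  have h2 : q₂ < 1 := hq.trans_lt h1
  rw [div_lt_div_iff₀ (boundary_denom_pos (hl.trans hll.le) h2) (boundary_denom_pos hl h1)]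
  have a : 0 ≤ (q₁ - q₂) * (1 + l₁) := mul_nonneg (by linarith) (by linarith)
  have b : 0 < (l₂ - l₁) * q₁ * (1 - q₂) :=
    mul_pos (mul_pos (by linarith) h0) (by linarith)
  linarith

theorem boundary_lt_of_point_lt {l q₁ q₂ : ℝ} (hl : 0 ≤ l) (h1 : q₁ < 1) (hq : q₂ < q₁) :
    q₂ / ((1 + l) - l * q₂) < q₁ / ((1 + l) - l * q₁) := by
  rw [div_lt_div_iff₀ (boundary_denom_pos hl (hq.trans h1)) (boundary_denom_pos hl h1)]
  have a : 0 < (q₁ - q₂) * (1 + l) := mul_pos (by linarith) (by linarith)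
  linarith

theorem roundTrip_pos {l g : ℝ} (h : 0 < l + g) (hg : g < 1) : 0 < (l + g) / (1 - g) :=
  div_pos h (by linarith)

theorem roundTrip_lt_of_sale_lt {l g₁ g₂ : ℝ} (hl : 0 ≤ l) (h2 : g₂ < 1) (hg : g₁ < g₂) :
    (l + g₁) / (1 - g₁) < (l + g₂) / (1 - g₂) := by
  rw [div_lt_div_iff₀ (by linarith) (by linarith)]
  have a : 0 < (g₂ - g₁) * (1 + l) := mul_pos (by linarith) (by linarith)
  linarith

/-- Monotonicity of the purchase boundary p⋆(λ,γ) = q⋆(ξ)/((1+λ) − λq⋆(ξ)),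
ξ = (λ+γ)/(1−γ), in the individual transaction costs, when the free-boundary point
q⋆ : (0,∞) → (0,1) is nonincreasing in the round-trip cost ξ. -/
theorem purchase_boundary_monotone (qstar : ℝ → ℝ)
    (hmem : ∀ ξ : ℝ, 0 < ξ → qstar ξ ∈ Set.Ioo (0:ℝ) 1)
    (hmono : ∀ ξ₁ ξ₂ : ℝ, 0 < ξ₁ → ξ₁ ≤ ξ₂ → qstar ξ₂ ≤ qstar ξ₁)
    (ξ pstar : ℝ → ℝ → ℝ)
    (hξ : ∀ lam gam, ξ lam gam = (lam + gam) / (1 - gam))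
    (hp : ∀ lam gam, pstar lam gam =
      qstar (ξ lam gam) / ((1 + lam) - lam * qstar (ξ lam gam))) :
    (∀ gam, 0 ≤ gam → gam < 1 → ∀ lam₁ lam₂, 0 ≤ lam₁ → lam₁ < lam₂ →
      0 < lam₁ + gam → pstar lam₂ gam < pstar lam₁ gam) ∧
    (∀ lam, 0 ≤ lam → ∀ gam₁ gam₂, 0 ≤ gam₁ → gam₂ < 1 → gam₁ < gam₂ →
      0 < lam + gam₁ → pstar lam gam₂ ≤ pstar lam gam₁) ∧
    ((∀ ξ₁ ξ₂ : ℝ, 0 < ξ₁ → ξ₁ < ξ₂ → qstar ξ₂ < qstar ξ₁) →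
      ∀ lam, 0 ≤ lam → ∀ gam₁ gam₂, 0 ≤ gam₁ → gam₂ < 1 → gam₁ < gam₂ →
        0 < lam + gam₁ → pstar lam gam₂ < pstar lam gam₁) := by
  simp only [hp, hξ]
  refine ⟨?_, ?_, ?_⟩
  · intro g _ hg1 l₁ l₂ hl hll hpos
    have hx := roundTrip_pos hpos hg1
    have hle : (l₁ + g) / (1 - g) ≤ (l₂ + g) / (1 - g) :=
      div_le_div_of_nonneg_right (by linarith) (by linarith)
    exact boundary_lt_of_cost_lt hl hll (hmem _ hx).1 (hmem _ hx).2 (hmono _ _ hx hle)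
  · intro l hl g₁ g₂ _ hg2 hgg hpos
    have hx := roundTrip_pos hpos (hgg.trans hg2)
    rcases (hmono _ _ hx (roundTrip_lt_of_sale_lt hl hg2 hgg).le).lt_or_eq with h | h
    · exact (boundary_lt_of_point_lt hl (hmem _ hx).2 h).le
    · rw [h]
  · intro hstrict l hl g₁ g₂ _ hg2 hgg hpos
    have hx := roundTrip_pos hpos (hgg.trans hg2)
    exact boundary_lt_of_point_lt hl (hmem _ hx).2
      (hstrict _ _ hx (roundTrip_lt_of_sale_lt hl hg2 hgg))
end

section
/- Fix real parameters R ∈ (0,∞) with R ≠ 1, ε ∈ ℝ and δ > 0, and suppose ε > δ²R, and additionally ε < 1/(1−R) + δ²R/2 if R < 1 (so that q_M = ε/(δ²R) > 1 and m(1) > 0). Let b > 1 and let n : [1,b] → ℝ be continuous with n(1) = m(1), differentiable on (1,b) with n'(q) = O(q, n(q)), satisfying (1−R)·n(q) > (1−R)·m(q) and n(q) ≠ ℓ(q) for q ∈ (1,b), and with n(b) = m(b). Then b > q_M. In other words, the first crossing ζ(1) of the solution through the singular point (1, m(1)) with the curve m lies strictly beyond the Merton point q_M. -/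
/-!
Only the behaviour at the crossing point `b` matters. Put `w = (1 - R) (n - m)`, which is positive
on `(1, b)` and vanishes at `b`. Since
`(1 - R) (n - ℓ) = δ² / 2 (1 - R)² q (q - 1) + w` is positive there, the equation becomes
`w' = (1 - R)² (ε - δ² R q) - c w` with a coefficient `c` that stays continuous up to `q = b`,
because `b > 1` keeps away from the singular point. If `b ≤ q_M`, the first term is nonnegative,
so `w' ≥ -K w` near `b` with `K` a bound for `c`, i.e. `w exp (K q)` is nondecreasing. A positive
`w` can then not reach zero at `b`. Working with this differential inequality instead of the sign of
`w' (b)` also covers the tangential case `b = q_M`.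
-/


/-- The first crossing ζ(1) of the solution of n' = O(q,n) through the singular point
(1, m(1)) with the curve m lies strictly beyond the Merton point q_M = ε/(δ²R) > 1. -/
theorem crossing_beyond_merton (R ε δ : ℝ)
    (hR0 : 0 < R) (hR1 : R ≠ 1) (hδ : 0 < δ)
    (hε : δ ^ 2 * R < ε) (hε' : R < 1 → ε < 1 / (1 - R) + δ ^ 2 * R / 2)
    (m ℓ : ℝ → ℝ) (OO : ℝ → ℝ → ℝ)
    (hm : ∀ q, m q = 1 - ε * (1 - R) * q + δ ^ 2 / 2 * R * (1 - R) * q ^ 2)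
    (hℓ : ∀ q, ℓ q = m q + δ ^ 2 / 2 * (1 - R) * q * (1 - q))
    (hO : ∀ q v, OO q v = ((1 - R) / R) * (v / (1 - q)) * ((m q - v) / (ℓ q - v)))
    (qM : ℝ) (hqM : qM = ε / (δ ^ 2 * R))
    (b : ℝ) (hb : 1 < b)
    (n : ℝ → ℝ) (hcont : ContinuousOn n (Set.Icc 1 b)) (hn1 : n 1 = m 1)
    (hderiv : ∀ q ∈ Set.Ioo 1 b, HasDerivAt n (OO q (n q)) q)
    (hgt : ∀ q ∈ Set.Ioo 1 b, (1 - R) * m q < (1 - R) * n q ∧ n q ≠ ℓ q)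
    (hnb : n b = m b) :
    qM < b := by
  by_contra hlt
  have hbq : b ≤ ε / (δ ^ 2 * R) := by rw [← hqM]; exact not_lt.mp hlt
  have hbε : δ ^ 2 * R * b ≤ ε := by
    have := (le_div_iff₀ (by positivity : 0 < δ ^ 2 * R)).mp hbq
    linarith
  have h1R : 1 - R ≠ 0 := sub_ne_zero.mpr hR1.symm
  have h1R2 : 0 < (1 - R) ^ 2 := by positivity
  obtain ⟨s, hs1, hsb⟩ := exists_between hb
  set w : ℝ → ℝ := fun q => (1 - R) * (n q - m q) with hw
  set D : ℝ → ℝ := fun q => δ ^ 2 / 2 * (1 - R) ^ 2 * q * (q - 1) + w q with hD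
  set c : ℝ → ℝ := fun q => (1 - R) ^ 2 / R * n q / ((q - 1) * D q) with hc
  have hwb : w b = 0 := by simp [hw, hnb]
  have hwpos : ∀ q ∈ Set.Ioo 1 b, 0 < w q := by
    intro q hq
    have := (hgt q hq).1
    simp only [hw]
    linarith
  have hsub : Set.Icc s b ⊆ Set.Icc 1 b := Set.Icc_subset_Icc_left hs1.le
  have hDpos : ∀ q ∈ Set.Icc s b, 0 < D q := by
    intro q hq
    have hq1 : 1 < q := hs1.trans_le hq.1
    have hw0 : 0 ≤ w q := by
      rcases hq.2.lt_or_eq with h | h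
      · exact (hwpos q ⟨hq1, h⟩).le
      · rw [h, hwb]
    have h1 : 0 < q - 1 := by linarith
    have : 0 < δ ^ 2 / 2 * (1 - R) ^ 2 * q * (q - 1) := by positivity
    simp only [hD]
    linarith
  have hncont : ContinuousOn n (Set.Icc s b) := hcont.mono hsub
  have hmc : Continuous m := by
    rw [funext hm]
    fun_prop
  have hwcont : ContinuousOn w (Set.Icc s b) :=
    continuousOn_const.mul (hncont.sub hmc.continuousOn)
  have hDcont : ContinuousOn D (Set.Icc s b) :=
    ContinuousOn.add (by fun_prop) hwcont
  have hccont : ContinuousOn c (Set.Icc s b) := by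
    refine (continuousOn_const.mul hncont).div (ContinuousOn.mul (by fun_prop) hDcont) ?_
    intro q hq
    have hq1 : 1 < q := hs1.trans_le hq.1
    exact mul_ne_zero (by linarith) (hDpos q hq).ne'
  obtain ⟨K, hK⟩ := isCompact_Icc.bddAbove_image hccont
  have hcK : ∀ q ∈ Set.Icc s b, c q ≤ K := fun q hq => hK (Set.mem_image_of_mem c hq)
  have hwderiv : ∀ q ∈ Set.Ioo s b,
      HasDerivAt w ((1 - R) ^ 2 * (ε - δ ^ 2 * R * q) - c q * w q) q := by
    intro q hq
    have hq1 : 1 < q := hs1.trans hq.1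
    have hqI : q ∈ Set.Ioo 1 b := ⟨hq1, hq.2⟩
    have hmd : HasDerivAt m (-(ε * (1 - R)) + δ ^ 2 / 2 * R * (1 - R) * (2 * q)) q := by
      rw [funext hm]
      have h1 := ((hasDerivAt_id q).const_mul (ε * (1 - R))).const_sub 1
      have h2 := ((hasDerivAt_id q).pow 2).const_mul (δ ^ 2 / 2 * R * (1 - R))
      exact (h1.add h2).congr_deriv (by simp)
    have hd := ((hderiv q hqI).sub hmd).const_mul (1 - R)
    have hOw : (1 - R) * OO q (n q) = -(c q * w q) := by
      have hD0 : D q ≠ 0 := (hDpos q ⟨hq.1.le, hq.2.le⟩).ne'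
      have hDl : ℓ q - n q = -(D q) / (1 - R) := by
        rw [eq_div_iff h1R, hℓ q]
        simp only [hD, hw]
        ring
      have hmn : m q - n q = -(w q) / (1 - R) := by
        rw [eq_div_iff h1R]
        simp only [hw]
        ring
      have hq0 : q - 1 ≠ 0 := by linarith
      rw [hO, hDl, hmn, show 1 - q = -(q - 1) by ring]
      simp only [hc]
      field_simp
    refine HasDerivAt.congr_deriv hd ?_
    rw [mul_sub, hOw]
    ring
  have hmono : MonotoneOn (fun q => w q * Real.exp (K * q)) (Set.Icc s b) := by
    refine monotoneOn_of_hasDerivWithinAt_nonneg (convex_Icc s b)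
      (f' := fun q => ((1 - R) ^ 2 * (ε - δ ^ 2 * R * q) - c q * w q) * Real.exp (K * q)
        + w q * (Real.exp (K * q) * (K * 1)))
      (hwcont.mul (by fun_prop)) ?_ ?_
    · intro q hq
      rw [interior_Icc] at hq
      exact ((hwderiv q hq).mul
        (((hasDerivAt_id q).const_mul K).exp)).hasDerivWithinAt
    · intro q hq
      rw [interior_Icc] at hq
      have hw0 := hwpos q ⟨hs1.trans hq.1, hq.2⟩
      have hcq := hcK q ⟨hq.1.le, hq.2.le⟩
      have h1 : 0 ≤ (K - c q) * w q := mul_nonneg (by linarith) hw0.le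
      have h2 : δ ^ 2 * R * q ≤ δ ^ 2 * R * b :=
        mul_le_mul_of_nonneg_left hq.2.le (by positivity)
      have h3 : 0 ≤ (1 - R) ^ 2 * (ε - δ ^ 2 * R * q) := mul_nonneg h1R2.le (by linarith)
      have h4 : 0 ≤ ((1 - R) ^ 2 * (ε - δ ^ 2 * R * q) + (K - c q) * w q) * Real.exp (K * q) :=
        mul_nonneg (by linarith) (Real.exp_pos _).le
      calc (0 : ℝ) ≤ _ := h4
        _ = _ := by ring
  have hle := hmono (Set.left_mem_Icc.mpr hsb.le) (Set.right_mem_Icc.mpr hsb.le) hsb.le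
  have hpos := mul_pos (hwpos s ⟨hs1, hsb⟩) (Real.exp_pos (K * s))
  simp only [hwb, zero_mul] at hle
  linarith
end
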